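/- arXiv:1501.06752 — 2 statements merged into one kernel-verified Lean document; each statement's English description precedes it below -/
import Mathlib

section
/- The number α₉ = √19 · ln((√19 − 1)/(√19 + 1)) has irrationality measure at most 5.23163; that is, for every real κ > 5.23163, there exist only finitely many pairs (p, q) with p ∈ ℤ and q a positive integer such that |α₉ − p/q| < q^(−κ). -/
open MeasureTheory Filter Topology Set

noncomputable def KF (v : ℝ) : ℝ := Real.sinc (v / 2) ^ 2

lemma KF_nonneg (v : ℝ) : 0 ≤ KF v := sq_nonneg _

lemma KF_cont : Continuous KF := by
  unfold KF
  exact (Real.continuous_sinc.comp (continuous_id.div_const 2)).pow 2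

lemma KF_le (v : ℝ) : KF v ≤ 8 * (1 + v ^ 2)⁻¹ := by
  unfold KF
  have h1 : Real.sinc (v/2) ^ 2 ≤ 1 := by
    rw [sq_le_one_iff_abs_le_one]; exact Real.abs_sinc_le_one _
  have hp : (0:ℝ) < 1 + v ^ 2 := by positivity
  rw [← div_eq_mul_inv, le_div_iff₀ hp]
  by_cases hv : v = 0
  · subst hv; simp
  · have h2 : Real.sinc (v/2) ^ 2 * v ^ 2 ≤ 4 := by
      rw [Real.sinc_of_ne_zero (by simpa using hv)]
      have := Real.sin_sq_le_one (v/2)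
      have e : (Real.sin (v/2) / (v/2)) ^ 2 * v ^ 2 = 4 * Real.sin (v/2) ^ 2 := by
        field_simp
        ring
      rw [e]; linarith
    nlinarith

lemma KF_int : Integrable KF := by
  refine (integrable_inv_one_add_sq.const_mul 8).mono' KF_cont.aestronglyMeasurable ?_
  filter_upwards with v
  rw [Real.norm_of_nonneg (KF_nonneg v)]
  exact KF_le v

lemma KF_fourier (v : ℝ) :
    ∫ t in (-1:ℝ)..1, ((1 - |t| : ℝ) : ℂ) * Complex.exp (t * v * Complex.I) = (KF v : ℂ) := by
  have hc : Continuous fun t : ℝ => ((1 - |t| : ℝ) : ℂ) * Complex.exp (t * v * Complex.I) := by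
    fun_prop
  rw [← intervalIntegral.integral_add_adjacent_intervals (b := 0) (hc.intervalIntegrable _ _)
    (hc.intervalIntegrable _ _)]
  have e1 : ∫ t in (-1:ℝ)..0, ((1 - |t| : ℝ) : ℂ) * Complex.exp (t * v * Complex.I)
      = ∫ t in (-1:ℝ)..0, ((1:ℂ) + t) * Complex.exp (t * v * Complex.I) := by
    apply intervalIntegral.integral_congr
    intro t ht
    rw [uIcc_of_le (by norm_num)] at ht
    simp only [abs_of_nonpos ht.2]; push_cast; ring
  have e2 : ∫ t in (0:ℝ)..1, ((1 - |t| : ℝ) : ℂ) * Complex.exp (t * v * Complex.I)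
      = ∫ t in (0:ℝ)..1, ((1:ℂ) - t) * Complex.exp (t * v * Complex.I) := by
    apply intervalIntegral.integral_congr
    intro t ht
    rw [uIcc_of_le (by norm_num)] at ht
    simp only [abs_of_nonneg ht.1]; push_cast; ring
  rw [e1, e2]
  by_cases hv : v = 0
  · subst hv
    have d1 : ∀ t : ℝ, HasDerivAt (fun t : ℝ => (t:ℂ) + t^2/2) ((1:ℂ)+t) t := by
      intro t
      have := (Complex.ofRealCLM.hasDerivAt (x := t))
      have h2 := (this.pow 2).div_const 2
      have h3 := this.add h2
      convert! h3 using 1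
      simp
    have d2 : ∀ t : ℝ, HasDerivAt (fun t : ℝ => (t:ℂ) - t^2/2) ((1:ℂ)-t) t := by
      intro t
      have := (Complex.ofRealCLM.hasDerivAt (x := t))
      have h2 := (this.pow 2).div_const 2
      have h3 := this.sub h2
      convert! h3 using 1
      simp
    simp only [Complex.ofReal_zero, mul_zero, zero_mul, Complex.exp_zero, mul_one]
    rw [intervalIntegral.integral_eq_sub_of_hasDerivAt (fun t _ => d1 t)
      (Continuous.intervalIntegrable (by fun_prop) _ _),
      intervalIntegral.integral_eq_sub_of_hasDerivAt (fun t _ => d2 t)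
      (Continuous.intervalIntegrable (by fun_prop) _ _)]
    simp [KF]; norm_num
  · set z : ℂ := v * Complex.I with hz
    have hz0 : z ≠ 0 := by simp [hz, hv]
    have dexp : ∀ t : ℝ, HasDerivAt (fun t : ℝ => Complex.exp (t * z)) (Complex.exp (t * z) * z) t := by
      intro t
      have := (Complex.ofRealCLM.hasDerivAt (x := t)).mul_const z
      simpa using this.cexp
    have d1 : ∀ t : ℝ, HasDerivAt (fun t : ℝ => (((1:ℂ) + t)/z - 1/z^2) * Complex.exp (t * z))
        (((1:ℂ)+t) * Complex.exp (t * z)) t := by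
      intro t
      have h := (((Complex.ofRealCLM.hasDerivAt (x := t)).const_add (1:ℂ)).div_const z).sub_const (1/z^2)
      have := h.mul (dexp t)
      convert! this using 1
      simp only [Complex.ofRealCLM_apply, Complex.ofReal_one]
      field_simp
      ring
    have d2 : ∀ t : ℝ, HasDerivAt (fun t : ℝ => (((1:ℂ) - t)/z + 1/z^2) * Complex.exp (t * z))
        (((1:ℂ)-t) * Complex.exp (t * z)) t := by
      intro t
      have h := (((Complex.ofRealCLM.hasDerivAt (x := t)).const_sub (1:ℂ)).div_const z).add_const (1/z^2)
      have := h.mul (dexp t)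
      convert! this using 1
      simp only [Complex.ofRealCLM_apply, Complex.ofReal_one]
      field_simp
      ring
    have ee : ∀ t : ℝ, (t:ℂ) * v * Complex.I = t * z := fun t => by rw [hz]; ring
    simp only [ee]
    rw [intervalIntegral.integral_eq_sub_of_hasDerivAt (fun t _ => d1 t)
      (Continuous.intervalIntegrable (by fun_prop) _ _),
      intervalIntegral.integral_eq_sub_of_hasDerivAt (fun t _ => d2 t)
      (Continuous.intervalIntegrable (by fun_prop) _ _)]
    have hcos : Complex.exp z + Complex.exp (-z) = 2 * Complex.cos v := by
      rw [Complex.two_cos, hz]; ring_nf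
    have hk : (KF v : ℂ) = (2 * Complex.cos v - 2) / z^2 := by
      have : KF v = (2 - 2 * Real.cos v) / v^2 := by
        unfold KF
        rw [Real.sinc_of_ne_zero (by simpa using hv), div_pow, Real.sin_sq_eq_half_sub]
        rw [show 2 * (v/2) = v by ring]
        field_simp
      rw [this, hz, mul_pow, Complex.I_sq]
      push_cast
      field_simp
      try ring
    rw [hk, ← hcos]
    simp only [Complex.ofReal_neg, Complex.ofReal_one, Complex.ofReal_zero, one_mul, zero_mul, neg_mul, Complex.exp_zero]
    field_simp
    ring

noncomputable def hh (u : ℝ) : ℝ := Chebyshev.psi (Real.exp u) * Real.exp (-u) - 1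

lemma hh_meas : Measurable hh := by
  unfold hh
  have : Measurable Chebyshev.psi := Chebyshev.psi_mono.measurable
  fun_prop

lemma hh_bound (u : ℝ) : |hh u| ≤ Real.log 4 + 5 := by
  unfold hh
  have h1 := Chebyshev.psi_le_const_mul_self (Real.exp_pos u).le
  have h0 := Chebyshev.psi_nonneg (Real.exp u)
  have hp := Real.exp_pos (-u)
  have he : Real.exp u * Real.exp (-u) = 1 := by rw [← Real.exp_add]; simp
  have : Chebyshev.psi (Real.exp u) * Real.exp (-u) ≤ Real.log 4 + 4 := by
    calc _ ≤ ((Real.log 4 + 4) * Real.exp u) * Real.exp (-u) := by gcongr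
      _ = _ := by rw [mul_assoc, he, mul_one]
  have h2 : 0 ≤ Chebyshev.psi (Real.exp u) * Real.exp (-u) := by positivity
  have h3 : 0 ≤ Real.log 4 := Real.log_nonneg (by norm_num)
  rw [abs_le]; constructor <;> linarith

/-- the continuous extension of the Laplace transform -/
noncomputable def GG (s : ℂ) : ℂ :=
  (ArithmeticFunction.vonMangoldt.LFunctionResidueClassAux (q := 1) 1 s - 1) / s

lemma GG_cont : ContinuousOn GG {s : ℂ | 1 ≤ s.re} := by
  unfold GG
  refine ((ArithmeticFunction.vonMangoldt.continuousOn_LFunctionResidueClassAux 1).sub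
    continuousOn_const).div continuousOn_id ?_
  intro s hs h
  simp only [mem_ofPred_eq] at hs h
  rw [h] at hs; norm_num at hs

lemma GG_eq {s : ℂ} (hs : 1 < s.re) :
    GG s = ∫ u in Ioi (0:ℝ), (hh u : ℂ) * Complex.exp (-(s - 1) * u) := by
  have hs0 : s ≠ 0 := by rintro rfl; norm_num at hs
  have hs1 : s - 1 ≠ 0 := by
    intro h; rw [sub_eq_zero] at h; rw [h] at hs; norm_num at hs
  have h1 := ArithmeticFunction.vonMangoldt.eqOn_LFunctionResidueClassAux (q := 1) (a := 1)
    isUnit_one (show s ∈ {s : ℂ | 1 < s.re} from hs)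
  have hres : (fun n : ℕ => ((ArithmeticFunction.vonMangoldt.residueClass (1 : ZMod 1) n : ℝ) : ℂ))
      = fun n => ((ArithmeticFunction.vonMangoldt n : ℝ) : ℂ) := by
    funext n
    have : ((n : ZMod 1)) = 1 := Subsingleton.elim _ _
    simp [ArithmeticFunction.vonMangoldt.residueClass, this]
  rw [hres] at h1
  have hO : (fun n : ℕ => ∑ k ∈ Finset.Icc 1 n, ArithmeticFunction.vonMangoldt k)
      =O[atTop] fun n => (n:ℝ) ^ (1:ℝ) := by
    refine Asymptotics.IsBigO.of_bound (Real.log 4 + 4) ?_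
    filter_upwards with n
    have hp : ∑ k ∈ Finset.Icc 1 n, ArithmeticFunction.vonMangoldt k = Chebyshev.psi n := by
      rw [Chebyshev.psi_eq_sum_Icc, Nat.floor_natCast, ← Finset.insert_Icc_succ_left_eq_Icc (Nat.zero_le n)]
      simp
    rw [hp, Real.norm_of_nonneg (Chebyshev.psi_nonneg _), Real.rpow_one, Real.norm_of_nonneg (by positivity)]
    exact Chebyshev.psi_le_const_mul_self (by positivity)
  have h2 := LSeries_eq_mul_integral_of_nonneg (fun n => ArithmeticFunction.vonMangoldt n)
    zero_le_one hs hO (fun n => ArithmeticFunction.vonMangoldt_nonneg)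
  have hpsi : ∀ t : ℝ, (∑ k ∈ Finset.Icc 1 ⌊t⌋₊, ((ArithmeticFunction.vonMangoldt k : ℝ) : ℂ))
      = (Chebyshev.psi t : ℂ) := by
    intro t
    rw [Chebyshev.psi_eq_sum_Icc, ← Finset.insert_Icc_succ_left_eq_Icc (Nat.zero_le _)]
    simp
  simp only [hpsi] at h2
  have himg : Real.exp '' Ioi (0:ℝ) = Ioi 1 := by
    ext x; constructor
    · rintro ⟨u, hu, rfl⟩; exact Real.one_lt_exp_iff.mpr hu
    · intro hx; exact ⟨Real.log x, Real.log_pos hx, Real.exp_log (lt_trans one_pos hx)⟩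
  have h3 := integral_image_eq_integral_abs_deriv_smul (s := Ioi (0:ℝ)) measurableSet_Ioi
    (fun x _ => (Real.hasDerivAt_exp x).hasDerivWithinAt) Real.exp_injective.injOn
    (fun t : ℝ => (Chebyshev.psi t : ℂ) * (t:ℂ) ^ (-(s + 1)))
  rw [himg] at h3
  rw [h3] at h2
  have hexp : ∫ u in Ioi (0:ℝ), Complex.exp (-(s - 1) * u) = 1 / (s - 1) := by
    rw [integral_exp_mul_complex_Ioi (by simp; linarith)]
    field_simp; simp
  have i2 : IntegrableOn (fun u : ℝ => Complex.exp (-(s - 1) * u)) (Ioi 0) :=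
    integrableOn_exp_mul_complex_Ioi (by simp; linarith) 0
  have i1 : IntegrableOn (fun u : ℝ => (hh u : ℂ) * Complex.exp (-(s - 1) * u)) (Ioi 0) := by
    refine Integrable.bdd_mul (c := Real.log 4 + 5) i2 ?_ ?_
    · exact (Complex.measurable_ofReal.comp hh_meas).aestronglyMeasurable
    · filter_upwards with u
      rw [Complex.norm_real]; exact hh_bound u
  have h4 : ∫ u in Ioi (0:ℝ), |Real.exp u| • ((Chebyshev.psi (Real.exp u) : ℂ) * ((Real.exp u : ℝ):ℂ) ^ (-(s + 1)))
      = (∫ u in Ioi (0:ℝ), (hh u : ℂ) * Complex.exp (-(s - 1) * u)) + 1 / (s - 1) := by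
    rw [← hexp, ← integral_add i1 i2]
    apply integral_congr_ae
    filter_upwards with u
    rw [abs_of_pos (Real.exp_pos u), Complex.real_smul]
    rw [Complex.cpow_def_of_ne_zero (by exact_mod_cast (Real.exp_pos u).ne'), ← Complex.ofReal_log (Real.exp_pos u).le, Real.log_exp]
    unfold hh
    push_cast
    have : Complex.exp (u * (-(s+1))) = Complex.exp (-(s-1)*u) * Complex.exp (-u) * Complex.exp (-u) := by
      rw [← Complex.exp_add, ← Complex.exp_add]; ring_nf
    rw [this]
    have h5 : Complex.exp u * Complex.exp (-u) = 1 := by rw [← Complex.exp_add]; simp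
    linear_combination (Chebyshev.psi (Real.exp u) : ℂ) * Complex.exp (-(s-1)*u) * Complex.exp (-u) * h5
  rw [h4] at h2
  unfold GG
  rw [h1]
  simp only [Nat.totient_one, Nat.cast_one, inv_one]
  rw [h2]
  field_simp
  ring


lemma WI1 {lam ε : ℝ} (hε : 0 < ε) (y : ℝ) :
    ∫ t in Ioc (-1:ℝ) 1, (((1 - |t| : ℝ) : ℂ) * Complex.exp (lam * t * y * Complex.I)) *
      GG (1 + ε + lam * t * Complex.I)
    = ((∫ u in Ioi (0:ℝ), hh u * Real.exp (-ε * u) * KF (lam * (y - u)) : ℝ) : ℂ) := by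
  have e1 : ∀ t : ℝ, (((1 - |t| : ℝ) : ℂ) * Complex.exp (lam * t * y * Complex.I)) *
      GG (1 + ε + lam * t * Complex.I) = ∫ u in Ioi (0:ℝ),
        (((1 - |t| : ℝ) : ℂ) * Complex.exp (lam * t * y * Complex.I)) *
          ((hh u : ℂ) * Complex.exp (-(ε + lam * t * Complex.I) * u)) := by
    intro t
    rw [GG_eq (by simp [hε]), integral_const_mul]
    congr 1
    apply integral_congr_ae
    filter_upwards with u
    congr 2; ring
  simp only [e1]
  rw [integral_integral_swap]
  · rw [← integral_complex_ofReal]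
    apply integral_congr_ae
    filter_upwards with u
    have := KF_fourier (lam * (y - u))
    rw [intervalIntegral.integral_of_le (by norm_num)] at this
    push_cast
    rw [← this, ← integral_const_mul]
    apply integral_congr_ae
    filter_upwards with t
    have : Complex.exp (lam * t * y * Complex.I) * Complex.exp (-(ε + lam * t * Complex.I) * u)
      = Complex.exp (-ε * u) * Complex.exp (t * ((lam * (y - u) : ℝ) : ℂ) * Complex.I) := by
      rw [← Complex.exp_add, ← Complex.exp_add]; push_cast; ring_nf
    push_cast at this ⊢
    linear_combination (1 - ((|t| : ℝ) : ℂ)) * (hh u : ℂ) * this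
  · have hb : Integrable (fun p : ℝ × ℝ => (1:ℝ) * ((Real.log 4 + 5) * Real.exp (-ε * p.2)))
        ((volume.restrict (Ioc (-1:ℝ) 1)).prod (volume.restrict (Ioi (0:ℝ)))) := by
      refine Integrable.mul_prod (f := fun _ => (1:ℝ)) (g := fun u => (Real.log 4 + 5) * Real.exp (-ε * u)) ?_ ?_
      · exact integrable_const _
      · exact (integrableOn_exp_mul_Ioi (by linarith) 0).const_mul _
    refine hb.mono' ?_ ?_
    · apply Measurable.aestronglyMeasurable
      have := hh_meas
      unfold Function.uncurry
      fun_prop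
    · have : ∀ᵐ p : ℝ × ℝ ∂((volume.restrict (Ioc (-1:ℝ) 1)).prod (volume.restrict (Ioi (0:ℝ)))),
          p ∈ Ioc (-1:ℝ) 1 ×ˢ Ioi (0:ℝ) := by
        rw [Measure.prod_restrict]
        exact ae_restrict_mem (measurableSet_Ioc.prod measurableSet_Ioi)
      filter_upwards [this] with p hp
      obtain ⟨⟨h1, h2⟩, h3⟩ := hp
      simp only [Function.uncurry]
      rw [norm_mul, norm_mul, norm_mul, Complex.norm_real, Complex.norm_real, Complex.norm_exp, Complex.norm_exp]
      have ha : ‖1 - |p.1|‖ ≤ 1 := by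
        have : |p.1| ≤ 1 := abs_le.mpr ⟨h1.le, h2⟩
        rw [Real.norm_eq_abs, abs_le]; constructor <;> linarith [abs_nonneg p.1]
      have hb : ((lam : ℂ) * p.1 * y * Complex.I).re = 0 := by simp
      have hc : (-((ε:ℂ) + lam * p.1 * Complex.I) * p.2).re = -ε * p.2 := by simp
      rw [hb, hc, Real.exp_zero, mul_one]
      have hd : ‖hh p.2‖ ≤ Real.log 4 + 5 := hh_bound _
      gcongr

lemma WI2 {lam : ℝ} (hlam : 0 < lam) (y : ℝ) :
    ∫ t in Ioc (-1:ℝ) 1, (((1 - |t| : ℝ) : ℂ) * Complex.exp (lam * t * y * Complex.I)) *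
      GG (1 + lam * t * Complex.I)
    = ((∫ u in Ioi (0:ℝ), hh u * KF (lam * (y - u)) : ℝ) : ℂ) := by
  have hKi : Integrable (fun u => KF (lam * (y - u))) := by
    have := (KF_int.comp_mul_left' hlam.ne').comp_sub_left y
    exact this
  have R : Tendsto (fun ε : ℝ => ((∫ u in Ioi (0:ℝ), hh u * Real.exp (-ε * u) * KF (lam * (y - u)) : ℝ) : ℂ))
      (𝓝[>] 0) (𝓝 ((∫ u in Ioi (0:ℝ), hh u * KF (lam * (y - u)) : ℝ) : ℂ)) := by
    refine (Complex.continuous_ofReal.tendsto _).comp ?_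
    refine tendsto_integral_filter_of_dominated_convergence
      (fun u => (Real.log 4 + 5) * KF (lam * (y - u))) ?_ ?_ ?_ ?_
    · filter_upwards with ε
      apply Measurable.aestronglyMeasurable
      have := hh_meas
      have := KF_cont.measurable
      fun_prop
    · filter_upwards [self_mem_nhdsWithin] with ε hε
      filter_upwards [ae_restrict_mem measurableSet_Ioi] with u hu
      rw [norm_mul, norm_mul, Real.norm_of_nonneg (KF_nonneg _), Real.norm_of_nonneg (Real.exp_pos _).le]
      have h1 : Real.exp (-ε * u) ≤ 1 := by
        rw [Real.exp_le_one_iff]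
        have : 0 < ε * u := mul_pos hε hu
        linarith
      have h2 : ‖hh u‖ ≤ Real.log 4 + 5 := hh_bound _
      have h3 := KF_nonneg (lam * (y - u))
      have h4 : ‖hh u‖ * Real.exp (-ε * u) ≤ Real.log 4 + 5 := by
        have := norm_nonneg (hh u); nlinarith [Real.exp_pos (-ε * u)]
      gcongr
    · exact (hKi.const_mul _).integrableOn
    · filter_upwards with u
      have : Tendsto (fun ε : ℝ => hh u * Real.exp (-ε * u) * KF (lam * (y - u))) (𝓝 0)
          (𝓝 (hh u * Real.exp (-0 * u) * KF (lam * (y - u)))) := by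
        apply Continuous.tendsto
          (f := fun ε : ℝ => hh u * Real.exp (-ε * u) * KF (lam * (y - u)))
        fun_prop
      simp only [neg_zero, zero_mul, Real.exp_zero, mul_one] at this
      exact this.mono_left nhdsWithin_le_nhds
  have L : Tendsto (fun ε : ℝ => ∫ t in Ioc (-1:ℝ) 1, (((1 - |t| : ℝ) : ℂ) * Complex.exp (lam * t * y * Complex.I)) *
      GG (1 + ε + lam * t * Complex.I)) (𝓝[>] 0) (𝓝 (∫ t in Ioc (-1:ℝ) 1, (((1 - |t| : ℝ) : ℂ) * Complex.exp (lam * t * y * Complex.I)) *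
      GG (1 + lam * t * Complex.I))) := by
    have hcont : ContinuousOn (fun p : ℝ × ℝ => GG (1 + p.1 + lam * p.2 * Complex.I)) {p | 0 ≤ p.1} := by
      refine GG_cont.comp (by fun_prop) ?_
      intro p hp
      simp only [mem_ofPred_eq] at hp ⊢
      simp [hp]
    obtain ⟨C, hC⟩ := (isCompact_Icc (a := (0:ℝ)) (b := 1)).prod (isCompact_Icc (a := (-1:ℝ)) (b := 1)) |>.exists_bound_of_continuousOn
      (hcont.mono (fun p hp => hp.1.1))
    have hIoc : ∀ᶠ ε : ℝ in 𝓝[>] 0, ε ∈ Ioc (0:ℝ) 1 := Ioc_mem_nhdsGT one_pos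
    refine tendsto_integral_filter_of_dominated_convergence (fun _ => C) ?_ ?_ ?_ ?_
    · filter_upwards [hIoc] with ε hε
      refine ContinuousOn.aestronglyMeasurable ?_ measurableSet_Ioc
      refine ContinuousOn.mul (by fun_prop) ?_
      exact hcont.comp (f := fun t : ℝ => (ε, t)) (by fun_prop) (fun t _ => hε.1.le)
    · filter_upwards [hIoc] with ε hε
      filter_upwards [ae_restrict_mem measurableSet_Ioc] with t ht
      rw [norm_mul, norm_mul, Complex.norm_real, Complex.norm_exp]
      have ha : ‖1 - |t|‖ ≤ 1 := by
        have : |t| ≤ 1 := abs_le.mpr ⟨ht.1.le, ht.2⟩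
        rw [Real.norm_eq_abs, abs_le]; constructor <;> linarith [abs_nonneg t]
      have hb : ((lam : ℂ) * t * y * Complex.I).re = 0 := by simp
      rw [hb, Real.exp_zero, mul_one]
      have := hC (ε, t) ⟨⟨hε.1.le, hε.2⟩, ⟨ht.1.le, ht.2⟩⟩
      calc _ ≤ 1 * C := by gcongr
        _ = C := one_mul C
    · exact integrable_const _
    · filter_upwards with t
      refine Tendsto.const_mul _ ?_
      have h0 := (hcont (0, t) (by simp)).tendsto.comp
        (f := fun ε : ℝ => ((ε, t) : ℝ × ℝ)) (x := 𝓝[>] 0) ?_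
      · simpa [Function.comp_def] using h0
      · refine tendsto_nhdsWithin_iff.mpr ⟨?_, ?_⟩
        · exact (Continuous.tendsto (by fun_prop) 0 : Tendsto (fun ε : ℝ => ((ε, t) : ℝ × ℝ)) (𝓝 0) _).mono_left nhdsWithin_le_nhds
        · filter_upwards [hIoc] with ε hε using hε.1.le
  refine tendsto_nhds_unique_of_eventuallyEq L R ?_
  filter_upwards [self_mem_nhdsWithin] with ε hε
  exact WI1 hε y

lemma WI3 {lam : ℝ} (hlam : 0 < lam) :
    Tendsto (fun y => ∫ u in Ioi (0:ℝ), hh u * KF (lam * (y - u))) atTop (𝓝 0) := by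
  have h := Real.tendsto_integral_exp_smul_cocompact
    ((Ioc (-1:ℝ) 1).indicator fun t => ((1 - |t| : ℝ) : ℂ) * GG (1 + lam * t * Complex.I))
  have h2 : Tendsto (fun y : ℝ => -(lam / (2 * Real.pi)) * y) atTop (cocompact ℝ) := by
    have : Tendsto (fun y : ℝ => -(lam / (2 * Real.pi)) * y) atTop atBot := by
      apply tendsto_id.const_mul_atTop_of_neg
      have := Real.pi_pos
      have : 0 < lam / (2 * Real.pi) := by positivity
      linarith
    exact this.mono_right atBot_le_cocompact
  have h3 := h.comp h2
  have h4 : Tendsto (fun y => ((∫ u in Ioi (0:ℝ), hh u * KF (lam * (y - u)) : ℝ) : ℂ)) atTop (𝓝 0) := by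
    refine h3.congr fun y => ?_
    rw [← WI2 hlam]
    simp only [Function.comp_def]
    rw [← integral_indicator measurableSet_Ioc]
    apply integral_congr_ae
    filter_upwards with t
    by_cases ht : t ∈ Ioc (-1:ℝ) 1
    · simp only [indicator_of_mem ht, Circle.smul_def, Real.fourierChar_apply, smul_eq_mul]
      have : (((2 * Real.pi * -(t * (-(lam / (2 * Real.pi)) * y)) : ℝ)) : ℂ) = lam * t * y := by
        have : Real.pi ≠ 0 := Real.pi_ne_zero
        have : 2 * Real.pi * -(t * (-(lam / (2 * Real.pi)) * y)) = lam * t * y := by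
          field_simp
        rw [this]; push_cast; ring
      rw [this]; ring
    · simp [indicator_of_notMem ht]
  have := (Complex.continuous_re.tendsto _).comp h4
  simpa [Function.comp_def] using this


lemma KF_integral_pos : 0 < ∫ v, KF v := by
  rw [integral_pos_iff_support_of_nonneg KF_nonneg KF_int]
  have : IsOpen (Function.support KF) := KF_cont.isOpen_support
  exact this.measure_pos volume ⟨0, by simp [KF]⟩

lemma Tau0 {η δ C : ℝ} (hη : 0 < η) (hδ : 0 < δ) (hC : 0 ≤ C) : ∃ lam : ℝ, 0 < lam ∧
    0 < ∫ v, KF (lam * v) * (if |v| ≤ η then δ else -C) := by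
  have h : Tendsto (fun lam : ℝ => ∫ v, KF v * (if |v| ≤ lam * η then δ else -C)) atTop
      (𝓝 (∫ v, KF v * δ)) := by
    refine tendsto_integral_filter_of_dominated_convergence (fun v => KF v * (δ + C)) ?_ ?_ ?_ ?_
    · filter_upwards with lam
      apply Measurable.aestronglyMeasurable
      have := KF_cont.measurable
      refine this.mul (Measurable.ite ?_ measurable_const measurable_const)
      exact measurableSet_le (by fun_prop) (by fun_prop)
    · filter_upwards with lam
      filter_upwards with v
      rw [norm_mul, Real.norm_of_nonneg (KF_nonneg _)]
      have := KF_nonneg v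
      gcongr
      split_ifs
      · rw [Real.norm_of_nonneg hδ.le]; linarith
      · rw [norm_neg, Real.norm_of_nonneg hC]; linarith
    · exact KF_int.mul_const _
    · filter_upwards with v
      apply tendsto_const_nhds.congr'
      have : Tendsto (fun lam : ℝ => lam * η) atTop atTop := tendsto_id.atTop_mul_const hη
      filter_upwards [this.eventually_ge_atTop |v|] with lam hl
      rw [if_pos hl]
  have hp : 0 < ∫ v, KF v * δ := by
    rw [integral_mul_const]; exact mul_pos KF_integral_pos hδ
  obtain ⟨lam, h1, h2⟩ := ((h.eventually (lt_mem_nhds hp)).and (eventually_gt_atTop 0)).exists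
  refine ⟨lam, h2, ?_⟩
  have e : ∀ v : ℝ, KF (lam * v) * (if |v| ≤ η then δ else -C)
      = (fun w => KF w * (if |w| ≤ lam * η then δ else -C)) (lam * v) := by
    intro v
    simp only [abs_mul, abs_of_pos h2, mul_le_mul_iff_right₀ h2]
  simp only [e]
  rw [Measure.integral_comp_mul_left (fun w => KF w * (if |w| ≤ lam * η then δ else -C)) lam]
  have : 0 < |lam⁻¹| := by positivity
  exact mul_pos this h1

lemma Tau1 {η δ : ℝ} (hη : 0 < η) (hδ : 0 < δ) (s : ℝ) (hs : |s| = 1) :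
    ∀ᶠ y in atTop, ¬ (∀ u, |y - u| ≤ η → δ ≤ s * hh u) := by
  have hC : 0 ≤ Real.log 4 + 5 := by have := Real.log_nonneg (x := 4) (by norm_num); linarith
  obtain ⟨lam, hl, hI⟩ := Tau0 hη hδ hC
  have h0 := (WI3 hl).const_mul s
  rw [mul_zero] at h0
  filter_upwards [h0.eventually (gt_mem_nhds hI), eventually_gt_atTop η] with y hy hy2 hh0
  refine absurd hy (not_lt.mpr ?_)
  rw [← integral_const_mul, ← integral_indicator measurableSet_Ioi]
  have hKi : Integrable (fun u => KF (lam * (y - u))) := (KF_int.comp_mul_left' hl.ne').comp_sub_left y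
  rw [← integral_sub_left_eq_self (fun v => KF (lam * v) * (if |v| ≤ η then δ else -(Real.log 4 + 5))) volume y]
  apply integral_mono
  · refine (hKi.mul_const (δ + (Real.log 4 + 5))).mono' ?_ ?_
    · apply Measurable.aestronglyMeasurable
      have := KF_cont.measurable
      refine Measurable.mul (by fun_prop) (Measurable.ite ?_ measurable_const measurable_const)
      exact measurableSet_le (by fun_prop) (by fun_prop)
    · filter_upwards with v
      rw [norm_mul, Real.norm_of_nonneg (KF_nonneg _)]
      have := KF_nonneg (lam * (y - v))
      gcongr
      split_ifs
      · rw [Real.norm_of_nonneg hδ.le]; linarith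
      · rw [norm_neg, Real.norm_of_nonneg hC]; linarith
  · rw [integrable_indicator_iff measurableSet_Ioi]
    refine (hKi.const_mul (Real.log 4 + 5)).integrableOn.mono' ?_ ?_
    · apply Measurable.aestronglyMeasurable
      have := KF_cont.measurable
      have := hh_meas
      fun_prop
    · filter_upwards with v
      rw [norm_mul, norm_mul, Real.norm_of_nonneg (KF_nonneg _), Real.norm_eq_abs, Real.norm_eq_abs, hs, one_mul]
      exact mul_le_mul_of_nonneg_right (hh_bound v) (KF_nonneg _)
  · intro u
    simp only
    have hk := KF_nonneg (lam * (y - u))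
    have hb : -(Real.log 4 + 5) ≤ s * hh u := by
      have := hh_bound u
      have h2 : |s * hh u| ≤ Real.log 4 + 5 := by rw [abs_mul, hs, one_mul]; exact this
      exact (abs_le.mp h2).1
    by_cases hu : u ∈ Ioi (0:ℝ)
    · rw [indicator_of_mem hu]
      split_ifs with h
      · nlinarith [hh0 u h]
      · nlinarith
    · rw [indicator_of_notMem hu, if_neg]
      · nlinarith
      · simp only [mem_Ioi, not_lt] at hu
        rw [abs_of_pos (by linarith)]; linarith

lemma PNT_hh {δ : ℝ} (hδ : 0 < δ) (hδ1 : δ < 1) : ∀ᶠ y in atTop, |hh y| ≤ δ := by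
  set η := Real.log (1 + δ / 4) with hη
  have hηp : 0 < η := Real.log_pos (by linarith)
  have hmono : ∀ u v : ℝ, u ≤ v → (hh u + 1) * Real.exp u ≤ (hh v + 1) * Real.exp v := by
    intro u v huv
    have e : ∀ u, (hh u + 1) * Real.exp u = Chebyshev.psi (Real.exp u) := by
      intro u
      simp only [hh]; rw [sub_add_cancel, mul_assoc, ← Real.exp_add]; simp
    rw [e, e]
    exact Chebyshev.psi_mono (Real.exp_le_exp.mpr huv)
  have hexp : ∀ u v : ℝ, v ≤ u + η → Real.exp v ≤ Real.exp u * (1 + δ / 4) := by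
    intro u v h
    calc Real.exp v ≤ Real.exp (u + η) := Real.exp_le_exp.mpr h
      _ = _ := by rw [Real.exp_add, hη, Real.exp_log (by linarith)]
  have hpos : ∀ u, 0 ≤ hh u + 1 := by
    intro u; simp only [hh]; rw [sub_add_cancel]
    exact mul_nonneg (Chebyshev.psi_nonneg _) (Real.exp_pos _).le
  have A := Tau1 (half_pos hηp) (half_pos hδ) 1 (by simp)
  have B := Tau1 (half_pos hηp) (half_pos hδ) (-1) (by simp)
  have A' := (tendsto_atTop_add_const_right atTop (η/2) tendsto_id).eventually A
  have B' := (tendsto_atTop_add_const_right atTop (-(η/2)) tendsto_id).eventually B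
  filter_upwards [A', B'] with y hA hB
  simp only [id] at hA hB
  rw [abs_le]
  constructor
  · by_contra hcon
    push Not at hcon
    apply hB
    intro u hu
    rw [abs_le] at hu
    have h1 := hmono u y (by linarith)
    have h2 := hexp u y (by linarith)
    have h3 := Real.exp_pos u
    have h5 : (hh y + 1) * Real.exp y ≤ (1 - δ) * (Real.exp u * (1 + δ / 4)) := by
      have := hpos y
      apply mul_le_mul _ h2 (Real.exp_pos _).le (by linarith)
      linarith
    have h6 : (hh u + 1) * Real.exp u ≤ ((1 - δ) * (1 + δ / 4)) * Real.exp u := by linarith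
    have h7 := le_of_mul_le_mul_right h6 h3
    nlinarith
  · by_contra hcon
    push Not at hcon
    apply hA
    intro u hu
    rw [abs_le] at hu
    have h1 := hmono y u (by linarith)
    have h2 := hexp y u (by linarith)
    have h3 := Real.exp_pos y
    have h5 : (1 + δ) * Real.exp y ≤ (hh u + 1) * (Real.exp y * (1 + δ / 4)) := by
      have := hpos u
      calc (1 + δ) * Real.exp y ≤ (hh y + 1) * Real.exp y :=
            mul_le_mul_of_nonneg_right (by linarith) h3.le
        _ ≤ _ := h1
        _ ≤ _ := by gcongr
    have h6 : (1 + δ) * Real.exp y ≤ ((hh u + 1) * (1 + δ / 4)) * Real.exp y := by linarith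
    have h7 := le_of_mul_le_mul_right h6 h3
    nlinarith

lemma PNT_psi {δ : ℝ} (hδ : 0 < δ) : ∀ᶠ x in atTop, |Chebyshev.psi x - x| ≤ δ * x := by
  have h := Real.tendsto_log_atTop.eventually (PNT_hh (δ := min δ (1/2)) (by positivity) (by
    have := min_le_right δ (1/2); linarith))
  filter_upwards [h, eventually_gt_atTop 0] with x hx hx0
  simp only [hh, Real.exp_log hx0, Real.exp_neg] at hx
  have : Chebyshev.psi x - x = x * (Chebyshev.psi x * x⁻¹ - 1) := by field_simp
  rw [this, abs_mul, abs_of_pos hx0, mul_comm]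
  gcongr
  exact hx.trans (min_le_left _ _)

lemma PNT_theta {δ : ℝ} (hδ : 0 < δ) : ∀ᶠ x in atTop, |Chebyshev.theta x - x| ≤ δ * x := by
  obtain ⟨C, hC⟩ := Chebyshev.psi_sub_theta_le_mul_sqrt
  have hs : Tendsto (fun x : ℝ => √x) atTop atTop := Real.tendsto_sqrt_atTop
  filter_upwards [PNT_psi (half_pos hδ), eventually_gt_atTop 0,
    (hs.const_mul_atTop (half_pos hδ)).eventually_ge_atTop C] with x hx hx0 hx2
  have h1 := Chebyshev.theta_le_psi x
  have h2 := hC x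
  have h3 : C * √x ≤ δ / 2 * x := by
    have : √x * √x = x := Real.mul_self_sqrt hx0.le
    have h4 := Real.sqrt_nonneg x
    calc C * √x ≤ (δ / 2 * √x) * √x := by gcongr
      _ = δ / 2 * x := by rw [mul_assoc, this]
  rw [abs_le] at hx ⊢
  constructor <;> linarith


noncomputable def KK (m : ℕ) : ℝ := ∫ t in (-1:ℝ)..1, ((19 - t ^ 2) ^ m)⁻¹
noncomputable def WW (c s : ℕ) : ℝ := ∫ t in (-1:ℝ)..1, (19 - t ^ 2) ^ s / (19 - t ^ 2) ^ (c + 1)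
noncomputable def JJ (a b c : ℕ) : ℝ :=
  ∫ t in (-1:ℝ)..1, t ^ (2 * a) * (1 - t ^ 2) ^ b / (19 - t ^ 2) ^ (c + 1)

lemma wpos {t : ℝ} (ht : t ∈ uIcc (-1:ℝ) 1) : 18 ≤ 19 - t ^ 2 := by
  rw [uIcc_of_le (by norm_num)] at ht
  nlinarith [ht.1, ht.2]

lemma wne {t : ℝ} (ht : t ∈ uIcc (-1:ℝ) 1) : 19 - t ^ 2 ≠ 0 := by
  have := wpos ht; linarith

lemma JJ_ii (p : ℝ → ℝ) (hp : Continuous p) (c : ℕ) :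
    IntervalIntegrable (fun t => p t / (19 - t ^ 2) ^ c) volume (-1) 1 := by
  apply ContinuousOn.intervalIntegrable
  refine hp.continuousOn.div (by fun_prop) fun t ht => pow_ne_zero _ (wne ht)

lemma KK_rec (m : ℕ) : 38 * m * KK (m + 1) = (2 * m - 1) * KK m + 2 / 18 ^ m := by
  have h := intervalIntegral.integral_eq_sub_of_hasDerivAt (a := (-1:ℝ)) (b := 1)
    (f := fun t : ℝ => t / (19 - t ^ 2) ^ m)
    (f' := fun t => 38 * m * (1 / (19 - t ^ 2) ^ (m + 1)) - (2 * m - 1) * (1 / (19 - t ^ 2) ^ m)) ?_ ?_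
  · rw [intervalIntegral.integral_sub, intervalIntegral.integral_const_mul,
      intervalIntegral.integral_const_mul] at h
    · simp only [KK, inv_eq_one_div]
      norm_num at h ⊢
      linear_combination h
    · exact (JJ_ii _ continuous_const _).const_mul _
    · exact (JJ_ii _ continuous_const _).const_mul _
  · intro t ht
    have hw := wne ht
    have h1 : HasDerivAt (fun t : ℝ => 19 - t ^ 2) (-(2 * t)) t := by
      simpa using (hasDerivAt_pow 2 t).const_sub 19
    have h2 := (hasDerivAt_id t).div (h1.pow m) (pow_ne_zero _ hw)
    refine h2.congr_deriv ?_
    rcases m with _ | m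
    · simp
    · simp only [Nat.add_sub_cancel, id, Pi.pow_apply]
      field_simp
      push_cast; ring
  · exact ((JJ_ii _ continuous_const _).const_mul _).sub ((JJ_ii _ continuous_const _).const_mul _)

lemma WW_le {c s : ℕ} (h : s ≤ c) : WW c s = KK (c - s + 1) := by
  apply intervalIntegral.integral_congr
  intro t ht
  have hw := wne ht
  simp only
  have : c + 1 = s + (c - s + 1) := by omega
  rw [this, pow_add]
  field_simp

lemma WW_gt {c s : ℕ} (h : c < s) : WW c s = ∫ t in (-1:ℝ)..1, (19 - t ^ 2) ^ (s - c - 1) := by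
  apply intervalIntegral.integral_congr
  intro t ht
  have hw := wne ht
  simp only
  have : s = (c + 1) + (s - c - 1) := by omega
  conv_lhs => rw [this, pow_add]
  field_simp

lemma JJ_exp (a b c : ℕ) : JJ a b c = ∑ l ∈ Finset.range (a + 1), ∑ i ∈ Finset.range (b + 1),
    (((-1 : ℤ) ^ l * (a.choose l) * (19 ^ (a - l)) * (b.choose i) * (-18) ^ (b - i) : ℤ) : ℝ) * WW c (i + l) := by
  have : ∀ t : ℝ, t ^ (2 * a) * (1 - t ^ 2) ^ b / (19 - t ^ 2) ^ (c + 1) =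
    ∑ l ∈ Finset.range (a + 1), ∑ i ∈ Finset.range (b + 1),
    (((-1 : ℤ) ^ l * (a.choose l) * (19 ^ (a - l)) * (b.choose i) * (-18) ^ (b - i) : ℤ) : ℝ) *
      ((19 - t ^ 2) ^ (i + l) / (19 - t ^ 2) ^ (c + 1)) := by
    intro t
    have e1 : t ^ (2 * a) = (-(19 - t ^ 2) + 19) ^ a := by rw [pow_mul]; congr 1; ring
    have e2 : (1 - t ^ 2) ^ b = ((19 - t ^ 2) + (-18)) ^ b := by congr 1; ring
    rw [e1, e2, add_pow, add_pow, Finset.sum_mul_sum, Finset.sum_div]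
    refine Finset.sum_congr rfl fun l _ => ?_
    rw [Finset.sum_div]
    refine Finset.sum_congr rfl fun i _ => ?_
    rw [neg_pow (19 - t ^ 2)]
    push_cast
    rw [pow_add]; ring
  unfold JJ
  simp only [this]
  rw [intervalIntegral.integral_finsetSum]
  · refine Finset.sum_congr rfl fun l _ => ?_
    rw [intervalIntegral.integral_finsetSum]
    · refine Finset.sum_congr rfl fun i _ => ?_
      rw [intervalIntegral.integral_const_mul]; rfl
    · intro i _
      exact (JJ_ii _ (by fun_prop) _).const_mul _
  · intro l _
    have := IntervalIntegrable.sum (Finset.range (b + 1)) (f := fun i t => (((-1 : ℤ) ^ l * (a.choose l) * (19 ^ (a - l)) * (b.choose i) * (-18) ^ (b - i) : ℤ) : ℝ) *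
      ((19 - t ^ 2) ^ (i + l) / (19 - t ^ 2) ^ (c + 1)))
      (fun i _ => (JJ_ii (fun t => (19 - t ^ 2) ^ (i + l)) (by fun_prop) (c + 1)).const_mul _)
    simpa only [Finset.sum_fn] using this

lemma leibniz_div (D : ℕ) : ∀ (r k : ℕ), 0 < k → (∀ j, k ≤ j → j ≤ k + r → j ∣ D) →
    k * (k + r).choose k ∣ D := by
  intro r
  induction r with
  | zero => intro k hk h; simpa using h k le_rfl le_rfl
  | succ r ih =>
    intro k hk h
    obtain ⟨x, hx⟩ := ih k hk (fun j h1 h2 => h j h1 (by omega))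
    obtain ⟨y, hy⟩ := ih (k + 1) (by omega) (fun j h1 h2 => h j (by omega) (by omega))
    have hr : k + 1 + r = k + (r + 1) := by ring
    rw [hr] at hy
    -- D = k C(k+r,k) x = (k+1) C(k+r+1,k+1) y
    have c1 : (k + 1) * (k + (r + 1)).choose (k + 1) = (k + r + 1) * (k + r).choose k := by
      have := Nat.add_one_mul_choose_eq (k + r) k
      rw [show k + (r + 1) = k + r + 1 by ring]; linarith
    have c2 : (k + (r + 1)).choose k * (r + 1) = (k + r + 1) * (k + r).choose k := by
      have := Nat.choose_mul_succ_eq (k + r) k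
      rw [show k + r + 1 - k = r + 1 by omega] at this
      rw [show k + (r + 1) = k + r + 1 by ring]; linarith
    rw [← Int.natCast_dvd_natCast]
    refine ⟨(x : ℤ) - y, ?_⟩
    have hC : ((r : ℤ) + 1) ≠ 0 := by omega
    have hx' : (D : ℤ) = k * (k + r).choose k * x := by exact_mod_cast hx
    have hy' : (D : ℤ) = (k + 1) * (k + (r + 1)).choose (k + 1) * y := by exact_mod_cast hy
    have c1' : ((k : ℤ) + 1) * (k + (r + 1)).choose (k + 1) = (k + r + 1) * (k + r).choose k := by exact_mod_cast c1
    have c2' : ((k + (r + 1)).choose k : ℤ) * (r + 1) = (k + r + 1) * (k + r).choose k := by exact_mod_cast c2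
    apply mul_right_cancel₀ hC
    push_cast
    linear_combination (-(k:ℤ)) * (x - y) * c2' + ((k:ℤ) + r + 1) * hx' - (k:ℤ) * hy' - k * y * c1'

def LF (x β : ℝ) : Prop := ∃ P Q : ℤ, x = P + Q * KK 1 ∧ |(Q : ℝ)| ≤ β

lemma LF.int_mul {x β : ℝ} (h : LF x β) (n : ℤ) : LF (n * x) (|(n : ℝ)| * β) := by
  obtain ⟨P, Q, rfl, hQ⟩ := h
  refine ⟨n * P, n * Q, by push_cast; ring, ?_⟩
  push_cast; rw [abs_mul]; gcongr

lemma LF.mono {x β γ : ℝ} (h : LF x β) (hb : β ≤ γ) : LF x γ := by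
  obtain ⟨P, Q, e, hQ⟩ := h
  exact ⟨P, Q, e, hQ.trans hb⟩

lemma LF.add {x y β γ : ℝ} (h : LF x β) (h2 : LF y γ) : LF (x + y) (β + γ) := by
  obtain ⟨P, Q, rfl, hQ⟩ := h
  obtain ⟨P', Q', rfl, hQ'⟩ := h2
  refine ⟨P + P', Q + Q', by push_cast; ring, ?_⟩
  push_cast; exact (abs_add_le _ _).trans (by gcongr)

lemma LF.sum {ι : Type*} (s : Finset ι) (f g : ι → ℝ) (h : ∀ i ∈ s, LF (f i) (g i)) :
    LF (∑ i ∈ s, f i) (∑ i ∈ s, g i) := by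
  classical
  induction s using Finset.induction_on with
  | empty => exact ⟨0, 0, by simp, by simp⟩
  | insert i s hi ih =>
    rw [Finset.sum_insert hi, Finset.sum_insert hi]
    exact (h i (by simp)).add (ih fun j hj => h j (by simp [hj]))

lemma KK_LF (D : ℕ) : ∀ m : ℕ, (∀ j, 1 ≤ j → j ≤ 2 * m → j ∣ D) →
    ∃ P : ℤ, (684 : ℝ) ^ m * D * KK (m + 1) = P * (m.centralBinom) + 9 ^ m * D * m.centralBinom * KK 1 := by
  intro m
  induction m with
  | zero => intro _; exact ⟨0, by simp⟩
  | succ m ih =>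
    intro h
    obtain ⟨P, hP⟩ := ih fun j h1 h2 => h j h1 (by omega)
    obtain ⟨e, he⟩ := leibniz_div D (m + 1) (m + 1) (by omega) (fun j h1 h2 => h j (by omega) (by omega))
    have hcb : (m + 1 + (m + 1)).choose (m + 1) = (m + 1).centralBinom := by
      rw [Nat.centralBinom]; congr 1; ring
    rw [hcb] at he
    refine ⟨9 * P + 2 * 38 ^ m * e, ?_⟩
    have hr := KK_rec (m + 1)
    have hc := Nat.succ_mul_centralBinom_succ m
    have hc' : ((m : ℝ) + 1) * (m + 1).centralBinom = 2 * (2 * m + 1) * m.centralBinom := by exact_mod_cast hc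
    have he' : (D : ℝ) = (m + 1) * (m + 1).centralBinom * e := by exact_mod_cast he
    have hm : ((m : ℝ) + 1) ≠ 0 := by positivity
    have h18 : (684 : ℝ) ^ (m + 1) * (2 / 18 ^ (m + 1)) = 2 * 38 ^ (m + 1) := by
      rw [show (684 : ℝ) = 38 * 18 by norm_num, mul_pow]; field_simp
    have hm2 : (38 * ((m : ℝ) + 1)) ≠ 0 := by positivity
    apply mul_left_cancel₀ hm2
    push_cast at hr ⊢
    calc 38 * ((m:ℝ) + 1) * (684 ^ (m + 1) * D * KK (m + 1 + 1))
        = 684 ^ (m + 1) * D * (38 * ((m:ℝ) + 1) * KK (m + 1 + 1)) := by ring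
      _ = (2 * (m + 1) - 1) * 684 * (684 ^ m * D * KK (m + 1)) + D * (684 ^ (m + 1) * (2 / 18 ^ (m + 1))) := by
          rw [hr]; ring
      _ = (2 * (m + 1) - 1) * 684 * (P * m.centralBinom + 9 ^ m * D * m.centralBinom * KK 1) + D * (2 * 38 ^ (m + 1)) := by
          rw [hP, h18]
      _ = _ := by
          linear_combination (-342) * (P + 9 ^ m * D * KK 1) * hc' + 2 * 38 ^ (m + 1) * he'

lemma poly_int (D r : ℕ) (h : ∀ j, 1 ≤ j → j ≤ 2 * r + 1 → j ∣ D) :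
    ∃ P : ℤ, (D : ℝ) * ∫ t in (-1:ℝ)..1, (19 - t ^ 2) ^ r = P := by
  have e : ∀ t : ℝ, (19 - t ^ 2) ^ r = ∑ k ∈ Finset.range (r + 1),
      (((-1) ^ k * 19 ^ (r - k) * r.choose k : ℤ) : ℝ) * t ^ (2 * k) := by
    intro t
    rw [show (19 - t ^ 2) = -(t ^ 2) + 19 by ring, add_pow]
    refine Finset.sum_congr rfl fun k _ => ?_
    rw [neg_pow, pow_mul]; push_cast; ring
  simp only [e]
  rw [intervalIntegral.integral_finsetSum (fun i _ => Continuous.intervalIntegrable (by fun_prop) _ _), Finset.mul_sum]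
  have : ∀ k ∈ Finset.range (r + 1), ∃ P : ℤ, (D : ℝ) * ∫ t in (-1:ℝ)..1,
      (((-1) ^ k * 19 ^ (r - k) * r.choose k : ℤ) : ℝ) * t ^ (2 * k) = P := by
    intro k hk
    rw [Finset.mem_range] at hk
    obtain ⟨x, hx⟩ := h (2 * k + 1) (by omega) (by omega)
    refine ⟨((-1) ^ k * 19 ^ (r - k) * r.choose k : ℤ) * (2 * x), ?_⟩
    rw [intervalIntegral.integral_const_mul, integral_pow, hx]
    have : (2 * (k:ℝ) + 1) ≠ 0 := by positivity
    have h2 : (-1 : ℝ) ^ (2 * k + 1) = -1 := by rw [pow_succ, pow_mul]; simp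
    rw [h2]
    push_cast
    field_simp
    ring
  choose! P hP using this
  exact ⟨∑ k ∈ Finset.range (r + 1), P k, by rw [Int.cast_sum]; exact Finset.sum_congr rfl hP⟩

lemma cb_le (m : ℕ) : (m.centralBinom : ℝ) ≤ 4 ^ m := by
  have : m.centralBinom ≤ 4 ^ m := by
    rw [Nat.centralBinom]
    calc (2 * m).choose m ≤ 2 ^ (2 * m) := Nat.choose_le_two_pow _ _
      _ = 4 ^ m := by rw [pow_mul]; norm_num
  exact_mod_cast this

lemma JJ_LF1 (a b D : ℕ) (hab : a ≤ b) (hb : b ≤ 2 * a) (hD : ∀ j, 1 ≤ j → j ≤ 2 * b → j ∣ D)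
    (ρ : ℝ) (h0 : 0 < ρ) (h19 : ρ ≤ 19) :
    LF (2 ^ (2 * a - b) * D * JJ a b a) (2 ^ (2 * a - b) * D * ((19 + ρ) ^ a * (18 + ρ) ^ b / ρ ^ a)) := by
  have e : (2 : ℝ) ^ (2 * a - b) * D * ((19 + ρ) ^ a * (18 + ρ) ^ b / ρ ^ a) =
      ∑ l ∈ Finset.range (a + 1), ∑ i ∈ Finset.range (b + 1),
       2 ^ (2 * a - b) * D * (a.choose l * b.choose i * 19 ^ (a - l) * 18 ^ (b - i) * (ρ ^ (i + l) / ρ ^ a)) := by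
    rw [add_comm 19, add_comm 18, add_pow, add_pow, Finset.sum_mul_sum, Finset.sum_div, Finset.mul_sum]
    refine Finset.sum_congr rfl fun l _ => ?_
    rw [Finset.sum_div, Finset.mul_sum]
    refine Finset.sum_congr rfl fun i _ => ?_
    rw [pow_add]; ring
  rw [e, JJ_exp, Finset.mul_sum]
  refine LF.sum _ _ _ fun l hl => ?_
  rw [Finset.mul_sum]
  refine LF.sum _ _ _ fun i hi => ?_
  rw [Finset.mem_range] at hl hi
  by_cases hil : i + l ≤ a
  · rw [WW_le hil]
    set m := a - (i + l) with hm
    obtain ⟨P, hP⟩ := KK_LF D m (fun j h1 h2 => hD j h1 (by omega))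
    have hE : (2:ℝ) ^ (2 * a - b) * 19 ^ (a - l) * 18 ^ (b - i) = 684 ^ m * (2 ^ (2 * l + i) * 9 ^ (b - a + l) * 19 ^ i) := by
      rw [show (684:ℝ) = 2 ^ 2 * 9 * 19 by norm_num, show (18:ℝ) = 2 * 9 by norm_num]
      rw [mul_pow, mul_pow, mul_pow, ← pow_mul, show a - l = m + i by omega,
        show b - i = m + (b - a + l) by omega]
      have : (2:ℝ) ^ (2 * a - b) * 2 ^ (m + (b - a + l)) = 2 ^ (2 * m) * 2 ^ (2 * l + i) := by
        rw [← pow_add, ← pow_add]; congr 1; omega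
      rw [pow_add 9, pow_add 19]
      linear_combination (19 ^ m * 19 ^ i * 9 ^ m * 9 ^ (b - a + l)) * this
    refine ⟨(-1) ^ l * (-1) ^ (b - i) * a.choose l * b.choose i * (2 ^ (2 * l + i) * 9 ^ (b - a + l) * 19 ^ i) * P * m.centralBinom,
      (-1) ^ l * (-1) ^ (b - i) * a.choose l * b.choose i * (2 ^ (2 * l + i) * 9 ^ (b - a + l) * 19 ^ i) * (9 ^ m * D * m.centralBinom), ?_, ?_⟩
    · push_cast
      rw [neg_pow 18]
      linear_combination ((-1) ^ l * (-1) ^ (b - i) * a.choose l * b.choose i * D * KK (m + 1)) * hE +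
        ((-1) ^ l * (-1) ^ (b - i) * a.choose l * b.choose i * (2 ^ (2 * l + i) * 9 ^ (b - a + l) * 19 ^ i)) * hP
    · push_cast
      simp only [abs_mul, abs_pow, abs_neg, abs_one, one_pow, one_mul, Nat.abs_cast, Nat.abs_ofNat]
      have h1 : (9:ℝ) ^ m * m.centralBinom * 19 ^ m ≤ 684 ^ m := by
        rw [show (684:ℝ) = 9 * 4 * 19 by norm_num, mul_pow, mul_pow]
        have := cb_le m
        gcongr
      have h2 : (19 ^ m)⁻¹ ≤ ρ ^ (i + l) / ρ ^ a := by
        have : ρ ^ a = ρ ^ (i + l) * ρ ^ m := by rw [← pow_add]; congr 1; omega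
        rw [this, div_mul_eq_div_div, div_self (by positivity), one_div]
        gcongr
      have h3 : (9:ℝ) ^ m * m.centralBinom ≤ 684 ^ m * (19 ^ m)⁻¹ := by
        rw [← div_eq_mul_inv, le_div_iff₀ (by positivity)]; exact h1
      calc _ = (a.choose l * b.choose i * (2 ^ (2 * l + i) * 9 ^ (b - a + l) * 19 ^ i) * D) * ((9:ℝ) ^ m * m.centralBinom) := by ring
        _ ≤ (a.choose l * b.choose i * (2 ^ (2 * l + i) * 9 ^ (b - a + l) * 19 ^ i) * D) * (684 ^ m * (19 ^ m)⁻¹) := by gcongr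
        _ = (2 ^ (2 * a - b) * 19 ^ (a - l) * 18 ^ (b - i)) * (a.choose l * b.choose i * D) * (19 ^ m)⁻¹ := by rw [hE]; ring
        _ ≤ (2 ^ (2 * a - b) * 19 ^ (a - l) * 18 ^ (b - i)) * (a.choose l * b.choose i * D) * (ρ ^ (i + l) / ρ ^ a) := by gcongr
        _ = _ := by ring
  · push Not at hil
    rw [WW_gt hil]
    obtain ⟨P, hP⟩ := poly_int D (i + l - a - 1) (fun j h1 h2 => hD j h1 (by omega))
    refine ⟨2 ^ (2 * a - b) * ((-1) ^ l * (a.choose l) * (19 ^ (a - l)) * (b.choose i) * (-18) ^ (b - i)) * P, 0, ?_, ?_⟩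
    · push_cast
      linear_combination (2 ^ (2 * a - b) * ((-1) ^ l * (a.choose l) * (19 ^ (a - l)) * (b.choose i) * (-18) ^ (b - i))) * hP
    · simp only [Int.cast_zero, abs_zero]; positivity

lemma JJ_LF2 (a b D : ℕ) (hab : a ≤ b) (hD : ∀ j, 1 ≤ j → j ≤ 2 * b → j ∣ D) :
    ∃ P Q : ℤ, 684 ^ b * D * JJ b a b = P + Q * KK 1 := by
  suffices h : ∃ β, LF (684 ^ b * D * JJ b a b) β by
    obtain ⟨β, P, Q, h, _⟩ := h
    exact ⟨P, Q, h⟩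
  have key : ∀ l ∈ Finset.range (b + 1), ∀ i ∈ Finset.range (a + 1), ∃ β, LF (684 ^ b * D * WW b (i + l)) β := by
    intro l hl i hi
    rw [Finset.mem_range] at hl hi
    by_cases hil : i + l ≤ b
    · rw [WW_le hil]
      set m := b - (i + l) with hm
      obtain ⟨P, hP⟩ := KK_LF D m (fun j h1 h2 => hD j h1 (by omega))
      refine ⟨_, 684 ^ (i + l) * P * m.centralBinom, 684 ^ (i + l) * (9 ^ m * D * m.centralBinom), ?_, le_rfl⟩
      have : (684:ℝ) ^ b = 684 ^ (i + l) * 684 ^ m := by rw [← pow_add]; congr 1; omega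
      rw [this]
      push_cast
      linear_combination 684 ^ (i + l) * hP
    · push Not at hil
      rw [WW_gt hil]
      obtain ⟨P, hP⟩ := poly_int D (i + l - b - 1) (fun j h1 h2 => hD j h1 (by omega))
      refine ⟨_, 684 ^ b * P, 0, ?_, le_rfl⟩
      push_cast
      linear_combination 684 ^ b * hP
  choose! β hβ using key
  refine ⟨∑ l ∈ Finset.range (b + 1), ∑ i ∈ Finset.range (a + 1), |(((-1) ^ l * (b.choose l) * (19 ^ (b - l)) * (a.choose i) * (-18) ^ (a - i) : ℤ) : ℝ)| * β l i, ?_⟩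
  rw [JJ_exp, Finset.mul_sum]
  refine LF.sum _ _ _ fun l hl => ?_
  rw [Finset.mul_sum]
  refine LF.sum _ _ _ fun i hi => ?_
  rw [mul_left_comm]
  exact (hβ l hl i hi).int_mul _


lemma hd_w (t : ℝ) : HasDerivAt (fun t : ℝ => 19 - t ^ 2) (-(2 * t)) t := by
  simpa using (hasDerivAt_pow 2 t).const_sub 19
lemma hd_v (t : ℝ) : HasDerivAt (fun t : ℝ => 1 - t ^ 2) (-(2 * t)) t := by
  simpa using (hasDerivAt_pow 2 t).const_sub 1

lemma JJ_ibp (a b : ℕ) : (2 * a - 2 * b : ℝ) * JJ a b a - 36 * (a + 1) * JJ (a + 1) b (a + 1)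
    + (2 * b + 1) * JJ a (b + 1) a = 0 := by
  have i1 := JJ_ii (fun t => t ^ (2 * a) * (1 - t ^ 2) ^ b) (by fun_prop) (a + 1)
  have i2 := JJ_ii (fun t => t ^ (2 * (a + 1)) * (1 - t ^ 2) ^ b) (by fun_prop) (a + 1 + 1)
  have i3 := JJ_ii (fun t => t ^ (2 * a) * (1 - t ^ 2) ^ (b + 1)) (by fun_prop) (a + 1)
  have h := intervalIntegral.integral_eq_sub_of_hasDerivAt (a := (-1:ℝ)) (b := 1)
    (f := fun t : ℝ => t ^ (2 * a + 1) * (1 - t ^ 2) ^ (b + 1) / (19 - t ^ 2) ^ (a + 1))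
    (f' := fun t => (2 * a - 2 * b : ℝ) * (t ^ (2 * a) * (1 - t ^ 2) ^ b / (19 - t ^ 2) ^ (a + 1))
      - 36 * (a + 1) * (t ^ (2 * (a + 1)) * (1 - t ^ 2) ^ b / (19 - t ^ 2) ^ (a + 1 + 1))
      + (2 * b + 1) * (t ^ (2 * a) * (1 - t ^ 2) ^ (b + 1) / (19 - t ^ 2) ^ (a + 1))) ?_ ?_
  · rw [intervalIntegral.integral_add, intervalIntegral.integral_sub, intervalIntegral.integral_const_mul,
      intervalIntegral.integral_const_mul, intervalIntegral.integral_const_mul] at h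
    · unfold JJ
      rw [h]; simp
    · exact i1.const_mul _
    · exact i2.const_mul _
    · exact (i1.const_mul _).sub (i2.const_mul _)
    · exact i3.const_mul _
  · intro t ht
    have hw := wne ht
    have h2 := ((hasDerivAt_pow (2 * a + 1) t).mul ((hd_v t).pow (b + 1))).div ((hd_w t).pow (a + 1)) (pow_ne_zero _ hw)
    refine h2.congr_deriv ?_
    simp only [Nat.add_sub_cancel, Pi.pow_apply, Pi.mul_apply]
    rw [div_eq_iff (by positivity)]
    have hw1 : (19 - t ^ 2) ^ (a + 1) ≠ 0 := pow_ne_zero _ hw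
    field_simp
    push_cast; ring
  · exact ((i1.const_mul _).sub (i2.const_mul _)).add (i3.const_mul _)

noncomputable def BB (a : ℕ) : ℝ := ∫ t in (-1:ℝ)..1, (1 - t ^ 2) ^ a

lemma BB_rec (a : ℕ) : (2 * a + 3) * BB (a + 1) = (2 * a + 2) * BB a := by
  have i1 : ∀ a : ℕ, IntervalIntegrable (fun t : ℝ => (1 - t ^ 2) ^ a) volume (-1) 1 :=
    fun a => Continuous.intervalIntegrable (by fun_prop) _ _
  have h := intervalIntegral.integral_eq_sub_of_hasDerivAt (a := (-1:ℝ)) (b := 1)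
    (f := fun t : ℝ => t * (1 - t ^ 2) ^ (a + 1))
    (f' := fun t => (2 * a + 3) * (1 - t ^ 2) ^ (a + 1) - (2 * a + 2) * (1 - t ^ 2) ^ a) ?_ ?_
  · rw [intervalIntegral.integral_sub ((i1 _).const_mul _) ((i1 _).const_mul _), intervalIntegral.integral_const_mul,
      intervalIntegral.integral_const_mul] at h
    unfold BB
    simp at h; linarith
  · intro t ht
    refine ((hasDerivAt_id t).mul ((hd_v t).pow (a + 1))).congr_deriv ?_
    simp only [Nat.add_sub_cancel, id, Pi.pow_apply]
    push_cast; ring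
  · exact ((i1 _).const_mul _).sub ((i1 _).const_mul _)

lemma BB_eq (a : ℕ) : (2 * a + 1) * a.centralBinom * BB a = 2 * 4 ^ a := by
  induction a with
  | zero => simp [BB]; norm_num
  | succ a ih =>
    have hc := Nat.succ_mul_centralBinom_succ a
    have hc' : ((a : ℝ) + 1) * (a + 1).centralBinom = 2 * (2 * a + 1) * a.centralBinom := by exact_mod_cast hc
    have hb := BB_rec a
    push_cast
    rw [pow_succ]
    linear_combination (a + 1).centralBinom * hb + 2 * BB a * hc' + 4 * ih

lemma JJ0_rec (a : ℕ) : JJ 0 (a + 1) 0 = BB a - 18 * JJ 0 a 0 := by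
  unfold JJ BB
  rw [← intervalIntegral.integral_const_mul, ← intervalIntegral.integral_sub]
  · apply intervalIntegral.integral_congr
    intro t ht
    have hw := wne ht
    simp only
    field_simp
    ring
  · exact Continuous.intervalIntegrable (by fun_prop) _ _
  · exact (JJ_ii (fun t => t ^ (2 * 0) * (1 - t ^ 2) ^ a) (by fun_prop) (0 + 1)).const_mul _

lemma JJa_rec (a : ℕ) : 2 / 18 ^ (a + 1) = (2 * a + 1) * JJ a 0 a + (2 * a + 2) * JJ (a + 1) 0 (a + 1) := by
  have i1 := JJ_ii (fun t => t ^ (2 * a) * (1 - t ^ 2) ^ 0) (by fun_prop) (a + 1)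
  have i2 := JJ_ii (fun t => t ^ (2 * (a + 1)) * (1 - t ^ 2) ^ 0) (by fun_prop) (a + 1 + 1)
  have h := intervalIntegral.integral_eq_sub_of_hasDerivAt (a := (-1:ℝ)) (b := 1)
    (f := fun t : ℝ => t ^ (2 * a + 1) / (19 - t ^ 2) ^ (a + 1))
    (f' := fun t => (2 * a + 1 : ℝ) * (t ^ (2 * a) * (1 - t ^ 2) ^ 0 / (19 - t ^ 2) ^ (a + 1))
      + (2 * a + 2) * (t ^ (2 * (a + 1)) * (1 - t ^ 2) ^ 0 / (19 - t ^ 2) ^ (a + 1 + 1))) ?_ ?_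
  · rw [intervalIntegral.integral_add (i1.const_mul _) (i2.const_mul _), intervalIntegral.integral_const_mul,
      intervalIntegral.integral_const_mul] at h
    unfold JJ
    rw [h]
    have h2 : (-1 : ℝ) ^ (2 * a + 1) = -1 := by rw [pow_succ, pow_mul]; simp
    rw [h2]; norm_num; ring
  · intro t ht
    have hw := wne ht
    have h2 := (hasDerivAt_pow (2 * a + 1) t).div ((hd_w t).pow (a + 1)) (pow_ne_zero _ hw)
    refine h2.congr_deriv ?_
    simp only [Nat.add_sub_cancel, Pi.pow_apply]
    field_simp
    push_cast; ring
  · exact (i1.const_mul _).add (i2.const_mul _)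

lemma sym0 (a : ℕ) : 72 ^ a * JJ a 0 a = a.centralBinom * JJ 0 a 0 := by
  induction a with
  | zero => simp
  | succ a ih =>
    have hc := Nat.succ_mul_centralBinom_succ a
    have hc' : ((a : ℝ) + 1) * (a + 1).centralBinom = 2 * (2 * a + 1) * a.centralBinom := by exact_mod_cast hc
    have h1 := JJ0_rec a
    have h2 := JJa_rec a
    have h3 := BB_eq a
    have h4 : (72:ℝ) ^ (a + 1) * (2 / 18 ^ (a + 1)) = 2 * 4 ^ (a + 1) := by
      rw [show (72 : ℝ) = 4 * 18 by norm_num, mul_pow]; field_simp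
    have hm : ((a : ℝ) + 1) ≠ 0 := by positivity
    apply mul_left_cancel₀ hm
    rw [h2] at h4
    rw [h1]
    rw [pow_succ, pow_succ] at *
    linear_combination (1/2) * h4 - (BB a - 18 * JJ 0 a 0) * hc' - 2 * h3 - 36 * (2 * a + 1) * ih

lemma JJ_sym : ∀ b a : ℕ, b.centralBinom * 72 ^ a * JJ a b a = a.centralBinom * 72 ^ b * JJ b a b := by
  intro b
  induction b with
  | zero => intro a; have := sym0 a; simpa using this
  | succ b ih =>
    intro a
    have hc := Nat.succ_mul_centralBinom_succ a
    have hca : ((a : ℝ) + 1) * (a + 1).centralBinom = 2 * (2 * a + 1) * a.centralBinom := by exact_mod_cast hc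
    have hc := Nat.succ_mul_centralBinom_succ b
    have hcb : ((b : ℝ) + 1) * (b + 1).centralBinom = 2 * (2 * b + 1) * b.centralBinom := by exact_mod_cast hc
    have h1 := JJ_ibp a b
    have h2 := JJ_ibp b a
    have h3 := ih a
    have h4 := ih (a + 1)
    have hm : ((b : ℝ) + 1) ≠ 0 := by positivity
    apply mul_left_cancel₀ hm
    rw [pow_succ] at *
    linear_combination (72 ^ a * JJ a (b + 1) a) * hcb + 2 * (b.centralBinom * 72 ^ a) * h1 +
      2 * (a.centralBinom * 72 ^ b) * h2 + ((a:ℝ) + 1) * h4 - 4 * (a - b) * h3 + 72 ^ b * JJ b (a + 1) b * hca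


lemma lcm_dvd' (N j : ℕ) (h1 : 1 ≤ j) (h2 : j ≤ N) : j ∣ Nat.lcmUpto N := by
  unfold Nat.lcmUpto
  exact Finset.dvd_lcm (f := id) (Finset.mem_Icc.mpr ⟨h1, h2⟩)

lemma lcm_pos' (N : ℕ) : 0 < Nat.lcmUpto N := by
  rw [Nat.pos_iff_ne_zero]
  unfold Nat.lcmUpto
  rw [Ne, Finset.lcm_eq_zero_iff]
  simp

lemma lcm_exp (N : ℕ) : (Nat.lcmUpto N : ℝ) = Real.exp (Chebyshev.psi N) := by
  rw [Chebyshev.psi_eq_log_lcmUpto, Real.exp_log (by exact_mod_cast lcm_pos' N)]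

lemma JJ_lower (a b c : ℕ) (x y : ℝ) (hx : 0 ≤ x) (hxy : x ≤ y) (hy : y ≤ 1) :
    (y - x) * (x ^ (2 * a) * (1 - y ^ 2) ^ b / (19 - x ^ 2) ^ (c + 1)) ≤ JJ a b c := by
  have i1 := JJ_ii (fun t => t ^ (2 * a) * (1 - t ^ 2) ^ b) (by fun_prop) (c + 1)
  have hss : uIcc x y ⊆ uIcc (-1:ℝ) 1 := by
    rw [uIcc_of_le hxy, uIcc_of_le (by norm_num)]
    exact Icc_subset_Icc (by linarith) hy
  have h1 : ∫ t in x..y, t ^ (2 * a) * (1 - t ^ 2) ^ b / (19 - t ^ 2) ^ (c + 1) ≤ JJ a b c := by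
    unfold JJ
    apply intervalIntegral.integral_mono_interval (by linarith) hxy hy
    · filter_upwards [ae_restrict_mem measurableSet_Ioc] with t ht
      have : (0:ℝ) ≤ 1 - t ^ 2 := by nlinarith [ht.1, ht.2]
      have h2 : (0:ℝ) ≤ 19 - t ^ 2 := by linarith
      have h3 : 0 ≤ t ^ (2 * a) := by rw [pow_mul]; positivity
      simp only [Pi.zero_apply]
      positivity
    · exact i1
  refine le_trans ?_ h1
  have h2 : ∫ t in x..y, (x ^ (2 * a) * (1 - y ^ 2) ^ b / (19 - x ^ 2) ^ (c + 1)) =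
    (y - x) * (x ^ (2 * a) * (1 - y ^ 2) ^ b / (19 - x ^ 2) ^ (c + 1)) := by
    rw [intervalIntegral.integral_const, smul_eq_mul]
  rw [← h2]
  apply intervalIntegral.integral_mono_on hxy (by simp) (i1.mono_set hss)
  intro t ht
  have e1 : (0:ℝ) ≤ 1 - y ^ 2 := by nlinarith
  have e2 : 1 - y ^ 2 ≤ 1 - t ^ 2 := by nlinarith [ht.1, ht.2]
  have e3 : 19 - t ^ 2 ≤ 19 - x ^ 2 := by nlinarith [ht.1, ht.2]
  have e4 : 0 < 19 - t ^ 2 := by linarith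
  have e5 : x ≤ t := ht.1
  have e6 : 0 ≤ t := hx.trans e5
  have e7 : 0 ≤ 1 - t ^ 2 := e1.trans e2
  gcongr

lemma JJ_pos (a b c : ℕ) : 0 < JJ a b c := by
  refine lt_of_lt_of_le ?_ (JJ_lower a b c (1/4) (1/2) (by norm_num) (by norm_num) (by norm_num))
  norm_num

lemma JJ_upper (a b c : ℕ) (M : ℝ) (hM : ∀ u : ℝ, 0 ≤ u → u ≤ 1 → u ^ a * (1 - u) ^ b / (19 - u) ^ c ≤ M) :
    JJ a b c ≤ 2 * M := by
  have i1 := JJ_ii (fun t => t ^ (2 * a) * (1 - t ^ 2) ^ b) (by fun_prop) (c + 1)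
  have h2 : ∫ t in (-1:ℝ)..1, M = 2 * M := by simp; norm_num
  rw [← h2]
  apply intervalIntegral.integral_mono_on (by norm_num) i1 (by simp)
  intro t ht
  have h0 : t ^ 2 ≤ 1 := by nlinarith [ht.1, ht.2]
  have := hM (t ^ 2) (by positivity) h0
  refine le_trans ?_ this
  rw [pow_mul]
  have e1 : 0 ≤ 1 - t ^ 2 := by linarith
  have e2 : 0 < 19 - t ^ 2 := by linarith
  gcongr
  · linarith
  · omega

lemma KK1_irr (P0 Q0 : ℤ) (h : (P0 : ℝ) + Q0 * KK 1 = 0) : P0 = 0 ∧ Q0 = 0 := by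
  by_cases hQ : Q0 = 0
  · subst hQ; simp at h; exact ⟨h, rfl⟩
  exfalso
  have hup : ∀ n : ℕ, JJ n n n ≤ 2 * (1/72) ^ n := by
    intro n
    apply JJ_upper
    intro u h0 h1
    rw [← mul_pow, ← div_pow]
    have h2 : 0 ≤ 1 - u := by linarith
    have h3 : 0 < 19 - u := by linarith
    refine pow_le_pow_left₀ (by positivity) ?_ n
    rw [div_le_iff₀ h3]
    nlinarith [sq_nonneg (u - 1/2)]
  have hlow : ∀ n : ℕ, 1 ≤ |(Q0:ℝ)| * (2 ^ n * Real.exp (Chebyshev.psi (2 * n)) * (2 * (1/72) ^ n)) := by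
    intro n
    obtain ⟨P, Q, e, _⟩ := JJ_LF1 n n (Nat.lcmUpto (2 * n)) le_rfl (by omega) (lcm_dvd' _) 1 one_pos (by norm_num)
    rw [lcm_exp, show 2 * n - n = n by omega] at e
    have hp : 0 < 2 ^ n * Real.exp (Chebyshev.psi ↑(2 * n)) * JJ n n n := by have := JJ_pos n n n; positivity
    have hi : ((Q0 * P - Q * P0 : ℤ) : ℝ) = Q0 * (2 ^ n * Real.exp (Chebyshev.psi ↑(2 * n)) * JJ n n n) := by
      rw [e]; push_cast; linear_combination (-Q) * h
    have hne : (Q0 * P - Q * P0 : ℤ) ≠ 0 := by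
      intro h0
      rw [h0] at hi
      have : (Q0 : ℝ) ≠ 0 := by exact_mod_cast hQ
      have := mul_ne_zero this hp.ne'
      rw [← hi] at this
      simp at this
    have h1 : (1:ℝ) ≤ |((Q0 * P - Q * P0 : ℤ) : ℝ)| := by
      exact_mod_cast Int.one_le_abs hne
    rw [hi, abs_mul, abs_of_pos hp] at h1
    refine h1.trans ?_
    have := hup n
    push_cast
    gcongr
  have hpsi := PNT_psi (δ := 1/20) (by norm_num)
  have hn : Tendsto (fun n : ℕ => (2:ℝ) * n) atTop atTop := tendsto_natCast_atTop_atTop.const_mul_atTop (by norm_num)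
  have hr : Tendsto (fun n : ℕ => |(Q0:ℝ)| * 2 * (Real.exp (21/10) / 36) ^ n) atTop (𝓝 0) := by
    rw [← mul_zero (|(Q0:ℝ)| * 2)]
    apply Tendsto.const_mul
    apply tendsto_pow_atTop_nhds_zero_of_lt_one (by positivity)
    rw [div_lt_one (by norm_num)]
    calc Real.exp (21/10) ≤ Real.exp 3 := Real.exp_le_exp.mpr (by norm_num)
      _ = Real.exp 1 ^ 3 := by rw [← Real.exp_nat_mul]; norm_num
      _ < 2.7182818286 ^ 3 := by gcongr; exact Real.exp_one_lt_d9
      _ < 36 := by norm_num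
  obtain ⟨n, h1, h2⟩ := ((hn.eventually hpsi).and (hr.eventually (gt_mem_nhds one_pos))).exists
  have h3 := hlow n
  have h4 : Real.exp (Chebyshev.psi (2 * n)) ≤ Real.exp (21/10) ^ n := by
    rw [← Real.exp_nat_mul]
    apply Real.exp_le_exp.mpr
    have := (abs_le.mp h1).2
    linarith
  have h5 : |(Q0:ℝ)| * (2 ^ n * Real.exp (Chebyshev.psi (2 * n)) * (2 * (1/72) ^ n)) ≤ |(Q0:ℝ)| * 2 * (Real.exp (21/10) / 36) ^ n := by
    calc _ ≤ |(Q0:ℝ)| * (2 ^ n * Real.exp (21/10) ^ n * (2 * (1/72) ^ n)) := by gcongr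
      _ = |(Q0:ℝ)| * 2 * (2 * Real.exp (21/10) * (1/72)) ^ n := by rw [mul_pow, mul_pow]; ring
      _ = _ := by congr 2; ring
  linarith

def SS (n : ℕ) : Finset ℕ :=
  ((Finset.Ioc (5 * n) (6 * n)).filter Nat.Prime ∪ (Finset.Ioc (5 * n / 2) (3 * n)).filter Nat.Prime) ∪
    (Finset.Ioc (12 * n / 7) (2 * n)).filter Nat.Prime

lemma cb_fac (n k p : ℕ) (hk : k ≤ 6 * n) (hp : p.Prime) (h : 12 * n < p ^ 2) :
    p ∣ k.centralBinom ↔ p ≤ 2 * (k % p) := by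
  have h1 := Nat.factorization_choose (p := p) (n := 2 * k) (k := k) (b := 2) hp (by omega)
    (Nat.log_lt_of_lt_pow' (by norm_num) (by omega))
  rw [show Finset.Ico 1 2 = {1} by rfl, show 2 * k - k = k by omega] at h1
  simp only [Finset.filter_singleton, pow_one, ← two_mul] at h1
  rw [Nat.centralBinom, hp.dvd_iff_one_le_factorization (Nat.choose_pos (by omega)).ne', h1]
  split_ifs with h2 <;> simp [h2]

lemma mod_of (k p j r : ℕ) (h : k = p * j + r) (hr : r < p) : k % p = r := by
  rw [h, Nat.mul_add_mod, Nat.mod_eq_of_lt hr]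

lemma SS_prop (n p : ℕ) (hn : 1000 ≤ n) (h : p ∈ SS n) :
    p.Prime ∧ 684 < p ∧ p ∣ (5 * n).centralBinom ∧ ¬ p ∣ (6 * n).centralBinom := by
  simp only [SS, Finset.mem_union, Finset.mem_filter, Finset.mem_Ioc] at h
  have hp : p.Prime := by tauto
  have hl : 12 * n < 7 * p ∧ p ≤ 6 * n := by omega
  have hsq : 12 * n < p ^ 2 := by
    have : 7 < p := by omega
    nlinarith
  refine ⟨hp, by omega, ?_, ?_⟩
  · rw [cb_fac n (5 * n) p (by omega) hp hsq]
    rcases h with (⟨h, _⟩ | ⟨h, _⟩) | ⟨h, _⟩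
    · rw [mod_of (5 * n) p 0 (5 * n) (by omega) (by omega)]; omega
    · rw [mod_of (5 * n) p 1 (5 * n - p) (by omega) (by omega)]; omega
    · rw [mod_of (5 * n) p 2 (5 * n - 2 * p) (by omega) (by omega)]; omega
  · rw [cb_fac n (6 * n) p (by omega) hp hsq]
    rcases h with (⟨h, _⟩ | ⟨h, _⟩) | ⟨h, _⟩
    · rw [mod_of (6 * n) p 1 (6 * n - p) (by omega) (by omega)]; omega
    · rw [mod_of (6 * n) p 2 (6 * n - 2 * p) (by omega) (by omega)]; omega
    · rw [mod_of (6 * n) p 3 (6 * n - 3 * p) (by omega) (by omega)]; omega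

lemma dvd_aux (n : ℕ) (hn : 1000 ≤ n) (A B : ℤ)
    (h : (6 * n).centralBinom * 72 ^ (5 * n) * 684 ^ (6 * n) * A = (5 * n).centralBinom * B) :
    ((∏ p ∈ SS n, p : ℕ) : ℤ) ∣ A := by
  rw [Int.natCast_dvd]
  apply Finset.prod_primes_dvd
  · intro p hp; exact (SS_prop n p hn hp).1.prime
  · intro p hp
    obtain ⟨h1, h2, h3, h4⟩ := SS_prop n p hn hp
    have h5 : p ∣ (6 * n).centralBinom * 72 ^ (5 * n) * 684 ^ (6 * n) * A.natAbs := by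
      have : ((6 * n).centralBinom * 72 ^ (5 * n) * 684 ^ (6 * n) * A).natAbs = ((5 * n).centralBinom * B).natAbs := by rw [h]
      simp only [Int.natAbs_mul, Int.natAbs_pow, Int.natAbs_natCast, Int.reduceAbs] at this
      rw [this]
      exact h3.mul_right _
    rcases h1.dvd_mul.mp h5 with h5 | h5
    · exfalso
      rcases h1.dvd_mul.mp h5 with h5 | h5
      · rcases h1.dvd_mul.mp h5 with h5 | h5
        · exact h4 h5
        · have := Nat.le_of_dvd (by norm_num) (h1.dvd_of_dvd_pow h5); omega
      · have := Nat.le_of_dvd (by norm_num) (h1.dvd_of_dvd_pow h5); omega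
    · exact h5

lemma main_form (n : ℕ) (hn : 1000 ≤ n) : ∃ P Q : ℤ,
    2 ^ (4 * n) * (Nat.lcmUpto (12 * n) / ((∏ p ∈ SS n, p : ℕ) : ℝ)) * JJ (5 * n) (6 * n) (5 * n) = P + Q * KK 1 ∧
    |(Q : ℝ)| ≤ 2 ^ (4 * n) * (Nat.lcmUpto (12 * n) / ((∏ p ∈ SS n, p : ℕ) : ℝ)) * ((34 ^ 5 * 33 ^ 6 / 15 ^ 5) ^ n) := by
  set D := Nat.lcmUpto (12 * n) with hD
  have hdv : ∀ j, 1 ≤ j → j ≤ 2 * (6 * n) → j ∣ D := fun j h1 h2 => lcm_dvd' _ j h1 (by omega)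
  obtain ⟨P, Q, hX, hQ⟩ := JJ_LF1 (5 * n) (6 * n) D (by omega) (by omega) hdv 15 (by norm_num) (by norm_num)
  obtain ⟨P', Q', hY⟩ := JJ_LF2 (5 * n) (6 * n) D (by omega) hdv
  rw [show 2 * (5 * n) - 6 * n = 4 * n by omega] at hX hQ
  have hs := JJ_sym (6 * n) (5 * n)
  have hrel : ((((6 * n).centralBinom * 72 ^ (5 * n) * 684 ^ (6 * n) * P - (5 * n).centralBinom * (72 ^ (6 * n) * 2 ^ (4 * n) * P') : ℤ)) : ℝ)
      + (((6 * n).centralBinom * 72 ^ (5 * n) * 684 ^ (6 * n) * Q - (5 * n).centralBinom * (72 ^ (6 * n) * 2 ^ (4 * n) * Q') : ℤ)) * KK 1 = 0 := by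
    push_cast
    linear_combination (-((6 * n).centralBinom * 72 ^ (5 * n) * 684 ^ (6 * n) : ℝ)) * hX +
      ((5 * n).centralBinom * 72 ^ (6 * n) * 2 ^ (4 * n) : ℝ) * hY + (2 ^ (4 * n) * D * 684 ^ (6 * n)) * hs
  obtain ⟨hP0, hQ0⟩ := KK1_irr _ _ hrel
  obtain ⟨P1, rfl⟩ := dvd_aux n hn P _ (sub_eq_zero.mp hP0)
  obtain ⟨Q1, rfl⟩ := dvd_aux n hn Q _ (sub_eq_zero.mp hQ0)
  have hpos : (0:ℝ) < ((∏ p ∈ SS n, p : ℕ) : ℝ) := by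
    have : 0 < ∏ p ∈ SS n, p := Finset.prod_pos fun p hp => (SS_prop n p hn hp).1.pos
    exact_mod_cast this
  set Φ := ∏ p ∈ SS n, p
  refine ⟨P1, Q1, ?_, ?_⟩
  · push_cast at hX
    field_simp
    linear_combination hX
  · push_cast at hQ
    rw [abs_mul, Nat.abs_cast] at hQ
    have e : (19 + 15 : ℝ) ^ (5 * n) * (18 + 15) ^ (6 * n) / 15 ^ (5 * n) = (34 ^ 5 * 33 ^ 6 / 15 ^ 5) ^ n := by
      rw [div_pow, mul_pow, ← pow_mul, ← pow_mul, ← pow_mul]; norm_num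
    rw [e] at hQ
    rw [mul_div_assoc', div_mul_eq_mul_div, le_div_iff₀ hpos]
    linarith


lemma irr_meas (α s1 s2 T κ : ℝ) (hs1 : 0 < s1) (hs2 : 0 < s2) (hT : 0 < T)
    (hk1 : 1 + T / s2 < κ) (hk2 : (s1 + T) / s2 < κ) (N0 : ℕ)
    (H : ∀ n : ℕ, N0 ≤ n → ∃ P Q : ℤ, Real.exp (-s1 * n) ≤ P - Q * α ∧ P - Q * α ≤ Real.exp (-s2 * n) ∧
      |(Q : ℝ)| ≤ Real.exp (T * n)) :
    ∃ B : ℝ, ∀ (p : ℤ) (q : ℕ), 0 < q → |α - p / q| < (q : ℝ) ^ (-κ) → Real.log q ≤ B := by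
  set B1 := (T * (Real.log 2 / s2 + 1) + Real.log 2) / (κ - (1 + T / s2)) with hB1
  set B2 := ((s1 + T) * (Real.log 2 / s2 + 1)) / (κ - (s1 + T) / s2) with hB2
  refine ⟨max (max B1 B2) (s2 * N0), ?_⟩
  intro p q hq hlt
  by_contra hcon
  push Not at hcon
  have hc1 : B1 < Real.log q := lt_of_le_of_lt ((le_max_left _ _).trans (le_max_left _ _)) hcon
  have hc2 : B2 < Real.log q := lt_of_le_of_lt ((le_max_right _ _).trans (le_max_left _ _)) hcon
  have hc3 : s2 * N0 < Real.log q := lt_of_le_of_lt (le_max_right _ _) hcon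
  rw [hB1, div_lt_iff₀ (by linarith)] at hc1
  rw [hB2, div_lt_iff₀ (by linarith)] at hc2
  have hq0 : (0:ℝ) < q := by exact_mod_cast hq
  have hl2 : 0 < Real.log 2 := Real.log_pos (by norm_num)
  set L := Real.log q with hL
  have hqL : (q:ℝ) = Real.exp L := (Real.exp_log hq0).symm
  have hLpos : 0 ≤ L := Real.log_nonneg (by exact_mod_cast hq)
  set x := (Real.log 2 + L) / s2 with hx
  have hx0 : 0 ≤ x := by positivity
  set n := ⌊x⌋₊ + 1 with hn
  have hn1 : x < n := by rw [hn]; push_cast; exact Nat.lt_floor_add_one x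
  have hn2 : (n : ℝ) ≤ x + 1 := by rw [hn]; push_cast; linarith [Nat.floor_le hx0]
  have hxs : x * s2 = Real.log 2 + L := by rw [hx]; field_simp
  have hnN : N0 ≤ n := by
    have h1 : s2 * N0 < s2 * n := by nlinarith
    have := lt_of_mul_lt_mul_left h1 hs2.le
    exact_mod_cast this.le
  obtain ⟨P, Q, h1, h2, h3⟩ := H n hnN
  have hrpow : (q:ℝ) ^ (-κ) = Real.exp (-κ * L) := by
    rw [Real.rpow_def_of_pos hq0, ← hL]; ring_nf
  rw [hrpow] at hlt
  set d := |α - p / q| with hd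
  have hsmall : q * Real.exp (-s2 * n) < 1 / 2 := by
    have : (1:ℝ)/2 = Real.exp (- Real.log 2) := by rw [Real.exp_neg, Real.exp_log (by norm_num)]; norm_num
    rw [this, hqL, ← Real.exp_add]
    apply Real.exp_lt_exp.mpr
    nlinarith
  have hid : ((P * q - Q * p : ℤ) : ℝ) = q * (P - Q * α) + Q * q * (α - p / q) := by
    push_cast; field_simp; ring
  have hPpos : 0 < P - Q * α := lt_of_lt_of_le (Real.exp_pos _) h1
  by_cases hz : P * q - Q * p = 0
  · rw [hz] at hid
    have e1 : P - Q * α = - (Q * (α - p / q)) := by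
      have : (q:ℝ) * ((P - Q * α) + Q * (α - p / q)) = 0 := by push_cast at hid; linarith
      rcases mul_eq_zero.mp this with h | h
      · exact absurd h hq0.ne'
      · linarith
    have e2 : P - Q * α ≤ |(Q:ℝ)| * d := by
      rw [hd, ← abs_mul, e1]; exact neg_le_abs _
    have e3 : Real.exp (-s1 * n) < Real.exp (T * n) * Real.exp (-κ * L) := by
      calc _ ≤ |(Q:ℝ)| * d := h1.trans e2
        _ ≤ Real.exp (T * n) * d := by gcongr
        _ < _ := by gcongr
    rw [← Real.exp_add, Real.exp_lt_exp] at e3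
    have e4 : (s1 + T) * n ≤ (s1 + T) * (x + 1) := by gcongr
    have e5 : (s1 + T) * (x + 1) = (s1 + T) / s2 * L + (s1 + T) * (Real.log 2 / s2 + 1) := by
      rw [hx]; field_simp; ring
    have e8 : L * (κ - (s1 + T) / s2) = κ * L - (s1 + T) / s2 * L := by ring
    linarith
  · have e1 : (1:ℝ) ≤ |((P * q - Q * p : ℤ) : ℝ)| := by exact_mod_cast Int.one_le_abs hz
    rw [hid] at e1
    have e2 : |(q:ℝ) * (P - Q * α) + Q * q * (α - p / q)| ≤ q * (P - Q * α) + |(Q:ℝ)| * q * d := by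
      refine (abs_add_le _ _).trans ?_
      rw [abs_of_pos (by positivity), abs_mul, abs_mul, Nat.abs_cast]
    have e3 : (q:ℝ) * (P - Q * α) ≤ q * Real.exp (-s2 * n) := by gcongr
    have e4 : 1 / 2 < |(Q:ℝ)| * q * d := by linarith
    have e5 : Real.exp (- Real.log 2) < Real.exp (T * n) * Real.exp L * Real.exp (-κ * L) := by
      have : (1:ℝ)/2 = Real.exp (- Real.log 2) := by rw [Real.exp_neg, Real.exp_log (by norm_num)]; norm_num
      rw [← this]
      calc _ < |(Q:ℝ)| * q * d := e4
        _ ≤ Real.exp (T * n) * q * d := by gcongr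
        _ = Real.exp (T * n) * Real.exp L * d := by rw [hqL]
        _ < _ := by gcongr
    rw [← Real.exp_add, ← Real.exp_add, Real.exp_lt_exp] at e5
    have e6 : T * n ≤ T * (x + 1) := by gcongr
    have e7 : T * (x + 1) = T / s2 * L + T * (Real.log 2 / s2 + 1) := by
      rw [hx]; field_simp; ring
    have e8 : L * (κ - (1 + T / s2)) = κ * L - L - T / s2 * L := by ring
    linarith

lemma fin_of_bound (α κ B : ℝ) (hκ : 0 < κ)
    (h : ∀ (p : ℤ) (q : ℕ), 0 < q → |α - p / q| < (q : ℝ) ^ (-κ) → Real.log q ≤ B) :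
    {x : ℤ × ℕ | 0 < x.2 ∧ |α - x.1 / x.2| < (x.2 : ℝ) ^ (-κ)}.Finite := by
  set N := ⌈Real.exp B⌉₊
  set M := ⌈(|α| + 1) * N⌉
  refine ((Set.finite_Icc (-M) M).prod (Set.finite_Icc 0 N)).subset ?_
  rintro ⟨p, q⟩ ⟨hq, hlt⟩
  simp only at hq hlt
  have hq0 : (0:ℝ) < q := by exact_mod_cast hq
  have h1 : (q:ℝ) ≤ N := by
    have := h p q hq hlt
    rw [Real.log_le_iff_le_exp hq0] at this
    exact this.trans (Nat.le_ceil _)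
  have h2 : (q:ℝ) ^ (-κ) ≤ 1 := Real.rpow_le_one_of_one_le_of_nonpos (by exact_mod_cast hq) (by linarith)
  have h3 : |(p:ℝ)| ≤ (|α| + 1) * N := by
    have e : (p:ℝ) = (p / q) * q := by field_simp
    have h4 : |(p:ℝ) / q| ≤ |α| + 1 := by
      have : |(p:ℝ)/q| ≤ |α| + |α - p / q| := by
        have := abs_sub_abs_le_abs_sub ((p:ℝ)/q) α
        rw [abs_sub_comm] at this; linarith
      linarith
    rw [e, abs_mul, Nat.abs_cast]
    gcongr
  have h5 : |(p:ℝ)| ≤ M := h3.trans (Int.le_ceil _)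
  rw [abs_le] at h5
  refine ⟨⟨?_, ?_⟩, ⟨by simp, by exact_mod_cast h1⟩⟩
  · exact_mod_cast h5.1
  · exact_mod_cast h5.2

lemma KK1_eq : √19 * Real.log ((√19 - 1) / (√19 + 1)) = -19 * KK 1 := by
  have h19 : √19 ^ 2 = (19:ℝ) := Real.sq_sqrt (by norm_num)
  have hs : 4 < √(19:ℝ) := by rw [Real.lt_sqrt (by norm_num)]; norm_num
  have h := intervalIntegral.integral_eq_sub_of_hasDerivAt (a := (-1:ℝ)) (b := 1)
    (f := fun t : ℝ => (Real.log (√19 + t) - Real.log (√19 - t)))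
    (f' := fun t => 2 * √19 * ((19 - t ^ 2) ^ 1)⁻¹) ?_ ?_
  · rw [intervalIntegral.integral_const_mul] at h
    have e : ∫ t in (-1:ℝ)..1, ((19 - t ^ 2) ^ 1)⁻¹ = KK 1 := rfl
    rw [e] at h
    have : √19 - -1 = √19 + 1 := by ring
    rw [this, show √19 + -1 = √19 - 1 by ring] at h
    rw [Real.log_div (by linarith) (by linarith)]
    linear_combination (√19 / 2) * h - KK 1 * h19
  · intro t ht
    have hw := wne ht
    rw [uIcc_of_le (by norm_num)] at ht
    have a1 : √19 + t ≠ 0 := by linarith [ht.1]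
    have a2 : √19 - t ≠ 0 := by linarith [ht.2]
    have d1 := ((hasDerivAt_id t).const_add √19).log a1
    have d2 := ((hasDerivAt_id t).const_sub √19).log a2
    refine (d1.sub d2).congr_deriv ?_
    simp only [id, pow_one]
    have : (19 - t ^ 2) = (√19 + t) * (√19 - t) := by linear_combination -h19
    rw [this]
    field_simp
    ring
  · have := (JJ_ii (fun _ => 1) continuous_const 1).const_mul (2 * √19)
    simpa using this

lemma theta_diff (a b : ℕ) (h : a ≤ b) : ∑ p ∈ (Finset.Ioc a b).filter Nat.Prime, Real.log p =
    Chebyshev.theta b - Chebyshev.theta a := by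
  simp only [Chebyshev.theta, Nat.floor_natCast]
  have : (Finset.Ioc 0 b).filter Nat.Prime = (Finset.Ioc 0 a).filter Nat.Prime ∪ (Finset.Ioc a b).filter Nat.Prime := by
    rw [← Finset.filter_union, Finset.Ioc_union_Ioc_eq_Ioc (by omega) h]
  rw [this, Finset.sum_union]
  · ring
  · rw [Finset.disjoint_left]
    intro x hx hy
    simp only [Finset.mem_filter, Finset.mem_Ioc] at hx hy
    omega

lemma log_SS (n : ℕ) : Real.log ((∏ p ∈ SS n, p : ℕ) : ℝ) =
    (Chebyshev.theta (6 * n : ℕ) - Chebyshev.theta (5 * n : ℕ)) + (Chebyshev.theta (3 * n : ℕ) - Chebyshev.theta (5 * n / 2 : ℕ))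
      + (Chebyshev.theta (2 * n : ℕ) - Chebyshev.theta (12 * n / 7 : ℕ)) := by
  rw [← theta_diff _ _ (by omega), ← theta_diff _ _ (by omega), ← theta_diff _ _ (by omega)]
  rw [Nat.cast_prod, Real.log_prod]
  · unfold SS
    rw [Finset.sum_union, Finset.sum_union]
    · rw [Finset.disjoint_left]
      intro x hx hy
      simp only [Finset.mem_filter, Finset.mem_Ioc] at hx hy
      omega
    · rw [Finset.disjoint_left]
      intro x hx hy
      simp only [Finset.mem_filter, Finset.mem_Ioc, Finset.mem_union] at hx hy
      omega
  · intro p hp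
    have : p ≠ 0 := by
      simp only [SS, Finset.mem_filter, Finset.mem_Ioc, Finset.mem_union] at hp
      omega
    exact_mod_cast this

lemma ratio_asymp : ∀ᶠ n : ℕ in atTop, ∃ g : ℝ,
    (Nat.lcmUpto (12 * n) / ((∏ p ∈ SS n, p : ℕ) : ℝ)) = Real.exp g ∧ 51 / 5 * n ≤ g ∧ g ≤ 41 / 4 * n := by
  have hθ := PNT_theta (δ := 1/4000) (by norm_num)
  have hψ := PNT_psi (δ := 1/4000) (by norm_num)
  have T1 : ∀ (c d : ℕ), 0 < c → 0 < d → Tendsto (fun n : ℕ => ((c * n / d : ℕ) : ℝ)) atTop atTop := by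
    intro c d hc hd
    refine tendsto_natCast_atTop_atTop.comp ?_
    exact (Nat.tendsto_div_const_atTop hd.ne').comp (tendsto_id.const_mul_atTop' hc)
  have T2 : ∀ (c : ℕ), 0 < c → Tendsto (fun n : ℕ => ((c * n : ℕ) : ℝ)) atTop atTop := by
    intro c hc
    exact tendsto_natCast_atTop_atTop.comp (tendsto_id.const_mul_atTop' hc)
  filter_upwards [(T2 12 (by norm_num)).eventually hψ, (T2 6 (by norm_num)).eventually hθ,
    (T2 5 (by norm_num)).eventually hθ, (T2 3 (by norm_num)).eventually hθ,
    (T2 2 (by norm_num)).eventually hθ, (T1 5 2 (by norm_num) (by norm_num)).eventually hθ,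
    (T1 12 7 (by norm_num) (by norm_num)).eventually hθ, eventually_ge_atTop 1000] with n h12 h6 h5 h3 h2 h52 h127 hn
  refine ⟨Chebyshev.psi (12 * n : ℕ) - Real.log ((∏ p ∈ SS n, p : ℕ) : ℝ), ?_, ?_⟩
  · have hpos : (0:ℝ) < ((∏ p ∈ SS n, p : ℕ) : ℝ) := by
      have : 0 < ∏ p ∈ SS n, p := Finset.prod_pos fun p hp => (SS_prop n p hn hp).1.pos
      exact_mod_cast this
    rw [Real.exp_sub, Real.exp_log hpos, lcm_exp]
  · rw [log_SS]
    have hn' : (1000:ℝ) ≤ n := by exact_mod_cast hn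
    have a1 : ((5 * n / 2 : ℕ) : ℝ) * 2 ≤ 5 * n ∧ (5 * n : ℝ) ≤ ((5 * n / 2 : ℕ) : ℝ) * 2 + 2 := by
      constructor
      · exact_mod_cast (by omega : (5 * n / 2) * 2 ≤ 5 * n)
      · exact_mod_cast (by omega : 5 * n ≤ (5 * n / 2) * 2 + 2)
    have a2 : ((12 * n / 7 : ℕ) : ℝ) * 7 ≤ 12 * n ∧ (12 * n : ℝ) ≤ ((12 * n / 7 : ℕ) : ℝ) * 7 + 7 := by
      constructor
      · exact_mod_cast (by omega : (12 * n / 7) * 7 ≤ 12 * n)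
      · exact_mod_cast (by omega : 12 * n ≤ (12 * n / 7) * 7 + 7)
    rw [abs_le] at *
    push_cast at *
    constructor <;> linarith


noncomputable def MM : ℝ := (4607/10000) ^ 5 * (5393/10000) ^ 6 / (185393/10000) ^ 5 * (101/100)
noncomputable def mm : ℝ := (67/100) ^ 10 * (5239/10000) ^ 6 / (185511/10000) ^ 5

lemma MM_bound (u : ℝ) (h0 : 0 ≤ u) (h1 : u ≤ 1) : u ^ 5 * (1 - u) ^ 6 / (19 - u) ^ 5 ≤ MM := by
  have h2 : 0 ≤ 1 - u := by linarith
  have h3 : 0 < 19 - u := by linarith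
  set A := u / (4607/10000) - 1 with hA
  set B := (1 - u) / (5393/10000) - 1 with hB
  set C := (185393/10000) / (19 - u) - 1 with hC
  have a : u ≤ 4607/10000 * Real.exp A := by
    have := Real.add_one_le_exp A
    have e : u = 4607/10000 * (A + 1) := by rw [hA]; ring
    calc u = 4607/10000 * (A + 1) := e
      _ ≤ _ := by gcongr
  have b : 1 - u ≤ 5393/10000 * Real.exp B := by
    have := Real.add_one_le_exp B
    have e : 1 - u = 5393/10000 * (B + 1) := by rw [hB]; ring
    calc 1 - u = 5393/10000 * (B + 1) := e
      _ ≤ _ := by gcongr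
  have c : (19 - u)⁻¹ ≤ (185393/10000)⁻¹ * Real.exp C := by
    have := Real.add_one_le_exp C
    have e : (19 - u)⁻¹ = (185393/10000)⁻¹ * (C + 1) := by rw [hC]; field_simp; ring
    calc (19 - u)⁻¹ = (185393/10000)⁻¹ * (C + 1) := e
      _ ≤ _ := by gcongr
  have hsum : 5 * A + 6 * B + 5 * C ≤ 7/1000 := by
    have e : C = (u - 4607/10000) / (19 - u) := by rw [hC]; field_simp; ring
    rw [e]
    have e2 : (u - 4607/10000) / (19 - u) * (19 - u) = u - 4607/10000 := by field_simp
    have : (5 * A + 6 * B + 5 * ((u - 4607/10000) / (19 - u))) * (19 - u) ≤ 7/1000 * (19 - u) := by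
      have : (5 * A + 6 * B + 5 * ((u - 4607/10000) / (19 - u))) * (19 - u) = (5 * A + 6 * B) * (19 - u) + 5 * (u - 4607/10000) := by
        rw [add_mul, mul_assoc 5, e2]
      rw [this, hA, hB]
      nlinarith [mul_nonneg h0 h2]
    exact le_of_mul_le_mul_right this h3
  have hexp : Real.exp (5 * A + 6 * B + 5 * C) ≤ 101/100 := by
    have h4 : Real.exp (7/1000) ≤ 101/100 := by
      have := Real.add_one_le_exp (-(7/1000) : ℝ)
      rw [Real.exp_neg] at this
      have hp := Real.exp_pos (7/1000)
      have h5 : (Real.exp (7/1000))⁻¹ * Real.exp (7/1000) = 1 := inv_mul_cancel₀ hp.ne'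
      nlinarith
    exact (Real.exp_le_exp.mpr hsum).trans h4
  have hinv : 0 < (19 - u)⁻¹ := by positivity
  calc u ^ 5 * (1 - u) ^ 6 / (19 - u) ^ 5 = u ^ 5 * (1 - u) ^ 6 * ((19 - u)⁻¹) ^ 5 := by rw [inv_pow]; rfl
    _ ≤ (4607/10000 * Real.exp A) ^ 5 * (5393/10000 * Real.exp B) ^ 6 * ((185393/10000)⁻¹ * Real.exp C) ^ 5 := by gcongr
    _ = (4607/10000) ^ 5 * (5393/10000) ^ 6 / (185393/10000) ^ 5 * Real.exp (5 * A + 6 * B + 5 * C) := by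
      rw [Real.exp_add, Real.exp_add, show 5 * A = ((5:ℕ):ℝ) * A by norm_num, show 6 * B = ((6:ℕ):ℝ) * B by norm_num,
        show 5 * C = ((5:ℕ):ℝ) * C by norm_num, Real.exp_nat_mul, Real.exp_nat_mul, Real.exp_nat_mul]
      ring
    _ ≤ _ := by unfold MM; gcongr

lemma JJ_up (n : ℕ) : JJ (5 * n) (6 * n) (5 * n) ≤ 2 * MM ^ n := by
  apply JJ_upper
  intro u h0 h1
  have h2 : 0 ≤ 1 - u := by linarith
  have h3 : 0 < 19 - u := by linarith
  rw [pow_mul, pow_mul, pow_mul, ← mul_pow, ← div_pow]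
  exact pow_le_pow_left₀ (by positivity) (MM_bound u h0 h1) n

lemma JJ_low (n : ℕ) : 1/950 * mm ^ n ≤ JJ (5 * n) (6 * n) (5 * n) := by
  refine le_trans ?_ (JJ_lower (5 * n) (6 * n) (5 * n) (67/100) (69/100) (by norm_num) (by norm_num) (by norm_num))
  have e : (67/100 : ℝ) ^ (2 * (5 * n)) * (1 - (69/100) ^ 2) ^ (6 * n) / (19 - (67/100) ^ 2) ^ (5 * n + 1) =
     mm ^ n / (185511/10000) := by
    rw [show 2 * (5 * n) = 10 * n by ring, pow_succ _ (5 * n), show (1:ℝ) - (69/100) ^ 2 = 5239/10000 by norm_num,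
      show (19:ℝ) - (67/100) ^ 2 = 185511/10000 by norm_num, pow_mul, pow_mul, pow_mul, ← mul_pow, div_mul_eq_div_div, ← div_pow]
    rfl
  rw [e]
  have : 0 < mm ^ n := by unfold mm; positivity
  nlinarith

lemma num1 : 16 * MM * Real.exp (155/8) < 1 := by
  have hp : 0 ≤ 16 * MM * Real.exp (155/8) := by unfold MM; positivity
  rw [← pow_lt_one_iff_of_nonneg hp (n := 8) (by norm_num), mul_pow, ← Real.exp_nat_mul]
  have : Real.exp ((8:ℕ) * (155/8)) = Real.exp 1 ^ 155 := by rw [← Real.exp_nat_mul]; norm_num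
  rw [this]
  calc (16 * MM) ^ 8 * Real.exp 1 ^ 155 ≤ (16 * MM) ^ 8 * 2.7182818286 ^ 155 := by
        have := Real.exp_one_lt_d9.le
        gcongr
    _ < 1 := by unfold MM; norm_num

lemma num2 : 1 < 16 * mm * Real.exp (79/4) := by
  have hp : 0 ≤ 16 * mm * Real.exp (79/4) := by unfold mm; positivity
  rw [← one_lt_pow_iff_of_nonneg hp (n := 4) (by norm_num), mul_pow, ← Real.exp_nat_mul]
  have : Real.exp ((4:ℕ) * (79/4)) = Real.exp 1 ^ 79 := by rw [← Real.exp_nat_mul]; norm_num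
  rw [this]
  calc 1 < (16 * mm) ^ 4 * 2.7182818283 ^ 79 := by unfold mm; norm_num
    _ ≤ (16 * mm) ^ 4 * Real.exp 1 ^ 79 := by
        have := Real.exp_one_gt_d9.le
        gcongr

lemma num3 : 16 * (34 ^ 5 * 33 ^ 6 / 15 ^ 5) ≤ Real.exp (223/8) := by
  have hp : (0:ℝ) ≤ 16 * (34 ^ 5 * 33 ^ 6 / 15 ^ 5) := by positivity
  rw [← pow_le_pow_iff_left₀ hp (Real.exp_pos _).le (n := 8) (by norm_num), ← Real.exp_nat_mul]
  have : Real.exp ((8:ℕ) * (223/8)) = Real.exp 1 ^ 223 := by rw [← Real.exp_nat_mul]; norm_num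
  rw [this]
  calc _ ≤ (2.7182818283 : ℝ) ^ 223 := by norm_num
    _ ≤ Real.exp 1 ^ 223 := by
        have := Real.exp_one_gt_d9.le
        gcongr

lemma main_seq : ∀ᶠ n : ℕ in atTop, ∃ P Q : ℤ, Real.exp (-(48/5) * n) ≤ P - Q * (-19 * KK 1) ∧
    P - Q * (-19 * KK 1) ≤ Real.exp (-(73/8) * n) ∧ |(Q : ℝ)| ≤ Real.exp (305/8 * n) := by
  have hMM : 0 < MM := by unfold MM; positivity
  have hmm : 0 < mm := by unfold mm; positivity
  have t1 : Tendsto (fun n : ℕ => 38 * (16 * MM * Real.exp (155/8)) ^ n) atTop (𝓝 0) := by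
    rw [← mul_zero (38:ℝ)]
    exact (tendsto_pow_atTop_nhds_zero_of_lt_one (by positivity) num1).const_mul _
  have t2 : Tendsto (fun n : ℕ => 1/50 * (16 * mm * Real.exp (79/4)) ^ n) atTop atTop :=
    (tendsto_pow_atTop_atTop_of_one_lt num2).const_mul_atTop (by norm_num)
  filter_upwards [ratio_asymp, t1.eventually (gt_mem_nhds one_pos), t2.eventually_ge_atTop 1,
    eventually_ge_atTop 1000] with n ⟨g, hg, hg1, hg2⟩ h1 h2 hn
  obtain ⟨P, Q, hE, hQ⟩ := main_form n hn
  rw [hg] at hE hQ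
  have e16 : (2:ℝ) ^ (4 * n) = 16 ^ n := by rw [pow_mul]; norm_num
  rw [e16] at hE hQ
  refine ⟨19 * P, Q, ?_, ?_, ?_⟩
  · have e : ((19 * P : ℤ) : ℝ) - Q * (-19 * KK 1) = 19 * (16 ^ n * Real.exp g * JJ (5 * n) (6 * n) (5 * n)) := by
      rw [hE]; push_cast; ring
    rw [e]
    have hJ := JJ_low n
    have hgg : Real.exp (79/4) ^ n * Real.exp (-(48/5) * n) ≤ Real.exp g := by
      rw [← Real.exp_nat_mul, ← Real.exp_add]
      apply Real.exp_le_exp.mpr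
      have : (0:ℝ) ≤ n := by positivity
      linarith
    calc Real.exp (-(48/5) * n) = 1 * Real.exp (-(48/5) * n) := (one_mul _).symm
      _ ≤ (1/50 * (16 * mm * Real.exp (79/4)) ^ n) * Real.exp (-(48/5) * n) := by gcongr
      _ = 19 * (16 ^ n * (Real.exp (79/4) ^ n * Real.exp (-(48/5) * n)) * (1/950 * mm ^ n)) := by
        rw [mul_pow, mul_pow]; ring
      _ ≤ _ := by gcongr
  · have e : ((19 * P : ℤ) : ℝ) - Q * (-19 * KK 1) = 19 * (16 ^ n * Real.exp g * JJ (5 * n) (6 * n) (5 * n)) := by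
      rw [hE]; push_cast; ring
    rw [e]
    have hJ := JJ_up n
    have hJ0 := (JJ_pos (5 * n) (6 * n) (5 * n)).le
    have hgg : Real.exp g ≤ Real.exp (155/8) ^ n * Real.exp (-(73/8) * n) := by
      rw [← Real.exp_nat_mul, ← Real.exp_add]
      apply Real.exp_le_exp.mpr
      linarith
    calc _ ≤ 19 * (16 ^ n * (Real.exp (155/8) ^ n * Real.exp (-(73/8) * n)) * (2 * MM ^ n)) := by gcongr
      _ = (38 * (16 * MM * Real.exp (155/8)) ^ n) * Real.exp (-(73/8) * n) := by
        rw [mul_pow, mul_pow]; ring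
      _ ≤ 1 * Real.exp (-(73/8) * n) := by gcongr
      _ = _ := one_mul _
  · refine hQ.trans ?_
    have hgg : Real.exp g ≤ Real.exp (41/4) ^ n := by
      rw [← Real.exp_nat_mul]
      apply Real.exp_le_exp.mpr
      linarith
    calc (16:ℝ) ^ n * Real.exp g * (34 ^ 5 * 33 ^ 6 / 15 ^ 5) ^ n ≤ 16 ^ n * Real.exp (41/4) ^ n * (34 ^ 5 * 33 ^ 6 / 15 ^ 5) ^ n := by gcongr
      _ = (16 * (34 ^ 5 * 33 ^ 6 / 15 ^ 5)) ^ n * Real.exp (41/4) ^ n := by rw [mul_pow]; ring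
      _ ≤ Real.exp (223/8) ^ n * Real.exp (41/4) ^ n := by
        have := num3
        gcongr
      _ = _ := by
        rw [← Real.exp_nat_mul, ← Real.exp_nat_mul, ← Real.exp_add]; congr 1; ring

theorem irrationality_measure_alpha_5 :
    ∀ κ : ℝ, κ > 5.23163 →
      {pq : ℤ × ℕ+ |
        |Real.sqrt 19 * Real.log ((Real.sqrt 19 - 1) / (Real.sqrt 19 + 1)) -
            (pq.1 : ℝ) / ((pq.2 : ℕ) : ℝ)| <
          ((pq.2 : ℕ) : ℝ) ^ (-κ)}.Finite := by
  intro κ hκ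
  obtain ⟨N0, hN0⟩ := eventually_atTop.mp main_seq
  obtain ⟨B, hB⟩ := irr_meas (-19 * KK 1) (48/5) (73/8) (305/8) κ (by norm_num) (by norm_num) (by norm_num)
    (by norm_num at hκ ⊢; linarith) (by norm_num at hκ ⊢; linarith) N0 hN0
  have hf := fin_of_bound (-19 * KK 1) κ B (by norm_num at hκ; linarith) hB
  rw [KK1_eq]
  refine Set.Finite.of_finite_image (f := fun x : ℤ × ℕ+ => ((x.1, (x.2 : ℕ)) : ℤ × ℕ)) (hf.subset ?_) ?_
  · rintro _ ⟨⟨p, q⟩, h, rfl⟩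
    exact ⟨q.pos, h⟩
  · rintro ⟨p, q⟩ _ ⟨p', q'⟩ _ h
    simp only [Prod.mk.injEq, PNat.coe_inj] at h
    rw [h.1, h.2]
end

section
/- The number α₁₀ = √21 · ln((√21 − 1)/(√21 + 1)) has irrationality measure at most 3.45357; that is, for every real κ > 3.45357, there exist only finitely many pairs (p, q) with p ∈ ℤ and q a positive integer such that |α₁₀ − p/q| < q^(−κ). -/
section Helpers

open MeasureTheory Filter Topology Set

noncomputable def pK (T w : ℝ) : ℝ := ∫ t in (0:ℝ)..T, 2 * (1 - t / T) * Real.cos (t * w)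

lemma pK_formula {T w : ℝ} (hT : 0 < T) (hw : w ≠ 0) :
    pK T w = 2 * (1 - Real.cos (T * w)) / (T * w ^ 2) := by
  have h : ∀ t ∈ uIcc 0 T, HasDerivAt (fun t : ℝ => 2 * (1 - t / T) * Real.sin (t * w) / w
      - 2 * Real.cos (t * w) / (T * w ^ 2)) (2 * (1 - t / T) * Real.cos (t * w)) t := by
    intro t _
    have h1 : HasDerivAt (fun t : ℝ => t * w) w t := by simpa using (hasDerivAt_id t).mul_const w
    have h2 : HasDerivAt (fun t : ℝ => 2 * (1 - t / T)) (2 * (-(1 / T))) t := by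
      simpa using (((hasDerivAt_id t).div_const T).const_sub 1).const_mul 2
    have h3 := ((h2.mul h1.sin).div_const w).sub ((h1.cos.const_mul 2).div_const (T * w ^ 2))
    refine HasDerivAt.congr_deriv h3 ?_
    field_simp
    ring
  rw [pK, intervalIntegral.integral_eq_sub_of_hasDerivAt h]
  · simp
    field_simp
    ring
  · apply Continuous.intervalIntegrable
    fun_prop

lemma pK_nonneg {T : ℝ} (w : ℝ) (hT : 0 < T) : 0 ≤ pK T w := by
  rcases eq_or_ne w 0 with rfl | hw
  · apply intervalIntegral.integral_nonneg hT.le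
    intro t ht
    have : t / T ≤ 1 := (div_le_one hT).2 ht.2
    simp; linarith
  · rw [pK_formula hT hw]
    have := Real.cos_le_one (T * w)
    apply div_nonneg <;> [linarith; positivity]

lemma pK_le {T w : ℝ} (hT : 0 < T) (hw : w ≠ 0) : pK T w ≤ 4 / (T * w ^ 2) := by
  rw [pK_formula hT hw]
  have := Real.neg_one_le_cos (T * w)
  gcongr
  linarith

lemma pK_int {T : ℝ} (hT : 0 < T) : ∫ t in (0:ℝ)..T, 2 * (1 - t / T) = T := by
  have h : ∀ t ∈ uIcc 0 T, HasDerivAt (fun t : ℝ => 2 * t - t ^ 2 / T) (2 * (1 - t / T)) t := by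
    intro t _
    have := ((hasDerivAt_id t).const_mul 2).sub (((hasDerivAt_id t).pow 2).div_const T)
    refine HasDerivAt.congr_deriv this ?_
    simp
    ring
  rw [intervalIntegral.integral_eq_sub_of_hasDerivAt h]
  · field_simp; ring
  · apply Continuous.intervalIntegrable
    fun_prop

lemma pK_le' {T w : ℝ} (hT : 0 < T) : pK T w ≤ T := by
  conv_rhs => rw [← pK_int hT]
  apply intervalIntegral.integral_mono_on hT.le
  · apply Continuous.intervalIntegrable
    fun_prop
  · apply Continuous.intervalIntegrable
    fun_prop
  · intro t ht
    have : t / T ≤ 1 := (div_le_one hT).2 ht.2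
    have := Real.cos_le_one (t * w)
    nlinarith

lemma pK_ge {T w : ℝ} (hT : 0 < T) (hw : |w| ≤ 1 / T) : T / 2 ≤ pK T w := by
  have : T / 2 = ∫ t in (0:ℝ)..T, 2 * (1 - t / T) * (1/2) := by
    rw [intervalIntegral.integral_mul_const, pK_int hT]; ring
  rw [this]
  apply intervalIntegral.integral_mono_on hT.le
  · apply Continuous.intervalIntegrable
    fun_prop
  · apply Continuous.intervalIntegrable
    fun_prop
  · intro t ht
    have h1 : t / T ≤ 1 := (div_le_one hT).2 ht.2
    have h2 : |t * w| ≤ 1 := by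
      rw [abs_mul, abs_of_nonneg ht.1]
      calc t * |w| ≤ T * (1 / T) := by gcongr; exact ht.2
        _ = 1 := by field_simp
    have h3 : 1/2 ≤ Real.cos (t * w) := by
      have := Real.one_sub_sq_div_two_le_cos (x := t * w)
      have : (t*w)^2 ≤ 1 := by rw [← sq_abs]; exact pow_le_one₀ (abs_nonneg _) h2
      linarith
    apply mul_le_mul_of_nonneg_left h3
    linarith

lemma pK_cont (T : ℝ) : Continuous (pK T) := by
  unfold pK
  apply intervalIntegral.continuous_parametric_intervalIntegral_of_continuous'
  fun_prop

lemma pK_bound {T : ℝ} (w : ℝ) (hT : 0 < T) : pK T w ≤ (T + 4 / T) * (1 + w ^ 2)⁻¹ := by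
  rw [← div_eq_mul_inv, le_div_iff₀ (by positivity)]
  have h1 := pK_le' (w := w) hT
  have : pK T w * w ^ 2 ≤ 4 / T := by
    rcases eq_or_ne w 0 with rfl | hw
    · simp; positivity
    · have := pK_le hT hw
      rw [le_div_iff₀ (by positivity)] at this
      rw [le_div_iff₀ hT]; linarith
  linarith

lemma pK_integrable {T : ℝ} (hT : 0 < T) : Integrable (pK T) := by
  apply (integrable_inv_one_add_sq.const_mul (T + 4 / T)).mono' (pK_cont T).aestronglyMeasurable
  filter_upwards with w
  rw [Real.norm_of_nonneg (pK_nonneg w hT)]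
  exact pK_bound w hT

/-- Tauberian step -/
lemma taub {B : ℝ → ℝ} {C : ℝ} (hBm : Measurable B) (hB : ∀ u, |B u| ≤ C)
    (hlim : ∀ T > 0, Tendsto (fun v => ∫ u in Ioi (0:ℝ), B u * pK T (v - u)) atTop (𝓝 0))
    {η h : ℝ} (hη : 0 < η) (hh : 0 < h) :
    ∀ᶠ v in atTop, ¬ (∀ u, |u - v| ≤ h → η ≤ B u) := by
  have hC : 0 ≤ C := (abs_nonneg _).trans (hB 0)
  -- choose T
  obtain ⟨T, hT0, hTh, hTC⟩ : ∃ T : ℝ, 0 < T ∧ 1 / T ≤ h ∧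
      C * (4 / T) * (1 + 1 / h ^ 2) * Real.pi ≤ η / 2 := by
    have h0 : Tendsto (fun T : ℝ => T⁻¹) atTop (𝓝 0) := tendsto_inv_atTop_zero
    have h1 : ∀ᶠ T : ℝ in atTop, T⁻¹ ≤ h := h0.eventually_le_const hh
    have h2 : Tendsto (fun T : ℝ => T⁻¹ * (C * 4 * (1 + 1 / h ^ 2) * Real.pi)) atTop (𝓝 0) := by
      have := h0.mul_const (C * 4 * (1 + 1 / h ^ 2) * Real.pi)
      rwa [zero_mul] at this
    have h3 := h2.eventually_le_const (half_pos hη)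
    obtain ⟨T, hT⟩ := (h1.and (h3.and (eventually_gt_atTop 0))).exists
    refine ⟨T, hT.2.2, by simpa using hT.1, ?_⟩
    refine le_trans (le_of_eq ?_) hT.2.1
    ring
  filter_upwards [(hlim T hT0).eventually_lt_const (half_pos hη), eventually_gt_atTop (1 / T)]
    with v hv hvT hcon
  have hpi : ∫ u : ℝ, (1 + (v - u) ^ 2)⁻¹ = Real.pi := by
    rw [integral_sub_left_eq_self (fun x : ℝ => (1 + x ^ 2)⁻¹) volume v]
    exact integral_univ_inv_one_add_sq
  have hint1 : Integrable (fun u : ℝ => (1 + (v - u) ^ 2)⁻¹) :=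
    (integrable_inv_one_add_sq).comp_sub_left v
  have hintK : Integrable (fun u : ℝ => pK T (v - u)) := (pK_integrable hT0).comp_sub_left v
  have hintB : Integrable (fun u : ℝ => B u * pK T (v - u)) :=
    hintK.bdd_mul hBm.aestronglyMeasurable (ae_of_all _ hB)
  set D := C * (4 / T) * (1 + 1 / h ^ 2) with hD
  have hD0 : 0 ≤ D := by positivity
  set S := Icc (v - 1 / T) (v + 1 / T) with hS
  have hind : Integrable (S.indicator (fun _ => η * (T / 2))) := by
    rw [integrable_indicator_iff measurableSet_Icc]
    exact integrableOn_const (by simp)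
  have key : ∀ u, S.indicator (fun _ => η * (T / 2)) u - D * (1 + (v - u) ^ 2)⁻¹
      ≤ B u * pK T (v - u) := by
    intro u
    have hn : 0 ≤ D * (1 + (v - u) ^ 2)⁻¹ := by positivity
    by_cases hu : u ∈ S
    · rw [indicator_of_mem hu]
      have h1 : |u - v| ≤ 1 / T := by rw [abs_le]; constructor <;> linarith [hu.1, hu.2]
      have h2 := hcon u (h1.trans hTh)
      have h3 := pK_ge hT0 (w := v - u) (by rwa [abs_sub_comm])
      have : η * (T / 2) ≤ B u * pK T (v - u) := by
        apply mul_le_mul h2 h3 (by positivity) (by linarith)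
      linarith
    · rw [indicator_of_notMem hu, zero_sub]
      by_cases hu2 : |u - v| ≤ h
      · have := mul_nonneg (hη.le.trans (hcon u hu2)) (pK_nonneg (v - u) hT0)
        linarith
      · push Not at hu2
        have hne : v - u ≠ 0 := by
          intro h0
          rw [abs_sub_comm, h0, abs_zero] at hu2
          linarith
        have h1 := pK_le hT0 hne
        have h2 : 4 / (T * (v - u) ^ 2) ≤ (4 / T) * (1 + 1 / h ^ 2) * (1 + (v - u) ^ 2)⁻¹ := by
          have h4 : h ^ 2 ≤ (v - u) ^ 2 := by
            rw [← sq_abs (v - u), abs_sub_comm]; gcongr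
          have h5 : 0 < (v - u) ^ 2 := by positivity
          have h6 : 1 / (v - u) ^ 2 ≤ (1 + 1 / h ^ 2) * (1 + (v - u) ^ 2)⁻¹ := by
            rw [← div_eq_mul_inv, div_le_div_iff₀ h5 (by positivity)]
            have : 1 ≤ 1 / h ^ 2 * (v - u) ^ 2 := by
              rw [one_div, inv_mul_eq_div, le_div_iff₀ (by positivity)]; linarith
            linarith
          calc 4 / (T * (v - u) ^ 2) = 4 / T * (1 / (v - u) ^ 2) := by field_simp
            _ ≤ 4 / T * ((1 + 1 / h ^ 2) * (1 + (v - u) ^ 2)⁻¹) := by gcongr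
            _ = _ := by ring
        have h3 : -(C * pK T (v - u)) ≤ B u * pK T (v - u) := by
          have := (abs_le.1 (hB u)).1
          nlinarith [pK_nonneg (v - u) hT0]
        have h4 : C * pK T (v - u) ≤ D * (1 + (v - u) ^ 2)⁻¹ := by
          calc C * pK T (v - u) ≤ C * ((4 / T) * (1 + 1 / h ^ 2) * (1 + (v - u) ^ 2)⁻¹) := by
                gcongr; exact h1.trans h2
            _ = _ := by rw [hD]; ring
        linarith
  have h1 : ∫ u in Ioi (0:ℝ), (S.indicator (fun _ => η * (T / 2)) u - D * (1 + (v - u) ^ 2)⁻¹)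
      ≤ ∫ u in Ioi (0:ℝ), B u * pK T (v - u) :=
    integral_mono ((hind.sub (hint1.const_mul D)).integrableOn) hintB.integrableOn key
  rw [integral_sub hind.integrableOn (hint1.const_mul D).integrableOn] at h1
  have h2 : ∫ u in Ioi (0:ℝ), S.indicator (fun _ => η * (T / 2)) u = η := by
    rw [setIntegral_indicator measurableSet_Icc, inter_eq_right.2]
    · rw [setIntegral_const]
      simp only [Measure.real, Real.volume_Icc, smul_eq_mul]
      rw [ENNReal.toReal_ofReal]
      · field_simp; ring
      · have : 0 < 1 / T := by positivity
        linarith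
    · intro x hx
      simp only [mem_Ioi]
      linarith [hx.1]
  have h3 : ∫ u in Ioi (0:ℝ), D * (1 + (v - u) ^ 2)⁻¹ ≤ D * Real.pi := by
    rw [integral_const_mul]
    gcongr
    rw [← hpi]
    apply setIntegral_le_integral hint1
    filter_upwards with u
    positivity
  linarith


noncomputable def pA (u : ℝ) : ℝ := Real.exp (-u) * Chebyshev.psi (Real.exp u)
noncomputable def pB (u : ℝ) : ℝ := pA u - 1

lemma pA_nonneg (u : ℝ) : 0 ≤ pA u := mul_nonneg (Real.exp_pos _).le (Chebyshev.psi_nonneg _)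

lemma pA_le (u : ℝ) : pA u ≤ 6 := by
  have h := Chebyshev.psi_le_const_mul_self (Real.exp_pos u).le
  have h4 : Real.log 4 ≤ 2 := by
    rw [show (4:ℝ) = 2 ^ 2 by norm_num, Real.log_pow]
    have := Real.log_two_lt_d9
    push_cast; linarith
  calc pA u ≤ Real.exp (-u) * ((Real.log 4 + 4) * Real.exp u) := by
        unfold pA; gcongr
    _ = (Real.log 4 + 4) * (Real.exp (-u) * Real.exp u) := by ring
    _ = Real.log 4 + 4 := by rw [← Real.exp_add]; simp
    _ ≤ 6 := by linarith

lemma pB_abs (u : ℝ) : |pB u| ≤ 6 := by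
  rw [abs_le]; unfold pB
  constructor <;> linarith [pA_le u, pA_nonneg u]

lemma pB_meas : Measurable pB := by
  unfold pB pA
  have : Measurable Chebyshev.psi := Chebyshev.psi_mono.measurable
  have h2 := this.comp Real.measurable_exp
  fun_prop

noncomputable abbrev pAux (s : ℂ) : ℂ :=
  ArithmeticFunction.vonMangoldt.LFunctionResidueClassAux (1 : ZMod 1) s

lemma pAux_eq {s : ℂ} (hs : 1 < s.re) :
    LSeries (fun n => (ArithmeticFunction.vonMangoldt n : ℂ)) s = pAux s + 1 / (s - 1) := by
  have h := ArithmeticFunction.vonMangoldt.eqOn_LFunctionResidueClassAux (q := 1) (a := 1)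
    isUnit_one hs
  have h2 : ArithmeticFunction.vonMangoldt.residueClass (1 : ZMod 1)
      = fun n => ArithmeticFunction.vonMangoldt n := by
    ext n
    simp [ArithmeticFunction.vonMangoldt.residueClass, Set.indicator]
    intro hn
    exact (hn (Subsingleton.elim _ _)).elim
  simp only [h2] at h
  simp only [pAux]
  rw [h]
  simp

lemma laplace1 {s : ℂ} (hs : 1 < s.re) :
    ∫ u in Ioi (0:ℝ), (pA u : ℂ) * Complex.exp (-(s - 1) * u) = (pAux s + 1 / (s - 1)) / s := by
  have hs0 : s ≠ 0 := by rintro rfl; simp at hs; linarith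
  have hO : (fun n : ℕ ↦ ∑ k ∈ Finset.Icc 1 n, ArithmeticFunction.vonMangoldt k)
      =O[atTop] fun n ↦ (n : ℝ) ^ (1:ℝ) := by
    apply Asymptotics.IsBigO.of_bound (Real.log 4 + 4)
    filter_upwards with n
    have h := Chebyshev.psi_le_const_mul_self (x := n) (by positivity)
    rw [Real.rpow_one, Real.norm_of_nonneg (Finset.sum_nonneg fun _ _ => by simp)]
    simp only [Chebyshev.psi, Nat.floor_natCast] at h
    rw [Real.norm_of_nonneg (by positivity)]
    exact h
  have h1 := LSeries_eq_mul_integral_of_nonneg (fun n => ArithmeticFunction.vonMangoldt n)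
    zero_le_one hs hO (fun n => by simp)
  rw [pAux_eq hs] at h1
  rw [h1, mul_div_cancel_left₀ _ hs0]
  have himg : Real.exp '' Ioi 0 = Ioi 1 := by
    ext x
    simp only [mem_image, mem_Ioi]
    constructor
    · rintro ⟨u, hu, rfl⟩; exact Real.one_lt_exp_iff.2 hu
    · intro hx; exact ⟨Real.log x, Real.log_pos hx, Real.exp_log (by linarith)⟩
  rw [← himg, integral_image_eq_integral_abs_deriv_smul measurableSet_Ioi
    (fun x _ => (Real.hasDerivAt_exp x).hasDerivWithinAt) Real.exp_injective.injOn]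
  apply setIntegral_congr_fun measurableSet_Ioi
  intro u _
  simp only
  rw [abs_of_pos (Real.exp_pos u)]
  have h2 : ∑ k ∈ Finset.Icc 1 ⌊Real.exp u⌋₊, ((ArithmeticFunction.vonMangoldt k : ℝ) : ℂ)
      = (Chebyshev.psi (Real.exp u) : ℂ) := by
    simp only [Chebyshev.psi]; push_cast; rfl
  rw [h2, pA, Complex.real_smul]
  have h3 : ((Real.exp u : ℝ) : ℂ) ^ (-(s + 1)) = Complex.exp (-(s+1) * u) := by
    rw [Complex.cpow_def_of_ne_zero (by simp [Complex.ofReal_exp, Complex.exp_ne_zero]),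
      ← Complex.ofReal_log (Real.exp_pos u).le, Real.log_exp, mul_comm]
  rw [h3]
  push_cast
  rw [show Complex.exp (-↑u) * (Chebyshev.psi (Real.exp u) : ℂ) * Complex.exp (-(s - 1) * ↑u)
    = (Chebyshev.psi (Real.exp u) : ℂ) * (Complex.exp (-↑u) * Complex.exp (-(s - 1) * ↑u)) by ring,
    show Complex.exp ↑u * ((Chebyshev.psi (Real.exp u) : ℂ) * Complex.exp (-(s + 1) * ↑u))
    = (Chebyshev.psi (Real.exp u) : ℂ) * (Complex.exp (↑u) * Complex.exp (-(s + 1) * ↑u)) by ring,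
    ← Complex.exp_add, ← Complex.exp_add]
  congr 2
  ring

lemma pexp_int {s : ℂ} (hs : 1 < s.re) {f : ℝ → ℝ} (hf : Measurable f) {C : ℝ}
    (hC : ∀ u, |f u| ≤ C) :
    IntegrableOn (fun u : ℝ => (f u : ℂ) * Complex.exp (-(s - 1) * u)) (Ioi 0) := by
  have h1 : IntegrableOn (fun u : ℝ => Complex.exp (-(s - 1) * u)) (Ioi 0) :=
    integrableOn_exp_mul_complex_Ioi (by simp; linarith) 0
  exact h1.bdd_mul (c := C) (Complex.measurable_ofReal.comp hf).aestronglyMeasurable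
    (ae_of_all _ (by intro u; simpa using hC u))

lemma laplace2 {s : ℂ} (hs : 1 < s.re) :
    ∫ u in Ioi (0:ℝ), (pB u : ℂ) * Complex.exp (-(s - 1) * u) = (pAux s - 1) / s := by
  have hs0 : s ≠ 0 := by rintro rfl; simp at hs; linarith
  have hs1 : s - 1 ≠ 0 := by
    intro h; rw [sub_eq_zero] at h; rw [h] at hs; simp at hs
  have hA : Measurable pA := by
    have : pA = fun u => pB u + 1 := by ext u; simp [pB]
    rw [this]; exact pB_meas.add_const 1
  have h2 : ∫ u in Ioi (0:ℝ), Complex.exp (-(s - 1) * u) = 1 / (s - 1) := by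
    rw [integral_exp_mul_complex_Ioi (by simp; linarith)]
    simp
    rw [← neg_sub s 1, neg_div_neg_eq, one_div]
  have h3 := pexp_int hs hA (C := 6) (fun u => by rw [abs_of_nonneg (pA_nonneg u)]; exact pA_le u)
  have h4 : IntegrableOn (fun u : ℝ => Complex.exp (-(s - 1) * u)) (Ioi 0) :=
    integrableOn_exp_mul_complex_Ioi (by simp; linarith) 0
  have : ∀ u : ℝ, (pB u : ℂ) * Complex.exp (-(s - 1) * u)
    = (pA u : ℂ) * Complex.exp (-(s - 1) * u) - Complex.exp (-(s - 1) * u) := by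
    intro u; simp only [pB]; push_cast; ring
  simp_rw [this]
  rw [integral_sub h3 h4, laplace1 hs, h2]
  field_simp
  ring


noncomputable def pG (s : ℂ) : ℂ := (pAux s - 1) / s

lemma pG_cont : ContinuousOn pG {s | 1 ≤ s.re} := by
  unfold pG
  apply ContinuousOn.div
  · exact (ArithmeticFunction.vonMangoldt.continuousOn_LFunctionResidueClassAux (1 : ZMod 1)).sub
      continuousOn_const
  · exact continuousOn_id
  · intro s hs h
    subst h
    simp at hs
    linarith

lemma pG_re {ε : ℝ} (hε : 0 < ε) (t v : ℝ) :
    (Complex.exp (t * v * Complex.I) * pG (1 + ε + t * Complex.I)).re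
     = ∫ u in Ioi (0:ℝ), pB u * Real.exp (-ε * u) * Real.cos (t * (v - u)) := by
  have hs : 1 < (1 + ε + t * Complex.I : ℂ).re := by simp [hε]
  rw [pG, ← laplace2 hs, ← integral_const_mul]
  have hint := (pexp_int hs pB_meas pB_abs).const_mul (Complex.exp (t * v * Complex.I))
  have := (Complex.reCLM.integral_comp_comm hint)
  simp only [Complex.reCLM_apply] at this
  rw [← this]
  apply setIntegral_congr_fun measurableSet_Ioi
  intro u _
  simp only
  rw [mul_left_comm, ← Complex.exp_add, Complex.re_ofReal_mul, Complex.exp_re]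
  simp
  rw [mul_assoc]
  congr 3
  ring

lemma pfub {T ε : ℝ} (hT : 0 < T) (hε : 0 < ε) (v : ℝ) :
    ∫ t in (0:ℝ)..T, 2 * (1 - t / T) *
      (Complex.exp (t * v * Complex.I) * pG (1 + ε + t * Complex.I)).re
    = ∫ u in Ioi (0:ℝ), pB u * Real.exp (-ε * u) * pK T (v - u) := by
  simp_rw [pG_re hε, pK, ← integral_const_mul, intervalIntegral.integral_of_le hT.le,
    ← integral_const_mul]
  rw [integral_integral_swap]
  · congr 1; ext u; congr 1; ext t; ring
  · have h1 : Integrable (fun z : ℝ × ℝ => (12:ℝ) * Real.exp (-ε * z.2))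
        ((volume.restrict (Ioc 0 T)).prod (volume.restrict (Ioi 0))) := by
      apply Integrable.mul_prod (f := fun _ : ℝ => (12:ℝ)) (g := fun u => Real.exp (-ε * u))
      · exact integrable_const _
      · exact integrableOn_exp_mul_Ioi (by linarith) 0
    apply h1.mono'
    · apply Measurable.aestronglyMeasurable
      have := pB_meas
      unfold Function.uncurry
      fun_prop
    · rw [Measure.prod_restrict]
      filter_upwards [self_mem_ae_restrict (measurableSet_Ioc.prod measurableSet_Ioi)] with z hz
      obtain ⟨⟨h1, h2⟩, h3⟩ := hz
      simp only [Function.uncurry, norm_mul, Real.norm_eq_abs, Real.abs_exp]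
      have h4 : |1 - z.1 / T| ≤ 1 := by
        have : z.1 / T ≤ 1 := (div_le_one hT).2 h2
        have : 0 ≤ z.1 / T := by positivity
        rw [abs_le]; constructor <;> linarith
      have h5 := pB_abs z.2
      have h6 := Real.abs_cos_le_one (z.1 * (v - z.2))
      calc |(2:ℝ)| * |1 - z.1 / T| * (|pB z.2| * Real.exp (-ε * z.2) * |Real.cos (z.1 * (v - z.2))|)
          ≤ 2 * 1 * (6 * Real.exp (-ε * z.2) * 1) := by
            rw [abs_two]; gcongr
        _ = _ := by ring

lemma plim {T : ℝ} (hT : 0 < T) (v : ℝ) :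
    ∫ t in (0:ℝ)..T, 2 * (1 - t / T) *
      (Complex.exp (t * v * Complex.I) * pG (1 + t * Complex.I)).re
    = ∫ u in Ioi (0:ℝ), pB u * pK T (v - u) := by
  have hR : Tendsto (fun ε : ℝ => ∫ u in Ioi (0:ℝ), pB u * Real.exp (-ε * u) * pK T (v - u))
      (𝓝[>] 0) (𝓝 (∫ u in Ioi (0:ℝ), pB u * pK T (v - u))) := by
    apply tendsto_integral_filter_of_dominated_convergence (fun u => 6 * pK T (v - u))
    · filter_upwards with ε
      apply Measurable.aestronglyMeasurable
      have := pB_meas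
      have := (pK_cont T).measurable
      fun_prop
    · filter_upwards [self_mem_nhdsWithin] with ε hε
      filter_upwards [self_mem_ae_restrict measurableSet_Ioi] with u hu
      have h1 : Real.exp (-ε * u) ≤ 1 := by
        rw [Real.exp_le_one_iff]
        have := mul_pos (mem_Ioi.1 hε) (mem_Ioi.1 hu)
        linarith
      rw [norm_mul, norm_mul, Real.norm_of_nonneg (pK_nonneg _ hT), Real.norm_eq_abs,
        Real.norm_eq_abs, Real.abs_exp]
      have := pK_nonneg (v - u) hT
      calc |pB u| * Real.exp (-ε * u) * pK T (v - u) ≤ 6 * 1 * pK T (v - u) := by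
            gcongr; exact pB_abs u
        _ = _ := by ring
    · exact (((pK_integrable hT).comp_sub_left v).const_mul 6).integrableOn
    · filter_upwards with u
      have : Continuous (fun ε : ℝ => pB u * Real.exp (-ε * u) * pK T (v - u)) := by fun_prop
      have := (this.tendsto 0).mono_left (nhdsWithin_le_nhds (s := Ioi 0))
      simpa using this
  have hL : Tendsto (fun ε : ℝ => ∫ t in (0:ℝ)..T, 2 * (1 - t / T) *
      (Complex.exp (t * v * Complex.I) * pG (1 + ε + t * Complex.I)).re)
      (𝓝[>] 0) (𝓝 (∫ t in (0:ℝ)..T, 2 * (1 - t / T) *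
      (Complex.exp (t * v * Complex.I) * pG (1 + t * Complex.I)).re)) := by
    have hK : IsCompact ((fun z : ℝ × ℝ => (1 + z.1 + z.2 * Complex.I : ℂ)) ''
        (Icc (0:ℝ) 1 ×ˢ Icc (0:ℝ) T)) := by
      apply (isCompact_Icc.prod isCompact_Icc).image
      fun_prop
    obtain ⟨C, hC⟩ := hK.exists_bound_of_continuousOn (f := pG) (pG_cont.mono (by
      rintro _ ⟨z, hz, rfl⟩
      simp
      exact hz.1.1))
    have hin : ∀ ε : ℝ, 0 ≤ ε → Continuous (fun t : ℝ => pG (1 + ε + t * Complex.I)) := by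
      intro ε hε
      have : ContinuousOn (fun t : ℝ => pG (1 + ε + t * Complex.I)) univ := by
        apply pG_cont.comp (by fun_prop)
        intro t _
        simp [hε]
      exact continuousOn_univ.1 this
    apply intervalIntegral.tendsto_integral_filter_of_dominated_convergence (fun _ => 2 * C)
    · filter_upwards [self_mem_nhdsWithin] with ε hε
      have := hin ε (le_of_lt hε)
      apply Continuous.aestronglyMeasurable
      fun_prop
    · filter_upwards [Ioo_mem_nhdsGT (zero_lt_one' ℝ)] with ε hε
      filter_upwards with t ht
      rw [uIoc_of_le hT.le] at ht
      have h1 := hC (1 + ε + t * Complex.I) ⟨(ε, t), ⟨⟨hε.1.le, hε.2.le⟩, ⟨ht.1.le, ht.2⟩⟩, rfl⟩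
      have h2 : |1 - t / T| ≤ 1 := by
        have : t / T ≤ 1 := (div_le_one hT).2 ht.2
        have : 0 ≤ t / T := div_nonneg ht.1.le hT.le
        rw [abs_le]; constructor <;> linarith
      have h3 : |(Complex.exp (t * v * Complex.I) * pG (1 + ε + t * Complex.I)).re| ≤ C := by
        refine (Complex.abs_re_le_norm _).trans ?_
        rw [norm_mul, ← Complex.ofReal_mul, Complex.norm_exp_ofReal_mul_I, one_mul]
        exact h1
      rw [norm_mul, norm_mul, Real.norm_eq_abs, Real.norm_eq_abs, Real.norm_eq_abs, abs_two]
      calc 2 * |1 - t / T| * _ ≤ 2 * 1 * C := by gcongr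
        _ = _ := by ring
    · simp
    · filter_upwards with t _
      have h0 : Tendsto (fun ε : ℝ => (1 + ε + t * Complex.I : ℂ)) (𝓝[>] 0)
          (𝓝[{s : ℂ | 1 ≤ s.re}] (1 + t * Complex.I)) := by
        apply tendsto_nhdsWithin_of_tendsto_nhds_of_eventually_within
        · have : Continuous (fun ε : ℝ => (1 + ε + t * Complex.I : ℂ)) := by fun_prop
          have := (this.tendsto 0).mono_left (nhdsWithin_le_nhds (s := Ioi 0))
          simpa using this
        · filter_upwards [self_mem_nhdsWithin] with ε hε
          simp
          exact le_of_lt hε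
      have h1 := (pG_cont (1 + t * Complex.I) (by simp)).tendsto.comp h0
      have h2 := (h1.const_mul (Complex.exp (t * v * Complex.I)))
      exact ((Complex.continuous_re.tendsto _).comp h2).const_mul _
  refine tendsto_nhds_unique hL ?_
  refine hR.congr' ?_
  filter_upwards [self_mem_nhdsWithin] with ε hε
  exact (pfub hT hε v).symm

lemma pRL {T : ℝ} (hT : 0 < T) :
    Tendsto (fun v => ∫ u in Ioi (0:ℝ), pB u * pK T (v - u)) atTop (𝓝 0) := by
  have h := Real.tendsto_integral_exp_smul_cocompact
    ((Ioc 0 T).indicator fun t : ℝ => (2 * (1 - t / T) : ℂ) * pG (1 + t * Complex.I))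
  have h1 : Tendsto (fun v : ℝ => -(v / (2 * Real.pi))) atTop (cocompact ℝ) := by
    have : Tendsto (fun v : ℝ => -(v / (2 * Real.pi))) atTop atBot :=
      tendsto_neg_atTop_atBot.comp (tendsto_id.atTop_div_const (by positivity))
    exact this.mono_right atBot_le_cocompact
  have h2 := (Complex.continuous_re.tendsto _).comp (h.comp h1)
  rw [Complex.zero_re] at h2
  refine h2.congr fun v => ?_
  rw [← plim hT v]
  simp only [Function.comp]
  have hc : Continuous (fun t : ℝ => pG (1 + t * Complex.I)) := by
    have : ContinuousOn (fun t : ℝ => pG (1 + t * Complex.I)) univ := by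
      apply pG_cont.comp (by fun_prop)
      intro t _
      simp
    exact continuousOn_univ.1 this
  rw [intervalIntegral.integral_of_le hT.le]
  have h3 : ∀ t : ℝ, (Real.fourierChar (-(t * -(v / (2 * Real.pi)))) •
      (Ioc 0 T).indicator (fun t : ℝ => (2 * (1 - t / T) : ℂ) * pG (1 + t * Complex.I)) t)
      = (Ioc 0 T).indicator (fun t : ℝ => (2 * (1 - t / T) : ℂ) *
        (Complex.exp (t * v * Complex.I) * pG (1 + t * Complex.I))) t := by
    intro t
    by_cases ht : t ∈ Ioc 0 T
    · rw [indicator_of_mem ht, indicator_of_mem ht, Circle.smul_def, Real.fourierChar_apply,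
        smul_eq_mul, mul_left_comm]
      congr 3
      push_cast
      have : (Real.pi : ℂ) ≠ 0 := by exact_mod_cast Real.pi_ne_zero
      field_simp
    · rw [indicator_of_notMem ht, indicator_of_notMem ht, smul_zero]
  simp_rw [h3]
  rw [integral_indicator measurableSet_Ioc]
  have hint : IntegrableOn (fun t : ℝ => (2 * (1 - t / T) : ℂ) *
        (Complex.exp (t * v * Complex.I) * pG (1 + t * Complex.I))) (Ioc 0 T) := by
    apply (Continuous.integrableOn_Icc (by fun_prop)).mono_set Ioc_subset_Icc_self
  have := (Complex.reCLM.integral_comp_comm hint)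
  simp only [Complex.reCLM_apply] at this
  rw [← this]
  congr 1
  ext t
  rw [show (2 * (1 - t / T) : ℂ) = ((2 * (1 - t / T) : ℝ) : ℂ) by push_cast; ring,
    Complex.re_ofReal_mul]

theorem pnt_psi : Tendsto (fun x => Chebyshev.psi x / x) atTop (𝓝 1) := by
  have hmono : ∀ u v, u ≤ v → pA u ≤ pA v * Real.exp (v - u) := by
    intro u v huv
    have := Chebyshev.psi_mono (Real.exp_le_exp.2 huv)
    calc pA u ≤ Real.exp (-u) * Chebyshev.psi (Real.exp v) := by unfold pA; gcongr
      _ = pA v * Real.exp (v - u) := by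
        unfold pA
        rw [show -u = -v + (v - u) by ring, Real.exp_add]; ring
  have hlim := fun (T : ℝ) (hT : T > 0) => pRL hT
  have hlim' : ∀ T > 0, Tendsto (fun v => ∫ u in Ioi (0:ℝ), (-pB u) * pK T (v - u)) atTop (𝓝 0) := by
    intro T hT
    have := (pRL hT).neg
    rw [neg_zero] at this
    refine this.congr fun v => ?_
    rw [← integral_neg]
    congr 1; ext u; ring
  have hA : Tendsto pA atTop (𝓝 1) := by
    rw [tendsto_order]
    constructor
    · -- lower
      intro a ha
      set η := min (1 - a) 1 with hη
      have hη0 : 0 < η := lt_min (by linarith) one_pos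
      have hη1 : η ≤ 1 := min_le_right _ _
      have hηa : a ≤ 1 - η := by have := min_le_left (1 - a) 1; linarith
      have h1 := taub (B := fun u => -pB u) pB_meas.neg (fun u => by rw [abs_neg]; exact pB_abs u)
        hlim' (half_pos hη0) (show 0 < η / 8 by positivity)
      have h2 := (tendsto_atTop_add_const_right atTop (-(η / 8)) tendsto_id).eventually h1
      filter_upwards [h2] with v hv
      by_contra hcon
      push Not at hcon
      apply hv
      intro u hu
      simp only [id] at hu
      rw [abs_le] at hu
      have h3 := hmono u v (by linarith)
      have h4 : Real.exp (v - u) ≤ 1 / (1 - η / 4) := by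
        have h5 : 1 - η / 4 ≤ Real.exp (-(v - u)) := by
          have := Real.add_one_le_exp (-(v - u))
          linarith
        rw [Real.exp_neg] at h5
        rw [le_div_iff₀ (by linarith)]
        have := mul_le_mul_of_nonneg_left h5 (Real.exp_pos (v - u)).le
        rwa [mul_inv_cancel₀ (Real.exp_pos _).ne'] at this
      have h6 : pA u ≤ (1 - η) * (1 / (1 - η / 4)) := by
        refine h3.trans ?_
        apply mul_le_mul (hcon.trans hηa) h4 (Real.exp_pos _).le (by linarith)
      have h7 : (1 - η) * (1 / (1 - η / 4)) ≤ 1 - η / 2 := by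
        rw [mul_one_div, div_le_iff₀ (by linarith)]
        nlinarith
      simp only [pB]
      linarith
    · intro a ha
      set η := min (a - 1) 1 with hη
      have hη0 : 0 < η := lt_min (by linarith) one_pos
      have hη1 : η ≤ 1 := min_le_right _ _
      have hηa : 1 + η ≤ a := by have := min_le_left (a - 1) 1; linarith
      have h1 := taub pB_meas pB_abs hlim (half_pos hη0) (show 0 < η / 8 by positivity)
      have h2 := (tendsto_atTop_add_const_right atTop (η / 8) tendsto_id).eventually h1
      filter_upwards [h2] with v hv
      by_contra hcon
      push Not at hcon
      apply hv
      intro u hu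
      simp only [id] at hu
      rw [abs_le] at hu
      have h3 := hmono v u (by linarith)
      have h5 : 1 - η / 4 ≤ Real.exp (-(u - v)) := by
        have := Real.add_one_le_exp (-(u - v))
        linarith
      have h6 : pA v * Real.exp (-(u - v)) ≤ pA u := by
        calc _ ≤ pA u * Real.exp (u - v) * Real.exp (-(u - v)) := by gcongr
          _ = pA u := by rw [mul_assoc, ← Real.exp_add]; simp
      have h7 : (1 + η) * (1 - η / 4) ≤ pA v * Real.exp (-(u - v)) := by
        apply mul_le_mul (hηa.trans hcon) h5 (by linarith) (pA_nonneg v)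
      simp only [pB]
      nlinarith
  have h1 := hA.comp Real.tendsto_log_atTop
  refine h1.congr' ?_
  filter_upwards [eventually_gt_atTop 0] with x hx
  simp only [Function.comp, pA]
  rw [Real.exp_neg, Real.exp_log hx]
  field_simp

theorem pnt_theta : Tendsto (fun x => Chebyshev.theta x / x) atTop (𝓝 1) := by
  have h1 : Tendsto (fun x => (Chebyshev.psi - Chebyshev.theta) x / x) atTop (𝓝 0) := by
    apply Asymptotics.IsLittleO.tendsto_div_nhds_zero
    apply Chebyshev.isBigO_psi_sub_theta_sqrt.trans_isLittleO
    rw [Asymptotics.isLittleO_iff_tendsto']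
    · have h2 : Tendsto (fun x : ℝ => (√x)⁻¹) atTop (𝓝 0) :=
        tendsto_inv_atTop_zero.comp Real.tendsto_sqrt_atTop
      refine h2.congr fun x => ?_
      rw [Real.sqrt_div_self']
      simp
    · filter_upwards [eventually_gt_atTop 0] with x hx h0
      exact absurd h0 hx.ne'
  have := pnt_psi.sub h1
  rw [sub_zero] at this
  refine this.congr fun x => ?_
  simp only [Pi.sub_apply]
  ring


theorem crit (α Q lam lam' κ : ℝ) (hl : 0 < lam) (hQ : 0 < Q) (hl' : 0 < lam')
    (h1 : 1 + Q / lam < κ) (h2 : (Q + lam') / lam < κ)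
    (H : ∀ᶠ n : ℕ in atTop, ∃ a b : ℤ, |(a : ℝ)| ≤ Real.exp (Q * n) ∧
      Real.exp (-lam' * n) ≤ |a * α - b| ∧ |a * α - b| ≤ Real.exp (-lam * n)) :
    {pq : ℤ × ℕ+ | |α - (pq.1 : ℝ) / (pq.2 : ℝ)| < (pq.2 : ℝ) ^ (-κ)}.Finite := by
  obtain ⟨n0, H⟩ := eventually_atTop.1 H
  have hκ : 0 < κ := by have := div_pos hQ hl; linarith
  -- q bounded
  have key : ∃ B : ℕ, ∀ pq : ℤ × ℕ+, |α - (pq.1 : ℝ) / (pq.2 : ℝ)| < (pq.2 : ℝ) ^ (-κ) →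
      (pq.2 : ℕ) ≤ B := by
    set X := max (lam * n0) (max ((Q * (1 + Real.log 2 / lam) + Real.log 2) / (κ - 1 - Q / lam))
      ((Q + lam') * (1 + Real.log 2 / lam) / (κ - (Q + lam') / lam))) with hX
    refine ⟨⌈Real.exp X⌉₊, ?_⟩
    rintro ⟨p, q⟩ h
    simp only at h ⊢
    have hq1 : (1:ℝ) ≤ (q : ℝ) := by exact_mod_cast q.one_le
    have hq0 : (0:ℝ) < (q : ℝ) := by linarith
    by_contra hcon
    push Not at hcon
    have hqX : Real.exp X < q := lt_of_le_of_lt (Nat.le_ceil _) (by exact_mod_cast hcon)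
    have hlq : X < Real.log q := (Real.lt_log_iff_exp_lt hq0).2 hqX
    have hXa : lam * n0 < Real.log q := lt_of_le_of_lt (le_max_left _ _) hlq
    have hXb : (Q * (1 + Real.log 2 / lam) + Real.log 2) / (κ - 1 - Q / lam) < Real.log q :=
      lt_of_le_of_lt ((le_max_left _ _).trans (le_max_right _ _)) hlq
    have hXc : (Q + lam') * (1 + Real.log 2 / lam) / (κ - (Q + lam') / lam) < Real.log q :=
      lt_of_le_of_lt ((le_max_right _ _).trans (le_max_right _ _)) hlq
    rw [div_lt_iff₀ (by linarith)] at hXb hXc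
    have hlog2 : 0 < Real.log 2 := Real.log_pos (by norm_num)
    have hlogq : 0 ≤ Real.log q := Real.log_nonneg hq1
    set t := (Real.log 2 + Real.log q) / lam with ht
    have ht0 : 0 ≤ t := by positivity
    set n := ⌊t⌋₊ + 1 with hn
    have hn1 : t < n := by rw [hn]; push_cast; exact Nat.lt_floor_add_one t
    have hn2 : (n:ℝ) ≤ t + 1 := by
      rw [hn]; push_cast; have := Nat.floor_le ht0; linarith
    have hnn0 : n0 ≤ n := by
      have : (n0:ℝ) ≤ t := by
        rw [ht, le_div_iff₀ hl]; linarith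
      exact_mod_cast this.trans hn1.le
    obtain ⟨a, b, ha, hb1, hb2⟩ := H n hnn0
    have hqk : (q:ℝ) ^ (-κ) = Real.exp (-κ * Real.log q) := by
      rw [Real.rpow_def_of_pos hq0, mul_comm]
    have hQn : Q * n ≤ Q * (t + 1) := by gcongr
    have hT : lam * t = Real.log 2 + Real.log q := by rw [ht]; field_simp
    have hmul : |(a:ℝ)| * |α - p / q| ≤ Real.exp (Q * n - κ * Real.log q) := by
      rw [sub_eq_add_neg (Q * (n:ℝ)), Real.exp_add, ← neg_mul, ← hqk]
      gcongr
    have hQt : Q * t = Q * Real.log 2 / lam + Q / lam * Real.log q := by rw [ht]; ring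
    by_cases hc : a * p = b * q
    · have hc' : (a:ℝ) * p = b * q := by exact_mod_cast hc
      have e1 : a * α - b = a * (α - p / q) := by
        field_simp; linarith
      rw [e1, abs_mul] at hb1
      have := Real.exp_le_exp.1 (hb1.trans hmul)
      have h3 : lam' * n ≤ lam' * (t + 1) := by gcongr
      have h4 : lam' * t = lam' * Real.log 2 / lam + lam' / lam * Real.log q := by rw [ht]; ring
      have e3 : (Q + lam') * (1 + Real.log 2 / lam) = Q + lam' + Q * Real.log 2 / lam
        + lam' * Real.log 2 / lam := by ring
      have e4 : (Q + lam') / lam = Q / lam + lam' / lam := by ring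
      rw [e3, e4] at hXc
      have e8 : Real.log q * (κ - (Q / lam + lam' / lam)) = κ * Real.log q
        - Q / lam * Real.log q - lam' / lam * Real.log q := by ring
      linarith
    · have hne : (1:ℝ) ≤ |(a:ℝ) * p - b * q| := by
        have : (1:ℤ) ≤ |a * p - b * q| := Int.one_le_abs (sub_ne_zero.2 hc)
        exact_mod_cast this
      have e1 : (a:ℝ) * p - b * q = q * (a * α - b) - q * (a * (α - p / q)) := by
        field_simp; ring
      have e2 : |(a:ℝ) * p - b * q| ≤ q * |a * α - b| + q * (|(a:ℝ)| * |α - p / q|) := by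
        rw [e1]
        refine (abs_sub _ _).trans ?_
        rw [abs_mul, abs_mul, abs_mul (a:ℝ), abs_of_pos hq0]
      have e3 : q * |a * α - b| ≤ 1 / 2 := by
        calc q * |a * α - b| ≤ q * Real.exp (-(Real.log 2 + Real.log q)) := by
              gcongr
              refine hb2.trans (Real.exp_le_exp.2 ?_)
              rw [← hT]; nlinarith
          _ = 1 / 2 := by
              rw [Real.exp_neg, Real.exp_add, Real.exp_log hq0, Real.exp_log (by norm_num)]
              field_simp
      have e4 : Real.exp (-Real.log 2) ≤ q * (|(a:ℝ)| * |α - p / q|) := by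
        rw [Real.exp_neg, Real.exp_log (by norm_num)]; linarith
      have e5 : Real.exp (-Real.log 2) ≤ Real.exp (Real.log q + (Q * n - κ * Real.log q)) := by
        refine e4.trans ?_
        rw [Real.exp_add, Real.exp_log hq0]
        gcongr
      have e6 := Real.exp_le_exp.1 e5
      have e7 : Q * (1 + Real.log 2 / lam) = Q + Q * Real.log 2 / lam := by ring
      rw [e7] at hXb
      have e8 : Real.log q * (κ - 1 - Q / lam) = κ * Real.log q - Real.log q
        - Q / lam * Real.log q := by ring
      linarith
  obtain ⟨B, hB⟩ := key
  have hfin : (⋃ q ∈ {q : ℕ+ | (q:ℕ) ≤ B}, (fun p : ℤ => (p, q)) ''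
      {p : ℤ | |(p:ℝ)| ≤ B * (|α| + 1)}).Finite := by
    apply Set.Finite.biUnion
    · have : (Set.Iic B).Finite := Set.finite_Iic B
      exact this.preimage (PNat.coe_injective.injOn)
    · intro q _
      apply Set.Finite.image
      refine (Set.finite_Icc (-⌈B * (|α| + 1)⌉) ⌈B * (|α| + 1)⌉).subset ?_
      intro p hp
      simp only [mem_setOf_eq] at hp
      have hp2 := abs_le.1 (hp.trans (Int.le_ceil _))
      refine ⟨?_, ?_⟩ <;> [exact_mod_cast hp2.1; exact_mod_cast hp2.2]
  refine hfin.subset ?_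
  rintro ⟨p, q⟩ h
  have hqB := hB _ h
  simp only [mem_setOf_eq] at h hqB
  simp only [mem_iUnion, mem_image, mem_setOf_eq, Prod.mk.injEq]
  refine ⟨q, hqB, p, ?_, rfl, rfl⟩
  have hq1 : (1:ℝ) ≤ (q : ℝ) := by exact_mod_cast q.one_le
  have hq0 : (0:ℝ) < (q : ℝ) := by linarith
  have h3 : (q:ℝ) ^ (-κ) ≤ 1 := Real.rpow_le_one_of_one_le_of_nonpos hq1 (by linarith)
  have h4 : |(p:ℝ) / q| ≤ |α| + 1 := by
    have : (p:ℝ) / q = α - (α - p / q) := by ring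
    rw [this]
    refine (abs_sub _ _).trans ?_
    linarith
  rw [abs_div, abs_of_pos hq0, div_le_iff₀ hq0] at h4
  have : (q:ℝ) ≤ B := by exact_mod_cast hqB
  calc |(p:ℝ)| ≤ (|α| + 1) * q := h4
    _ ≤ (|α| + 1) * B := by gcongr
    _ = _ := by ring


def aU : Finset ℕ := {1, 2, 3, 4, 5, 6, 7, 8, 9, 10, 12, 13, 14, 15, 16, 17}

def aE (u : ℕ) : ℕ := if u ≤ 10 then 1 else 2

def aC (m u p : ℕ) : Prop := u * p ≤ 11 * m ∧ 10 * m < (u + 1 - aE u) * p ∧ 12 * m < (u + aE u) * p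

open Classical in
noncomputable def aS (m : ℕ) : Finset ℕ :=
  (Nat.primesLE (12 * m)).filter (fun p => ∃ u ∈ aU, aC m u p)

noncomputable def aD (m : ℕ) : ℕ := ∏ p ∈ Nat.primesLE (12 * m) \ aS m, p ^ p.log (12 * m)

theorem aC_cong {m u p i j : ℕ} (hu : u ∈ aU) (hp : p.Prime) (h : aC m u p)
    (hij : (i + j) % p = (10 * m) % p) : p ∣ (11 * m).choose i * (11 * m).choose j := by
  have hp0 := hp.pos
  by_contra hcon
  have hi : ¬ p ∣ (11 * m).choose i := fun h => hcon (Dvd.dvd.mul_right h _)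
  have hj : ¬ p ∣ (11 * m).choose j := fun h => hcon (Dvd.dvd.mul_left h _)
  have key : ∀ i, ¬ p ∣ (11 * m).choose i → i % p ≤ (11 * m) % p := by
    intro i hi
    by_contra hlt
    push Not at hlt
    haveI := Fact.mk hp
    have := Choose.choose_modEq_choose_mod_mul_choose_div_nat (p := p) (n := 11 * m) (k := i)
    rw [Nat.choose_eq_zero_of_lt hlt, zero_mul] at this
    exact hi ((Nat.modEq_zero_iff_dvd).1 this)
  have h1 := key i hi
  have h2 := key j hj
  obtain ⟨c1, c2, c3⟩ := h
  have hu' : 1 ≤ u ∧ u ≤ 17 ∧ aE u ≤ u ∧ 11 * (u - aE u) ≤ 10 * u := by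
    clear c1 c2 c3; revert u; simp only [aU, aE]; decide
  obtain ⟨u1, u2, u3, u4⟩ := hu'
  set e := aE u
  have h3 : (11 * m) % p + u * p ≤ 11 * m := by
    have h4 : u ≤ 11 * m / p := (Nat.le_div_iff_mul_le hp0).2 c1
    have h5 := Nat.mod_add_div (11 * m) p
    have h6 : u * p ≤ p * (11 * m / p) := by rw [mul_comm]; gcongr
    omega
  obtain ⟨f, hf⟩ : ∃ f, u = f + e := ⟨u - e, by omega⟩
  have h7 : u + 1 - e = f + 1 := by omega
  rw [h7] at c2
  have h8 : f * p ≤ 10 * m := by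
    have : 11 * (f * p) ≤ 10 * (u * p) := by
      have : 11 * f ≤ 10 * u := by omega
      nlinarith
    omega
  have h9 : (10 * m) % p + f * p = 10 * m := by
    have : 10 * m / p = f := by
      rw [Nat.div_eq_iff hp0]
      constructor
      · exact h8
      · have : f * p + p = (f+1) * p := by ring
        omega
    have h5 := Nat.mod_add_div (10 * m) p
    rw [this, mul_comm p f] at h5
    exact h5
  have h10 : (i % p + j % p) < (10 * m) % p := by
    have e1 : u * p = f * p + e * p := by rw [hf]; ring
    have e2 : (u + e) * p = u * p + e * p := by ring
    omega
  have h11 : (10 * m) % p < p := Nat.mod_lt _ hp0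
  rw [Nat.add_mod, Nat.mod_eq_of_lt (h10.trans h11)] at hij
  omega

theorem aD_dvd {m : ℕ} (hm : 31 ≤ m) {i j k : ℕ}
    (hk : k ≠ 0) (hk2 : k ≤ 12 * m) (hkij : i + j = 10 * m + k ∨ i + j + k = 10 * m) :
    k ∣ aD m * ((11 * m).choose i * (11 * m).choose j) := by
  rw [Nat.dvd_iff_prime_pow_dvd_dvd]
  intro p r hp hr
  have hp0 := hp.pos
  rcases Nat.eq_zero_or_pos r with rfl | hr0
  · simp
  have hple : p ^ r ≤ 12 * m := (Nat.le_of_dvd (Nat.pos_of_ne_zero hk) hr).trans hk2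
  have hp1 : p ≤ p ^ r := Nat.le_self_pow hr0.ne' p
  have hpk : p ∣ k := (dvd_pow_self p hr0.ne').trans hr
  by_cases hS : p ∈ aS m
  · apply Dvd.dvd.mul_left
    simp only [aS, Finset.mem_filter] at hS
    obtain ⟨-, u, hu, hc⟩ := hS
    have h1 : p ∣ (11 * m).choose i * (11 * m).choose j := by
      apply aC_cong hu hp hc
      obtain ⟨c, rfl⟩ := hpk
      rcases hkij with h | h
      · rw [h]; simp
      · rw [← h]; simp
    have hr1 : r < 2 := by
      by_contra h2
      push Not at h2
      have h3 : p ^ 2 ≤ 12 * m := (Nat.pow_le_pow_right hp0 h2).trans hple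
      have hu' : u + aE u ≤ 19 := by
        clear hc; revert u; simp only [aU, aE]; decide
      have h4 := hc.2.2
      have h5 : 12 * m < 19 * p := lt_of_lt_of_le h4 (by gcongr)
      have h6 : 19 < p := by omega
      nlinarith
    obtain rfl : r = 1 := by omega
    simpa using h1
  · apply Dvd.dvd.mul_right
    have h1 : p ∈ Nat.primesLE (12 * m) \ aS m := by
      rw [Finset.mem_sdiff]
      exact ⟨Nat.mem_primesLE.2 ⟨hp1.trans hple, hp⟩, hS⟩
    refine Dvd.dvd.trans ?_ (Finset.dvd_prod_of_mem _ h1)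
    exact pow_dvd_pow _ (Nat.le_log_of_pow_le hp.one_lt hple)

theorem aD_pos (m : ℕ) : 0 < aD m := by
  apply Finset.prod_pos
  intro p hp
  rw [Finset.mem_sdiff, Nat.mem_primesLE] at hp
  exact pow_pos hp.1.2.pos _

theorem aD_log_le (m : ℕ) : Real.log (aD m) ≤ Chebyshev.psi (12 * m) - ∑ p ∈ aS m, Real.log p := by
  have hsub : aS m ⊆ Nat.primesLE (12 * m) := by
    intro p hp
    simp only [aS, Finset.mem_filter] at hp
    exact hp.1
  have h1 := Chebyshev.psi_eq_sum_mul_log_prime (12 * m)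
  push_cast at h1
  rw [h1, ← Finset.sum_sdiff hsub, aD, Nat.cast_prod, Real.log_prod]
  · have : ∑ p ∈ aS m, Real.log p ≤ ∑ p ∈ aS m, (p.log (12 * m) : ℝ) * Real.log p := by
      apply Finset.sum_le_sum
      intro p hp
      have hp := Nat.mem_primesLE.1 (hsub hp)
      have h2 : 1 ≤ p.log (12 * m) := Nat.le_log_of_pow_le hp.2.one_lt (by simpa using hp.1)
      have h3 : (1:ℝ) ≤ p.log (12 * m) := by exact_mod_cast h2
      have h4 : 0 ≤ Real.log p := Real.log_natCast_nonneg p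
      nlinarith
    simp only [Nat.cast_pow, Real.log_pow]
    linarith
  · intro p hp
    rw [Finset.mem_sdiff, Nat.mem_primesLE] at hp
    have := hp.1.2.pos
    positivity

noncomputable def aLo (u : ℕ) : ℝ := max (10 / ((u + 1 - aE u : ℕ) : ℝ)) (12 / ((u + aE u : ℕ):ℝ))

theorem theta_sub {x y : ℝ} (h : x ≤ y) : Chebyshev.theta y - Chebyshev.theta x =
    ∑ p ∈ Finset.Ioc ⌊x⌋₊ ⌊y⌋₊ with p.Prime, Real.log p := by
  have h1 : ⌊x⌋₊ ≤ ⌊y⌋₊ := Nat.floor_mono h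
  rw [Chebyshev.theta, Chebyshev.theta, Finset.sum_filter, Finset.sum_filter, Finset.sum_filter,
    ← Finset.sum_Ioc_consecutive _ (Nat.zero_le _) h1]
  ring

theorem aU_e {u : ℕ} (hu : u ∈ aU) : 1 ≤ u ∧ u ≤ 17 ∧ 1 ≤ aE u ∧ aE u ≤ 2 ∧ aE u ≤ u ∧
    10 * u ≤ 11 * (u + 1 - aE u) ∧ 12 * u ≤ 11 * (u + aE u) ∧ (aE u = 2 → 12 ≤ u) := by
  revert u; simp only [aU, aE]; decide

theorem aLo_le {u : ℕ} (hu : u ∈ aU) : aLo u ≤ 11 / u := by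
  obtain ⟨h1, h2, h3, h4, h5, h6, h7, -⟩ := aU_e hu
  have hu0 : (0:ℝ) < u := by exact_mod_cast h1
  apply max_le
  · have : 0 < u + 1 - aE u := by omega
    rw [div_le_div_iff₀ (by exact_mod_cast this) hu0]
    exact_mod_cast h6
  · have : 0 < u + aE u := by omega
    rw [div_le_div_iff₀ (by exact_mod_cast this) hu0]
    exact_mod_cast h7

theorem mem_aC {m u p : ℕ} (hu : u ∈ aU)
    (hp : p ∈ (Finset.Ioc ⌊aLo u * m⌋₊ ⌊11 / (u:ℝ) * m⌋₊).filter Nat.Prime) : aC m u p := by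
  obtain ⟨h1, h2, h3, h4, h5, h6, h7, -⟩ := aU_e hu
  have hu0 : (0:ℝ) < u := by exact_mod_cast h1
  rw [Finset.mem_filter, Finset.mem_Ioc] at hp
  obtain ⟨⟨hp1, hp2⟩, hp3⟩ := hp
  have hl0 : 0 ≤ aLo u := le_max_of_le_left (by positivity)
  rw [Nat.floor_lt (by positivity)] at hp1
  rw [Nat.le_floor_iff (by positivity)] at hp2
  refine ⟨?_, ?_, ?_⟩
  · rw [div_mul_eq_mul_div, le_div_iff₀ hu0] at hp2
    have : (p * u : ℝ) ≤ 11 * m := hp2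
    rw [mul_comm u]
    exact_mod_cast this
  · have h0 : 0 < u + 1 - aE u := by omega
    have h0' : (0:ℝ) < (u + 1 - aE u : ℕ) := by exact_mod_cast h0
    have : (10 / ((u + 1 - aE u : ℕ) : ℝ)) * m < p := lt_of_le_of_lt (by gcongr; exact le_max_left _ _) hp1
    rw [div_mul_eq_mul_div, div_lt_iff₀ h0'] at this
    rw [mul_comm (u + 1 - aE u)]
    exact_mod_cast this
  · have h0 : 0 < u + aE u := by omega
    have h0' : (0:ℝ) < (u + aE u : ℕ) := by exact_mod_cast h0
    have : (12 / ((u + aE u : ℕ) : ℝ)) * m < p := lt_of_le_of_lt (by gcongr; exact le_max_right _ _) hp1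
    rw [div_mul_eq_mul_div, div_lt_iff₀ h0'] at this
    rw [mul_comm (u + aE u)]
    exact_mod_cast this

theorem aC_disj {m u v p : ℕ} (hu : u ∈ aU) (hv : v ∈ aU) (h1 : aC m u p) (h2 : aC m v p) :
    ¬ u < v := by
  intro huv
  obtain ⟨a1, a2, a3, a4, a5, a6, a7, a8⟩ := aU_e hu
  obtain ⟨b1, b2, b3⟩ := h1
  obtain ⟨c1, c2, c3⟩ := h2
  have h3 : (u + 1) * p ≤ 11 * m := le_trans (by gcongr; omega) c1
  have : aE u = 1 ∨ aE u = 2 := by omega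
  rcases this with h | h
  · rw [h] at b3
    omega
  · rw [h] at b2
    have := a8 h
    obtain ⟨w, rfl⟩ : ∃ w, u = w + 12 := ⟨u - 12, by omega⟩
    simp only [Nat.add_sub_cancel, show w + 12 + 1 - 2 = w + 11 by omega] at b2
    have : w ≤ 5 := by omega
    nlinarith

theorem aS_sum (m : ℕ) : ∑ u ∈ aU, (Chebyshev.theta (11 / (u:ℝ) * m) - Chebyshev.theta (aLo u * m))
    ≤ ∑ p ∈ aS m, Real.log p := by
  have h1 : ∀ u ∈ aU, (Chebyshev.theta (11 / (u:ℝ) * m) - Chebyshev.theta (aLo u * m)) =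
      ∑ p ∈ Finset.Ioc ⌊aLo u * m⌋₊ ⌊11 / (u:ℝ) * m⌋₊ with p.Prime, Real.log p := by
    intro u hu
    apply theta_sub
    have := aLo_le hu
    gcongr
  rw [Finset.sum_congr rfl h1, ← Finset.sum_biUnion]
  · apply Finset.sum_le_sum_of_subset_of_nonneg
    · intro p hp
      rw [Finset.mem_biUnion] at hp
      obtain ⟨u, hu, hp⟩ := hp
      have hc := mem_aC hu hp
      simp only [aS, Finset.mem_filter]
      refine ⟨?_, u, hu, hc⟩
      rw [Nat.mem_primesLE]
      refine ⟨?_, (Finset.mem_filter.1 hp).2⟩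
      have := hc.1
      have := (aU_e hu).1
      nlinarith
    · intro p _ _
      exact Real.log_natCast_nonneg p
  · intro u hu v hv huv
    rw [Function.onFun, Finset.disjoint_left]
    intro p hp hq
    have hc := mem_aC hu hp
    have hd := mem_aC hv hq
    have := aC_disj hu hv hc hd
    have := aC_disj hv hu hd hc
    omega

theorem lim_mul {f : ℝ → ℝ} (hf : Tendsto (fun x => f x / x) atTop (𝓝 1)) {c : ℝ} (hc : 0 < c) :
    Tendsto (fun m : ℕ => f (c * m) / m) atTop (𝓝 c) := by
  have h1 : Tendsto (fun m : ℕ => c * (m:ℝ)) atTop atTop :=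
    tendsto_natCast_atTop_atTop.const_mul_atTop hc
  have h2 := (hf.comp h1).const_mul c
  rw [mul_one] at h2
  refine h2.congr fun m => ?_
  simp only [Function.comp]
  by_cases hm : (m:ℝ) = 0
  · simp [hm]
  · field_simp

theorem aD_asymp : ∀ᶠ m : ℕ in atTop, (aD m : ℝ) ≤ Real.exp (9.363 * m) := by
  have h1 : Tendsto (fun m : ℕ => Chebyshev.psi (12 * m) / m - ∑ u ∈ aU,
      (Chebyshev.theta (11 / (u:ℝ) * m) / m - Chebyshev.theta (aLo u * m) / m)) atTop
      (𝓝 (12 - ∑ u ∈ aU, (11 / (u:ℝ) - aLo u))) := by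
    refine (lim_mul pnt_psi (by norm_num)).sub (tendsto_finsetSum _ fun u hu => ?_)
    obtain ⟨h1, h2, h3, h4, h5, h6, h7, -⟩ := aU_e hu
    have hu0 : (0:ℝ) < u := by exact_mod_cast h1
    refine (lim_mul pnt_theta (by positivity)).sub (lim_mul pnt_theta ?_)
    apply lt_max_of_lt_right
    positivity
  have h2 : 12 - ∑ u ∈ aU, (11 / (u:ℝ) - aLo u) < 9.363 := by
    simp only [aU, aLo, aE]
    norm_num [Finset.sum_insert]
  filter_upwards [h1.eventually_lt_const h2, eventually_gt_atTop 0] with m hm hm0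
  have hm0' : (0:ℝ) < m := by exact_mod_cast hm0
  have h3 := aD_log_le m
  have h4 := aS_sum m
  have h5 : (0:ℝ) < aD m := by exact_mod_cast aD_pos m
  rw [← Real.log_le_iff_le_exp h5]
  simp only [← sub_div, ← Finset.sum_div] at hm
  rw [div_lt_iff₀ hm0'] at hm
  linarith


noncomputable def om : ℝ := (1 + √21) / 2
noncomputable def ob : ℝ := (1 - √21) / 2

theorem s21 : √21 * √21 = (21:ℝ) := Real.mul_self_sqrt (by norm_num)
theorem om_sq : om * om = om + 5 := by have := s21; unfold om; nlinarith
theorem ob_sq : ob * ob = ob + 5 := by have := s21; unfold ob; nlinarith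
theorem ob_eq : ob = 1 - om := by unfold om ob; ring
theorem om_sub_ob : om - ob = √21 := by unfold om ob; ring
theorem om_gt : 2.7 < om := by
  have : (4.5:ℝ) < √21 := Real.lt_sqrt_of_sq_lt (by norm_num)
  unfold om; linarith
theorem om_lt : om < 2.8 := by
  have : √21 < (4.6:ℝ) := by rw [Real.sqrt_lt' (by norm_num)]; norm_num
  unfold om; linarith

theorem om_pow (a b : ℕ) : ∃ x y : ℤ, om ^ a * ob ^ b = x + y * om ∧ ob ^ a * om ^ b = x + y * ob := by
  induction a with
  | zero =>
    induction b with
    | zero => exact ⟨1, 0, by simp, by simp⟩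
    | succ b ih =>
      obtain ⟨x, y, h1, h2⟩ := ih
      refine ⟨x - 5 * y, -x, ?_, ?_⟩
      · rw [pow_succ, ← mul_assoc, h1, ob_eq]; push_cast
        linear_combination (-y : ℝ) * om_sq
      · have e : om = 1 - ob := by rw [ob_eq]; ring
        rw [pow_succ, ← mul_assoc, h2, e]; push_cast
        linear_combination (-y : ℝ) * ob_sq
  | succ a ih =>
    obtain ⟨x, y, h1, h2⟩ := ih
    refine ⟨5 * y, x + y, ?_, ?_⟩
    · rw [pow_succ, mul_right_comm, h1]; push_cast
      linear_combination (y : ℝ) * om_sq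
    · rw [pow_succ, mul_right_comm, h2]; push_cast
      linear_combination (y : ℝ) * ob_sq

theorem om_add (a b : ℕ) : ∃ z : ℤ, ob ^ a * om ^ b + om ^ a * ob ^ b = z := by
  obtain ⟨x, y, h1, h2⟩ := om_pow a b
  refine ⟨2 * x + y, ?_⟩
  rw [h1, h2, ob_eq]; push_cast; ring

theorem om_sub (a b : ℕ) : ∃ z : ℤ, ob ^ a * om ^ b - om ^ a * ob ^ b = √21 * z := by
  obtain ⟨x, y, h1, h2⟩ := om_pow a b
  refine ⟨-y, ?_⟩
  rw [h1, h2, ← om_sub_ob]; push_cast; ring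

noncomputable def FF (N M : ℕ) (t : ℝ) : ℝ :=
  ∫ x in (0:ℝ)..1, x ^ N * (1 - x) ^ N * (x - t) ^ (-(M + 1 : ℤ))

noncomputable def EE (M : ℕ) (t : ℝ) (k : ℕ) : ℝ :=
  if k = M then Real.log ((1 - t) / (-t)) else
    ((1 - t) ^ ((k:ℤ) - M) - (-t) ^ ((k:ℤ) - M)) / ((k:ℝ) - M)

theorem EE_int (M k : ℕ) (t : ℝ) (h0 : (0:ℝ) ∉ uIcc (0 - t) (1 - t)) :
    ∫ x in (0:ℝ)..1, (x - t) ^ ((k:ℤ) - M - 1) = EE M t k := by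
  rw [intervalIntegral.integral_comp_sub_right (fun x => x ^ ((k:ℤ) - M - 1)) t, EE]
  split_ifs with h
  · subst h
    simp only [sub_self, zero_sub, zpow_neg, zpow_one]
    rw [integral_inv (by simpa using h0)]
  · rw [integral_zpow (Or.inr ⟨by omega, h0⟩)]
    push_cast
    simp

theorem FF_eq (N M : ℕ) (t : ℝ) (h0 : (0:ℝ) ∉ uIcc (0 - t) (1 - t)) :
    FF N M t = ∑ p ∈ Finset.range (N + 1) ×ˢ Finset.range (N + 1),
      ((N.choose p.1 : ℝ) * N.choose p.2 * (-1) ^ p.2) * (t ^ (N - p.1) * (1 - t) ^ (N - p.2) *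
        EE M t (p.1 + p.2)) := by
  have hne : ∀ x ∈ uIcc (0:ℝ) 1, x - t ≠ 0 := by
    intro x hx h
    apply h0
    rw [← h]
    rw [uIcc_of_le (by norm_num)] at hx
    rw [uIcc_of_le (by linarith)]
    exact ⟨by linarith [hx.1], by linarith [hx.2]⟩
  have h1 : FF N M t = ∫ x in (0:ℝ)..1, ∑ p ∈ Finset.range (N + 1) ×ˢ Finset.range (N + 1),
      ((N.choose p.1 : ℝ) * N.choose p.2 * (-1) ^ p.2 * (t ^ (N - p.1) * (1 - t) ^ (N - p.2))) *
        (x - t) ^ (((p.1 + p.2 : ℕ):ℤ) - M - 1) := by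
    apply intervalIntegral.integral_congr
    intro x hx
    have hx := hne x hx
    simp only
    have e1 : x ^ N = ∑ i ∈ Finset.range (N + 1), (x - t) ^ i * t ^ (N - i) * N.choose i := by
      rw [← add_pow]; simp
    have e2 : (1 - x) ^ N = ∑ j ∈ Finset.range (N + 1),
        (-(x - t)) ^ j * (1 - t) ^ (N - j) * N.choose j := by
      rw [← add_pow]; congr 1; ring
    rw [e1, e2, Finset.sum_mul_sum, ← Finset.sum_product', Finset.sum_mul]
    apply Finset.sum_congr rfl
    intro p _
    have e3 : (x - t) ^ (((p.1 + p.2 : ℕ):ℤ) - M - 1) = (x - t) ^ p.1 * (x - t) ^ p.2 *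
        (x - t) ^ (-(M + 1 : ℤ)) := by
      rw [← zpow_natCast, ← zpow_natCast, ← zpow_add₀ hx, ← zpow_add₀ hx]
      congr 1; push_cast; ring
    rw [e3, neg_pow (x - t)]
    ring
  rw [h1, intervalIntegral.integral_finsetSum]
  · apply Finset.sum_congr rfl
    intro p _
    rw [intervalIntegral.integral_const_mul, EE_int _ _ _ h0]
    ring
  · intro p _
    apply ContinuousOn.intervalIntegrable
    apply ContinuousOn.mul continuousOn_const
    apply ContinuousOn.zpow₀ (by fun_prop)
    intro x hx
    exact Or.inl (hne x hx)

noncomputable def cA (N M : ℕ) : ℝ := ∑ p ∈ (Finset.range (N + 1) ×ˢ Finset.range (N + 1)).filter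
    (fun p => p.1 + p.2 = M), ((N.choose p.1 : ℝ) * N.choose p.2 * (-1) ^ p.2) *
      (ob ^ (N - p.1) * om ^ (N - p.2) + om ^ (N - p.1) * ob ^ (N - p.2))

theorem cA_int (N M : ℕ) : ∃ z : ℤ, cA N M = z := by
  choose f hf using om_add
  refine ⟨∑ p ∈ (Finset.range (N + 1) ×ˢ Finset.range (N + 1)).filter
    (fun p => p.1 + p.2 = M), ((N.choose p.1 : ℤ) * N.choose p.2 * (-1) ^ p.2) *
      f (N - p.1) (N - p.2), ?_⟩
  rw [cA]
  push_cast
  apply Finset.sum_congr rfl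
  intro p _
  rw [hf]

theorem TT (N M i j : ℕ) (hM : Even M) (hMN : M ≤ N) (hi : i ≤ N) (hj : j ≤ N) (t : ℝ) (ht : t ≠ 0)
    (ht1 : 1 - t ≠ 0) :
    t ^ (N - i) * (1 - t) ^ (N - j) * ((1 - t) ^ (((i+j:ℕ):ℤ) - M) - (-t) ^ (((i+j:ℕ):ℤ) - M)) =
    t ^ (N - i) * (1 - t) ^ (N - M + i) - (-1) ^ (i + j) * (t ^ (N - M + j) * (1 - t) ^ (N - j)) := by
  have e1 : (1 - t) ^ (N - j) * (1 - t) ^ (((i+j:ℕ):ℤ) - M) = (1 - t) ^ (N - M + i) := by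
    rw [← zpow_natCast, ← zpow_natCast, ← zpow_add₀ ht1]
    congr 1
    push_cast [Nat.cast_sub hj, Nat.cast_sub hMN]; ring
  have e2 : t ^ (N - i) * t ^ (((i+j:ℕ):ℤ) - M) = t ^ (N - M + j) := by
    rw [← zpow_natCast, ← zpow_natCast, ← zpow_add₀ ht]
    congr 1
    push_cast [Nat.cast_sub hi, Nat.cast_sub hMN]; ring
  have e3 : (-t) ^ (((i+j:ℕ):ℤ) - M) = (-1) ^ (i + j) * t ^ (((i+j:ℕ):ℤ) - M) := by
    rw [neg_eq_neg_one_mul t, mul_zpow]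
    congr 1
    rw [zpow_sub₀ (by norm_num), zpow_natCast, zpow_natCast, hM.neg_one_pow]
    simp
  rw [e3, ← e1, ← e2]
  ring

theorem ob_neg : ob < 0 := by have := om_gt; rw [ob_eq]; linarith

theorem form_id (m : ℕ) (hm : 31 ≤ m) : ∃ b : ℤ,
    (aD m : ℝ) * (FF (11 * m) (10 * m) ob - FF (11 * m) (10 * m) om) =
      aD m * cA (11 * m) (10 * m) * Real.log (om / (om - 1)) + √21 * b := by
  have hom := om_gt
  have hom2 := om_lt
  have hob := ob_eq
  have hobn := ob_neg
  rw [FF_eq _ _ ob, FF_eq _ _ om, ← Finset.sum_sub_distrib]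
  rotate_left
  · rw [uIcc_of_le (by linarith)]
    rintro ⟨h1, h2⟩
    linarith
  · rw [uIcc_of_le (by linarith)]
    rintro ⟨h1, h2⟩
    linarith
  rw [← Finset.sum_filter_add_sum_filter_not _ (fun p => p.1 + p.2 = 10 * m), mul_add]
  have hA : ∑ p ∈ (Finset.range (11 * m + 1) ×ˢ Finset.range (11 * m + 1)).filter
      (fun p => p.1 + p.2 = 10 * m),
      (((11 * m).choose p.1 : ℝ) * (11 * m).choose p.2 * (-1) ^ p.2 *
          (ob ^ (11 * m - p.1) * (1 - ob) ^ (11 * m - p.2) * EE (10 * m) ob (p.1 + p.2)) -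
        ((11 * m).choose p.1 : ℝ) * (11 * m).choose p.2 * (-1) ^ p.2 *
          (om ^ (11 * m - p.1) * (1 - om) ^ (11 * m - p.2) * EE (10 * m) om (p.1 + p.2))) =
      cA (11 * m) (10 * m) * Real.log (om / (om - 1)) := by
    rw [cA, Finset.sum_mul]
    apply Finset.sum_congr rfl
    intro p hp
    have hp := (Finset.mem_filter.1 hp).2
    rw [hp]
    have e1 : EE (10 * m) ob (10 * m) = Real.log (om / (om - 1)) := by
      rw [EE, if_pos rfl, hob]; congr 2 <;> ring
    have e2 : EE (10 * m) om (10 * m) = - Real.log (om / (om - 1)) := by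
      rw [EE, if_pos rfl, ← Real.log_inv]; congr 1
      rw [inv_div, ← neg_div_neg_eq]; congr 1 <;> ring
    have e3 : 1 - ob = om := by rw [hob]; ring
    have e4 : 1 - om = ob := hob.symm
    rw [e1, e2, e3, e4]
    ring
  rw [hA]
  choose f hf using om_sub
  have hB : ∀ p ∈ (Finset.range (11 * m + 1) ×ˢ Finset.range (11 * m + 1)).filter
      (fun p => ¬ p.1 + p.2 = 10 * m), ∃ z : ℤ, (aD m : ℝ) * 
      (((11 * m).choose p.1 : ℝ) * (11 * m).choose p.2 * (-1) ^ p.2 *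
          (ob ^ (11 * m - p.1) * (1 - ob) ^ (11 * m - p.2) * EE (10 * m) ob (p.1 + p.2)) -
        ((11 * m).choose p.1 : ℝ) * (11 * m).choose p.2 * (-1) ^ p.2 *
          (om ^ (11 * m - p.1) * (1 - om) ^ (11 * m - p.2) * EE (10 * m) om (p.1 + p.2))) = √21 * z := by
    rintro ⟨i, j⟩ hp
    simp only [Finset.mem_filter, Finset.mem_product, Finset.mem_range] at hp ⊢
    obtain ⟨⟨hi, hj⟩, hne⟩ := hp
    have hi : i ≤ 11 * m := by omega
    have hj : j ≤ 11 * m := by omega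
    have hdiv : (((i + j : ℕ) : ℤ) - (10 * m : ℕ)) ∣ ((aD m * ((11 * m).choose i * (11 * m).choose j) : ℕ) : ℤ) := by
      rw [← Int.natAbs_dvd_natAbs, Int.natAbs_natCast]
      apply aD_dvd hm <;> omega
    obtain ⟨c, hc⟩ := hdiv
    have hc' : (aD m : ℝ) * ((11 * m).choose i * (11 * m).choose j) =
        (((i + j : ℕ) : ℝ) - (10 * m : ℕ)) * c := by exact_mod_cast hc
    have hne' : ((i + j : ℕ) : ℝ) - (10 * m : ℕ) ≠ 0 := by
      rw [sub_ne_zero]; exact_mod_cast hne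
    have t1 := TT (11 * m) (10 * m) i j ⟨5 * m, by ring⟩ (by omega) hi hj ob hobn.ne (by linarith)
    have t2 := TT (11 * m) (10 * m) i j ⟨5 * m, by ring⟩ (by omega) hi hj om (by linarith) (by linarith)
    have e3 : 1 - ob = om := by rw [hob]; ring
    have e4 : 1 - om = ob := hob.symm
    rw [e3] at t1
    rw [e4] at t2
    rw [EE, EE, if_neg hne, if_neg hne, e3, e4]
    have h1 := hf (11 * m - i) (11 * m - 10 * m + i)
    have h2 := hf (11 * m - 10 * m + j) (11 * m - j)
    refine ⟨c * (-1) ^ j * (f (11 * m - i) (11 * m - 10 * m + i) - (-1) ^ (i + j) *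
      f (11 * m - 10 * m + j) (11 * m - j)), ?_⟩
    have e5 : (aD m : ℝ) * (((11 * m).choose i : ℝ) * (11 * m).choose j * (-1) ^ j *
          (ob ^ (11 * m - i) * om ^ (11 * m - j) * ((om ^ (((i + j : ℕ):ℤ) - (10 * m : ℕ)) -
            (-ob) ^ (((i + j : ℕ):ℤ) - (10 * m : ℕ))) / (((i + j : ℕ):ℝ) - (10 * m : ℕ)))) -
        ((11 * m).choose i : ℝ) * (11 * m).choose j * (-1) ^ j *
          (om ^ (11 * m - i) * ob ^ (11 * m - j) * ((ob ^ (((i + j : ℕ):ℤ) - (10 * m : ℕ)) -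
            (-om) ^ (((i + j : ℕ):ℤ) - (10 * m : ℕ))) / (((i + j : ℕ):ℝ) - (10 * m : ℕ))))) =
      (aD m : ℝ) * (((11 * m).choose i : ℝ) * (11 * m).choose j) / (((i + j : ℕ):ℝ) - (10 * m : ℕ)) *
        (-1) ^ j * ((ob ^ (11 * m - i) * om ^ (11 * m - j) * (om ^ (((i + j : ℕ):ℤ) - (10 * m : ℕ)) -
            (-ob) ^ (((i + j : ℕ):ℤ) - (10 * m : ℕ)))) - 
          (om ^ (11 * m - i) * ob ^ (11 * m - j) * (ob ^ (((i + j : ℕ):ℤ) - (10 * m : ℕ)) -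
            (-om) ^ (((i + j : ℕ):ℤ) - (10 * m : ℕ))))) := by
      ring
    rw [e5, t1, t2, hc', mul_div_cancel_left₀ _ hne']
    push_cast
    linear_combination (c * (-1) ^ j : ℝ) * h1 - (c * (-1) ^ j * (-1) ^ (i + j) : ℝ) * h2
  choose! g hg using hB
  refine ⟨∑ p ∈ (Finset.range (11 * m + 1) ×ˢ Finset.range (11 * m + 1)).filter
      (fun p => ¬ p.1 + p.2 = 10 * m), g p, ?_⟩
  rw [Finset.mul_sum, Finset.sum_congr rfl hg]
  push_cast
  rw [Finset.mul_sum]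
  ring

noncomputable def II (m : ℕ) : ℝ :=
  ∫ x in (0:ℝ)..1, (x ^ 11 * (1 - x) ^ 11 / (x + (om - 1)) ^ 10) ^ m * (x + (om - 1))⁻¹

theorem FF_ob (m : ℕ) : FF (11 * m) (10 * m) ob = II m := by
  unfold FF II
  congr 1
  ext x
  rw [show x - ob = x + (om - 1) by rw [ob_eq]; ring, zpow_neg,
    show ((10 * m : ℕ) + 1 : ℤ) = ((10 * m + 1 : ℕ) : ℤ) by push_cast; ring, zpow_natCast]
  rw [div_pow, mul_pow, ← pow_mul, ← pow_mul, ← pow_mul, pow_succ, mul_inv]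
  ring

theorem FF_om (m : ℕ) : FF (11 * m) (10 * m) om = - II m := by
  rw [← FF_ob, FF, FF]
  rw [← intervalIntegral.integral_neg]
  have := intervalIntegral.integral_comp_sub_left (fun x : ℝ => 
    -(x ^ (11 * m) * (1 - x) ^ (11 * m) * (x - ob) ^ (-((10 * m : ℕ) + 1 : ℤ)))) 1 (a := 0) (b := 1)
  simp only [sub_self, sub_zero] at this
  rw [← this]
  congr 1
  ext x
  rw [show 1 - x - ob = -(x - om) by rw [ob_eq]; ring, neg_eq_neg_one_mul (x - om), mul_zpow]
  have : (-1 : ℝ) ^ (-((10 * m : ℕ) + 1 : ℤ)) = -1 := by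
    apply Odd.neg_one_zpow
    refine ⟨-(5 * m) - 1, by push_cast; ring⟩
  rw [this]
  ring

theorem final_form (m : ℕ) (hm : 31 ≤ m) : ∃ a b : ℤ, (a : ℝ) = aD m * cA (11 * m) (10 * m) ∧
    a * (√21 * Real.log ((√21 - 1) / (√21 + 1))) - b = - (2 * √21 * aD m * II m) := by
  obtain ⟨b, hb⟩ := form_id m hm
  obtain ⟨z, hz⟩ := cA_int (11 * m) (10 * m)
  rw [FF_ob, FF_om] at hb
  refine ⟨aD m * z, 21 * b, by rw [hz]; push_cast; ring, ?_⟩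
  have h1 : Real.log ((√21 - 1) / (√21 + 1)) = - Real.log (om / (om - 1)) := by
    rw [← Real.log_inv, inv_div]
    congr 1
    have : 0 < om := by linarith [om_gt]
    unfold om at *
    field_simp
    ring
  rw [h1]
  push_cast
  have := s21
  rw [hz] at hb
  linear_combination √21 * hb + (b:ℝ) * this


theorem s21_lt : √21 < 4.582576 := by
  rw [Real.sqrt_lt' (by norm_num)]; norm_num
theorem s21_gt : 4.582575 < √21 := Real.lt_sqrt_of_sq_lt (by norm_num)

set_option exponentiation.threshold 2000 in
theorem f_upper_num : (0.11043:ℝ) ^ 11 * 2.2411 * Real.exp 0.01 ≤ Real.exp (-(281/12)) := by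
  have h1 : Real.exp 0.01 ≤ 100/99 := by
    have := Real.add_one_le_exp (-0.01:ℝ)
    rw [Real.exp_neg] at this
    have h2 := Real.exp_pos 0.01
    rw [le_inv_comm₀ (by norm_num) h2] at this
    refine this.trans ?_; norm_num
  have h2 : Real.exp (281/12) ^ 12 = Real.exp 1 ^ 281 := by
    rw [← Real.exp_nat_mul, ← Real.exp_nat_mul]; norm_num
  have h3 : Real.exp 1 < 2.7182818286 := Real.exp_one_lt_d9
  have h4 : Real.exp (281/12) ≤ 1 / ((0.11043:ℝ) ^ 11 * 2.2411 * (100/99)) := by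
    rw [← pow_le_pow_iff_left₀ (Real.exp_pos _).le (by positivity) (show (12:ℕ) ≠ 0 by norm_num), h2]
    refine (pow_le_pow_left₀ (Real.exp_pos _).le h3.le 281).trans ?_
    norm_num
  rw [Real.exp_neg, le_inv_comm₀ (by positivity) (by positivity)]
  refine h4.trans ?_
  rw [one_div]
  gcongr

theorem f_upper_aux (u h : ℝ) (hu : 0 < u) (hh : 0 ≤ h) (e : h * u = √21 * u - u * u - 5) :
    h ^ 11 * u ≤ Real.exp (-(281/12)) := by
  refine le_trans ?_ f_upper_num
  have h1 : h / 0.11043 ≤ Real.exp (h / 0.11043 - 1) := by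
    have := Real.add_one_le_exp (h / 0.11043 - 1); linarith
  have h2 : u / 2.2411 ≤ Real.exp (u / 2.2411 - 1) := by
    have := Real.add_one_le_exp (u / 2.2411 - 1); linarith
  have h3 : (h / 0.11043) ^ 11 * (u / 2.2411) ≤ Real.exp (h / 0.11043 - 1) ^ 11 * Real.exp (u / 2.2411 - 1) := by
    gcongr
  rw [← Real.exp_nat_mul, ← Real.exp_add] at h3
  have h4 : ((11:ℕ):ℝ) * (h / 0.11043 - 1) + (u / 2.2411 - 1) ≤ 0.01 := by
    have hs := s21_lt
    have : (((11:ℕ):ℝ) * (h / 0.11043 - 1) + (u / 2.2411 - 1) - 0.01) * u ≤ 0 := by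
      have e1 : (((11:ℕ):ℝ) * (h / 0.11043 - 1) + (u / 2.2411 - 1) - 0.01) * u =
        11 / 0.11043 * (h * u) + u * u / 2.2411 - 12.01 * u := by push_cast; ring
      rw [e1, e]
      have : √21 * u ≤ 4.582576 * u := by gcongr
      have h9 : 11 / 0.11043 * (4.582576 * u - u * u - 5) + u * u / 2.2411 - 12.01 * u ≤ 0 := by
        norm_num
        nlinarith [sq_nonneg (u - 2.2411)]
      refine le_trans ?_ h9
      gcongr
    by_contra hcon
    push Not at hcon
    have := mul_pos (sub_pos.2 hcon) hu
    linarith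
  have h5 := h3.trans (Real.exp_le_exp.2 h4)
  calc h ^ 11 * u = 0.11043 ^ 11 * 2.2411 * ((h / 0.11043) ^ 11 * (u / 2.2411)) := by ring
    _ ≤ _ := by gcongr

theorem f_upper (x : ℝ) (h0 : 0 ≤ x) (h1 : x ≤ 1) :
    x ^ 11 * (1 - x) ^ 11 / (x + (om - 1)) ^ 10 ≤ Real.exp (-(281/12)) := by
  have hom := om_gt
  have hu : 0 < x + (om - 1) := by linarith
  have := f_upper_aux (x + (om - 1)) (x * (1 - x) / (x + (om - 1))) hu
    (div_nonneg (mul_nonneg h0 (by linarith)) hu.le) (by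
      rw [div_mul_cancel₀ _ hu.ne']
      have e : √21 = 2 * om - 1 := by unfold om; ring
      rw [e]
      linear_combination -om_sq)
  refine le_trans (le_of_eq ?_) this
  rw [div_pow, mul_pow]
  field_simp

theorem f_lower (x : ℝ) (h0 : 0.445 ≤ x) (h1 : x ≤ 0.455) :
    Real.exp (-(47/2)) ≤ x ^ 11 * (1 - x) ^ 11 / (x + (om - 1)) ^ 10 := by
  have hom := om_gt
  have hs := s21_lt
  have hom2 : om ≤ 2.791288 := by unfold om; linarith
  have hu : 0 < x + (om - 1) := by linarith
  have h2 : (0.246975:ℝ) ^ 11 / 2.246288 ^ 10 ≤ x ^ 11 * (1 - x) ^ 11 / (x + (om - 1)) ^ 10 := by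
    rw [← mul_pow]
    have : (0.246975:ℝ) ≤ x * (1 - x) := by nlinarith
    have h3 : x + (om - 1) ≤ 2.246288 := by linarith
    gcongr
  refine le_trans ?_ h2
  have h3 : Real.exp (47/2) ^ 2 = Real.exp 1 ^ 47 := by
    rw [← Real.exp_nat_mul, ← Real.exp_nat_mul]; norm_num
  have h4 : 2.7182818283 < Real.exp 1 := Real.exp_one_gt_d9
  rw [Real.exp_neg, inv_le_comm₀ (by positivity) (by positivity)]
  rw [← pow_le_pow_iff_left₀ (by positivity) (by positivity) (show (2:ℕ) ≠ 0 by norm_num), h3]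
  refine le_trans ?_ (pow_le_pow_left₀ (by norm_num) h4.le 47)
  norm_num

theorem II_cont (m : ℕ) : ContinuousOn (fun x => (x ^ 11 * (1 - x) ^ 11 / (x + (om - 1)) ^ 10) ^ m *
    (x + (om - 1))⁻¹) (Icc 0 1) := by
  have hom := om_gt
  have h : ∀ x ∈ Icc (0:ℝ) 1, x + (om - 1) ≠ 0 := by
    intro x hx
    have := hx.1
    linarith
  apply ContinuousOn.mul
  · apply ContinuousOn.pow
    apply ContinuousOn.div (by fun_prop) (by fun_prop)
    intro x hx
    exact pow_ne_zero _ (h x hx)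
  · apply ContinuousOn.inv₀ (by fun_prop) h

theorem II_upper (m : ℕ) : II m ≤ Real.exp (-(281/12) * m) := by
  have hom := om_gt
  have : II m ≤ ∫ x in (0:ℝ)..1, Real.exp (-(281/12) * m) := by
    apply intervalIntegral.integral_mono_on (by norm_num)
    · apply ContinuousOn.intervalIntegrable
      rw [uIcc_of_le (by norm_num)]
      exact II_cont m
    · simp
    · intro x hx
      have hx0 := hx.1
      have hx1 : 0 ≤ 1 - x := by linarith [hx.2]
      have hu : 1 ≤ x + (om - 1) := by linarith
      have h1 : (x ^ 11 * (1 - x) ^ 11 / (x + (om - 1)) ^ 10) ^ m ≤ Real.exp (-(281/12) * m) := by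
        rw [mul_comm _ (m:ℝ), Real.exp_nat_mul]
        gcongr
        exact f_upper x hx.1 hx.2
      have h2 : (x + (om - 1))⁻¹ ≤ 1 := inv_le_one_of_one_le₀ hu
      calc _ ≤ Real.exp (-(281/12) * m) * 1 := by gcongr
        _ = _ := mul_one _
  simpa using this

theorem II_lower (m : ℕ) : Real.exp (-(47/2) * m) / 300 ≤ II m := by
  have hom := om_gt
  have hom2 := om_lt
  have h1 : ∫ x in (0.445:ℝ)..0.455, Real.exp (-(47/2) * m) * (1/3) ≤
    ∫ x in (0.445:ℝ)..0.455, (x ^ 11 * (1 - x) ^ 11 / (x + (om - 1)) ^ 10) ^ m * (x + (om - 1))⁻¹ := by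
    apply intervalIntegral.integral_mono_on (by norm_num)
    · simp
    · apply ContinuousOn.intervalIntegrable
      rw [uIcc_of_le (by norm_num)]
      exact (II_cont m).mono (Icc_subset_Icc (by norm_num) (by norm_num))
    · intro x hx
      have hx0 : 0 ≤ x := by linarith [hx.1]
      have hx1 : 0 ≤ 1 - x := by linarith [hx.2]
      have hu : 0 < x + (om - 1) := by linarith
      have hu3 : x + (om - 1) ≤ 3 := by linarith [hx.2]
      have h1 : Real.exp (-(47/2) * m) ≤ (x ^ 11 * (1 - x) ^ 11 / (x + (om - 1)) ^ 10) ^ m := by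
        rw [mul_comm _ (m:ℝ), Real.exp_nat_mul]
        gcongr
        exact f_lower x hx.1 hx.2
      have h2 : 1/3 ≤ (x + (om - 1))⁻¹ := by
        rw [one_div]; gcongr
      gcongr
  have h2 : ∫ x in (0.445:ℝ)..0.455, (x ^ 11 * (1 - x) ^ 11 / (x + (om - 1)) ^ 10) ^ m *
      (x + (om - 1))⁻¹ ≤ II m := by
    apply intervalIntegral.integral_mono_interval (by norm_num) (by norm_num) (by norm_num)
    · rw [EventuallyLE, ae_restrict_iff' measurableSet_Ioc]
      refine Eventually.of_forall fun x hx => ?_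
      have hx0 : 0 ≤ x := by linarith [hx.1]
      have hx1 : 0 ≤ 1 - x := by linarith [hx.2]
      have hu : 0 < x + (om - 1) := by linarith
      simp only [Pi.zero_apply]
      positivity
    · apply ContinuousOn.intervalIntegrable
      rw [uIcc_of_le (by norm_num)]
      exact II_cont m
  refine le_trans (le_of_eq ?_) (h1.trans h2)
  rw [intervalIntegral.integral_const]
  norm_num
  ring

set_option exponentiation.threshold 2000 in
theorem g_num : ((1.86 + (om - 1)) * (1.86 + om)) ^ 11 / 1.86 ^ 10 ≤ Real.exp 24.95 := by
  have hs := s21_lt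
  have hom := om_gt
  have e : (1.86 + (om - 1)) * (1.86 + om) = 1.86 ^ 2 + 1.86 * √21 + 5 := by
    have := s21
    unfold om
    nlinarith
  have e2 : (1.86 + (om - 1)) * (1.86 + om) ≤ 16.983192 := by rw [e]; linarith
  have e3 : ((1.86 + (om - 1)) * (1.86 + om)) ^ 11 / 1.86 ^ 10 ≤ 16.983192 ^ 11 / 1.86 ^ 10 := by
    have : 0 ≤ (1.86 + (om - 1)) * (1.86 + om) := mul_nonneg (by linarith) (by linarith)
    gcongr
  refine e3.trans ?_
  have h3 : Real.exp 24.95 ^ 20 = Real.exp 1 ^ 499 := by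
    rw [← Real.exp_nat_mul, ← Real.exp_nat_mul]; norm_num
  have h4 : 2.7182818283 < Real.exp 1 := Real.exp_one_gt_d9
  rw [← pow_le_pow_iff_left₀ (by positivity) (by positivity) (show (20:ℕ) ≠ 0 by norm_num), h3]
  refine le_trans ?_ (pow_le_pow_left₀ (by norm_num) h4.le 499)
  norm_num

theorem cA_aux (N M : ℕ) (a b r : ℝ) (ha : 0 ≤ a) (hb : 0 ≤ b) (hr : 0 < r) :
    ∑ p ∈ (Finset.range (N + 1) ×ˢ Finset.range (N + 1)).filter
    (fun p => p.1 + p.2 = M), ((N.choose p.1 : ℝ) * N.choose p.2) * (a ^ (N - p.1) * b ^ (N - p.2))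
    ≤ ((r + a) * (r + b)) ^ N / r ^ M := by
  rw [le_div_iff₀ (by positivity), Finset.sum_mul, mul_pow, add_pow, add_pow, Finset.sum_mul_sum,
    ← Finset.sum_product']
  calc _ = ∑ p ∈ (Finset.range (N + 1) ×ˢ Finset.range (N + 1)).filter (fun p => p.1 + p.2 = M),
          r ^ p.1 * a ^ (N - p.1) * ((N.choose p.1 : ℕ) : ℝ) *
        (r ^ p.2 * b ^ (N - p.2) * ((N.choose p.2 : ℕ) : ℝ)) := by
        apply Finset.sum_congr rfl
        intro p hp
        rw [← (Finset.mem_filter.1 hp).2, pow_add]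
        ring
    _ ≤ _ := by
        apply Finset.sum_le_sum_of_subset_of_nonneg (Finset.filter_subset _ _)
        intro p _ _
        positivity

theorem cA_upper (m : ℕ) : |cA (11 * m) (10 * m)| ≤ 2 * Real.exp (24.95 * m) := by
  have hom := om_gt
  have hab : |ob| = om - 1 := by rw [abs_of_neg ob_neg, ob_eq]; ring
  have hao : |om| = om := abs_of_pos (by linarith)
  have h1 := cA_aux (11 * m) (10 * m) (om - 1) om 1.86 (by linarith) (by linarith) (by norm_num)
  have h2 := cA_aux (11 * m) (10 * m) om (om - 1) 1.86 (by linarith) (by linarith) (by norm_num)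
  have h3 : ((1.86 + (om - 1)) * (1.86 + om)) ^ (11 * m) / 1.86 ^ (10 * m) ≤ Real.exp (24.95 * m) := by
    rw [pow_mul, pow_mul, ← div_pow, mul_comm (24.95:ℝ), Real.exp_nat_mul]
    have : 0 ≤ (1.86 + (om - 1)) * (1.86 + om) := mul_nonneg (by linarith) (by linarith)
    gcongr
    exact g_num
  rw [mul_comm (1.86 + om)] at h2
  refine le_trans ?_ (show _ ≤ 2 * Real.exp (24.95 * m) from
    (add_le_add (h1.trans h3) (h2.trans h3)).trans (le_of_eq (by ring)))
  rw [cA, ← Finset.sum_add_distrib]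
  refine (Finset.abs_sum_le_sum_abs _ _).trans (Finset.sum_le_sum fun p _ => ?_)
  rw [abs_mul, abs_mul, abs_mul, abs_pow, abs_neg, abs_one, one_pow, mul_one, Nat.abs_cast, Nat.abs_cast, ← mul_add]
  gcongr
  refine (abs_add_le _ _).trans (le_of_eq ?_)
  rw [abs_mul, abs_mul, abs_pow, abs_pow, abs_pow, abs_pow, hab, hao]


theorem ev_exp (C e : ℝ) (he : 0 < e) : ∀ᶠ m : ℕ in atTop, C ≤ Real.exp (e * m) := by
  have h1 : Tendsto (fun m : ℕ => e * (m:ℝ)) atTop atTop :=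
    tendsto_natCast_atTop_atTop.const_mul_atTop he
  exact (Real.tendsto_exp_atTop.comp h1).eventually_ge_atTop C

theorem approx : ∀ᶠ n : ℕ in atTop, ∃ a b : ℤ, |(a : ℝ)| ≤ Real.exp (34.32 * n) ∧
      Real.exp (-14.14 * n) ≤ |a * (√21 * Real.log ((√21 - 1) / (√21 + 1))) - b| ∧
      |a * (√21 * Real.log ((√21 - 1) / (√21 + 1))) - b| ≤ Real.exp (-14.05 * n) := by
  filter_upwards [aD_asymp, ev_exp 300 0.003 (by norm_num), eventually_ge_atTop 31] with m h1 h2 h3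
  obtain ⟨a, b, ha, hb⟩ := final_form m h3
  have hD1 : (1:ℝ) ≤ aD m := by exact_mod_cast aD_pos m
  have hD0 : (0:ℝ) < aD m := by linarith
  set X := Real.exp (9.363 * m) with hX
  set t := ⌊X / aD m⌋₊ with ht
  have ht1 : (t:ℝ) * aD m ≤ X := by
    rw [← le_div_iff₀ hD0]
    exact Nat.floor_le (by positivity)
  have ht2 : X ≤ 2 * (t * aD m) := by
    have e1 : 1 ≤ t := by
      rw [ht, Nat.le_floor_iff (by positivity), le_div_iff₀ hD0]
      simpa using h1
    have e2 := Nat.lt_floor_add_one (X / aD m)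
    rw [← ht, div_lt_iff₀ hD0] at e2
    have e3 : (1:ℝ) ≤ t := by exact_mod_cast e1
    nlinarith
  have hI1 := II_upper m
  have hI2 := II_lower m
  have hI0 : 0 < II m := lt_of_lt_of_le (by positivity) hI2
  have hs1 := s21_lt
  have hs2 := s21_gt
  have hc := cA_upper m
  refine ⟨t * a, t * b, ?_, ?_, ?_⟩
  · push_cast
    rw [ha, ← mul_assoc, abs_mul, abs_of_nonneg (by positivity)]
    calc _ ≤ X * (2 * Real.exp (24.95 * m)) := by gcongr
      _ ≤ X * (Real.exp (0.003 * m) * Real.exp (24.95 * m)) := by gcongr; linarith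
      _ = Real.exp (34.316 * m) := by
          rw [hX, ← Real.exp_add, ← Real.exp_add]; congr 1; ring
      _ ≤ _ := by gcongr; norm_num
  · have e : ((t * a : ℤ) : ℝ) * (√21 * Real.log ((√21 - 1) / (√21 + 1))) - (t * b : ℤ) =
        - (2 * √21 * (t * aD m) * II m) := by
      push_cast
      linear_combination (t:ℝ) * hb
    rw [e, abs_neg, abs_of_nonneg (by positivity)]
    have e2 : Real.exp (9.363 * m) * (Real.exp (-(47/2) * m) / 300) ≤ 2 * √21 * (t * aD m) * II m := by
      calc _ ≤ (2 * (t * aD m)) * II m := by gcongr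
        _ ≤ √21 * ((2 * (t * aD m)) * II m) := by
            apply le_mul_of_one_le_left (by positivity); linarith
        _ = _ := by ring
    refine le_trans ?_ e2
    have e3 : Real.exp (-14.14 * m) * Real.exp (0.003 * m) = Real.exp (9.363 * m) * Real.exp (-(47/2) * m) := by
      rw [← Real.exp_add, ← Real.exp_add]; congr 1; ring
    rw [← mul_div_assoc, ← e3, le_div_iff₀ (by norm_num)]
    gcongr
  · have e : ((t * a : ℤ) : ℝ) * (√21 * Real.log ((√21 - 1) / (√21 + 1))) - (t * b : ℤ) =
        - (2 * √21 * (t * aD m) * II m) := by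
      push_cast
      linear_combination (t:ℝ) * hb
    rw [e, abs_neg, abs_of_nonneg (by positivity)]
    calc _ ≤ Real.exp (0.003 * m) * X * Real.exp (-(281/12) * m) := by
          gcongr
          linarith
      _ = Real.exp ((9.366 - 281/12) * m) := by
          rw [hX, ← Real.exp_add, ← Real.exp_add]; congr 1; ring
      _ ≤ _ := by gcongr; norm_num


end Helpers

theorem irrationality_measure_alpha_6 :
    ∀ κ : ℝ, κ > 3.45357 →
      {pq : ℤ × ℕ+ |
        |Real.sqrt 21 * Real.log ((Real.sqrt 21 - 1) / (Real.sqrt 21 + 1)) -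
            (pq.1 : ℝ) / ((pq.2 : ℕ) : ℝ)| <
          ((pq.2 : ℕ) : ℝ) ^ (-κ)}.Finite := by
  intro κ hκ
  refine crit _ 34.32 14.05 14.14 κ (by norm_num) (by norm_num) (by norm_num) ?_ ?_ approx
  · refine lt_trans ?_ hκ
    norm_num
  · refine lt_trans ?_ hκ
    norm_num
end
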